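/- Every normal circulant scheme is sesquiseparable. -/

import Mathlib

open Set

universe u

/-- A coherent configuration on a finite set `Ω`: a partition `S` of `Ω × Ω`
satisfying (C1) the diagonal is a union of classes, (C2) closure under converse,
(C3) well-defined intersection numbers. -/
structure CohCfg (Ω : Type u) : Type u where
  S : Set (Set (Ω × Ω))
  finite : Finite Ω
  cover : ∀ p : Ω × Ω, ∃ s ∈ S, p ∈ s
  disj : ∀ s ∈ S, ∀ t ∈ S, s ≠ t → s ∩ t = ∅
  nonemp : ∀ s ∈ S, s.Nonempty
  diag : ∀ s ∈ S, (∃ p ∈ s, p.1 = p.2) → ∀ p ∈ s, p.1 = p.2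
  conv : ∀ s ∈ S, {p : Ω × Ω | (p.2, p.1) ∈ s} ∈ S
  inum : ∀ r ∈ S, ∀ s ∈ S, ∀ t ∈ S, ∀ p ∈ t, ∀ q ∈ t,
    {γ : Ω | (p.1, γ) ∈ r ∧ (γ, p.2) ∈ s}.ncard =
    {γ : Ω | (q.1, γ) ∈ r ∧ (γ, q.2) ∈ s}.ncard

namespace CohCfg

variable {Ω Ω' : Type u}

/-- The intersection number `c^t_{rs}` computed at the pair `p`. -/
noncomputable def cnum (r s : Set (Ω × Ω)) (p : Ω × Ω) : ℕ :=
  {γ : Ω | (p.1, γ) ∈ r ∧ (γ, p.2) ∈ s}.ncard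

/-- `X` is a scheme (homogeneous) if the full diagonal is a basis relation. -/
def IsScheme (X : CohCfg Ω) : Prop := {p : Ω × Ω | p.1 = p.2} ∈ X.S

/-- Commutativity: `c^t_{rs} = c^t_{sr}`. -/
def IsCommutative (X : CohCfg Ω) : Prop :=
  ∀ r ∈ X.S, ∀ s ∈ X.S, ∀ p : Ω × Ω, cnum r s p = cnum s r p

/-- `s` is a relation of `X`, i.e. a union of basis relations. -/
def IsRelationOf (X : CohCfg Ω) (s : Set (Ω × Ω)) : Prop :=
  ∀ t ∈ X.S, (t ∩ s).Nonempty → t ⊆ s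

/-- `X ≤ Y`: every (basis) relation of `X` is a relation of `Y`. -/
def le (X Y : CohCfg Ω) : Prop := ∀ s ∈ X.S, IsRelationOf Y s

/-- The diagonal relation `1_Δ` of a subset `Δ`. -/
def diagRel (Δ : Set Ω) : Set (Ω × Ω) := {p | p.1 = p.2 ∧ p.1 ∈ Δ}

/-- `Δ` is a fiber of `X`. -/
def IsFiber (X : CohCfg Ω) (Δ : Set Ω) : Prop := diagRel Δ ∈ X.S

/-- `αs = {β | (α,β) ∈ s}`. -/
def pointSet (s : Set (Ω × Ω)) (α : Ω) : Set Ω := {β | (α, β) ∈ s}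

/-- `X` is partly regular: some point `α` has `|αs| ≤ 1` for all basis relations. -/
def PartlyRegular (X : CohCfg Ω) : Prop :=
  ∃ α : Ω, ∀ s ∈ X.S, (pointSet s α).ncard ≤ 1

/-- The image `s^f` of a relation under a map of points. -/
def relImage (f : Ω → Ω') (s : Set (Ω × Ω)) : Set (Ω' × Ω') :=
  (fun p : Ω × Ω => (f p.1, f p.2)) '' s

/-- `φ` is an algebraic isomorphism from `X` to `X'`. -/
structure IsAlgIso (X : CohCfg Ω) (X' : CohCfg Ω')
    (φ : Set (Ω × Ω) → Set (Ω' × Ω')) : Prop where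
  bijOn : Set.BijOn φ X.S X'.S
  cnum_eq : ∀ r ∈ X.S, ∀ s ∈ X.S, ∀ t ∈ X.S, ∀ p ∈ t, ∀ q ∈ φ t,
    cnum r s p = cnum (φ r) (φ s) q

/-- The natural extension of an algebraic isomorphism to unions of basis relations. -/
def algImage (X : CohCfg Ω) (φ : Set (Ω × Ω) → Set (Ω' × Ω')) (s : Set (Ω × Ω)) :
    Set (Ω' × Ω') := ⋃₀ (φ '' {t | t ∈ X.S ∧ t ⊆ s})

/-- The image `Δ^φ` of a fiber under an algebraic isomorphism. -/
def fiberImage (X : CohCfg Ω) (φ : Set (Ω × Ω) → Set (Ω' × Ω')) (Δ : Set Ω) : Set Ω' :=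
  {α' | (α', α') ∈ φ (diagRel Δ)}

/-- `Y` is the point extension `X_α`: the smallest coherent configuration `≥ X`
having `1_α` as a basis relation. -/
def IsPointExt (X : CohCfg Ω) (α : Ω) (Y : CohCfg Ω) : Prop :=
  le X Y ∧ ({(α, α)} : Set (Ω × Ω)) ∈ Y.S ∧
    ∀ Z : CohCfg Ω, le X Z → ({(α, α)} : Set (Ω × Ω)) ∈ Z.S → le Y Z

/-- `φ` has an `(α,α')`-extension: an algebraic isomorphism `X_α → X'_{α'}`
extending `φ` and sending `1_α` to `1_{α'}`. -/
def HasExtension (X : CohCfg Ω) (X' : CohCfg Ω') (φ : Set (Ω × Ω) → Set (Ω' × Ω'))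
    (α : Ω) (α' : Ω') : Prop :=
  ∃ (Y : CohCfg Ω) (Y' : CohCfg Ω') (ψ : Set (Ω × Ω) → Set (Ω' × Ω')),
    IsPointExt X α Y ∧ IsPointExt X' α' Y' ∧ IsAlgIso Y Y' ψ ∧
    (∀ s ∈ X.S, algImage Y ψ s = φ s) ∧ ψ {(α, α)} = {(α', α')}

/-- A sesquiclosed algebraic isomorphism: has an `(α,α')`-extension for all
`α ∈ Δ ∈ F(X)` and `α' ∈ Δ^φ`. -/
def SesquiclosedIso (X : CohCfg Ω) (X' : CohCfg Ω')
    (φ : Set (Ω × Ω) → Set (Ω' × Ω')) : Prop :=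
  IsAlgIso X X' φ ∧
  ∀ Δ : Set Ω, IsFiber X Δ → ∀ α ∈ Δ, ∀ α' ∈ fiberImage X φ Δ, HasExtension X X' φ α α'

/-- `φ` is induced by the combinatorial isomorphism `f`. -/
def InducedBy (X : CohCfg Ω) (X' : CohCfg Ω') (φ : Set (Ω × Ω) → Set (Ω' × Ω'))
    (f : Ω → Ω') : Prop :=
  Function.Bijective f ∧ ∀ s ∈ X.S, φ s = relImage f s

/-- `X` is separable: every algebraic isomorphism from `X` is induced by an isomorphism. -/
def Separable (X : CohCfg Ω) : Prop :=
  ∀ (Ω'' : Type u) (X' : CohCfg Ω'') (φ : Set (Ω × Ω) → Set (Ω'' × Ω'')),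
    IsAlgIso X X' φ → ∃ f : Ω → Ω'', InducedBy X X' φ f

/-- `X` is sesquiseparable: every sesquiclosed algebraic isomorphism from `X`
is induced by an isomorphism. -/
def Sesquiseparable (X : CohCfg Ω) : Prop :=
  ∀ (Ω'' : Type u) (X' : CohCfg Ω'') (φ : Set (Ω × Ω) → Set (Ω'' × Ω'')),
    SesquiclosedIso X X' φ → ∃ f : Ω → Ω'', InducedBy X X' φ f

/-- A sesquiclosed coherent configuration: (S1) the fibers of every one-point
extension `X_α` are the nonempty sets `αs`, and (S2) the identity algebraic
automorphism is sesquiclosed. -/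
def SesquiclosedCfg (X : CohCfg Ω) : Prop :=
  (∀ α : Ω, ∀ Y : CohCfg Ω, IsPointExt X α Y →
     ∀ Δ : Set Ω, (IsFiber Y Δ ↔ ∃ s ∈ X.S, Δ = pointSet s α ∧ Δ.Nonempty)) ∧
  SesquiclosedIso X X id

/-- A parabolic of `X`: a relation that is an equivalence relation on `Ω`. -/
def IsParabolic (X : CohCfg Ω) (e : Set (Ω × Ω)) : Prop :=
  IsRelationOf X e ∧ (∀ a : Ω, (a, a) ∈ e) ∧ (∀ p ∈ e, (p.2, p.1) ∈ e) ∧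
    ∀ a b c : Ω, (a, b) ∈ e → (b, c) ∈ e → (a, c) ∈ e

/-- The class of `a` modulo the equivalence relation `e`. -/
def eClass (e : Set (Ω × Ω)) (a : Ω) : Set Ω := {b | (a, b) ∈ e}

/-- `Δ/e` is a section of `X`: `e` is a parabolic and `Δ` is a class of a
parabolic containing `e`. -/
def IsSection (X : CohCfg Ω) (Δ : Set Ω) (e : Set (Ω × Ω)) : Prop :=
  IsParabolic X e ∧ ∃ d : Set (Ω × Ω), IsParabolic X d ∧ e ⊆ d ∧ ∃ a : Ω, Δ = eClass d a

/-- The point set of the section `Δ/e`: the `e`-classes of points of `Δ`. -/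
abbrev Sec (Δ : Set Ω) (e : Set (Ω × Ω)) : Type u :=
  {Γ : Set Ω // ∃ a ∈ Δ, Γ = eClass e a}

/-- The relation `s_𝔖` on the section `𝔖 = Δ/e`. -/
def secRel (Δ : Set Ω) (e : Set (Ω × Ω)) (s : Set (Ω × Ω)) :
    Set (Sec Δ e × Sec Δ e) :=
  {p | ∃ a ∈ p.1.1, ∃ b ∈ p.2.1, (a, b) ∈ s}

/-- `Y` is the coherent configuration `X_𝔖` on the section `𝔖 = Δ/e`. -/
def IsSectionCfg (X : CohCfg Ω) (Δ : Set Ω) (e : Set (Ω × Ω))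
    (Y : CohCfg (Sec Δ e)) : Prop :=
  Y.S = {t | ∃ s ∈ X.S, t = secRel Δ e s ∧ t.Nonempty}

/-- The restriction `s_Δ` of a relation to a subset `Δ`. -/
def restRel (Δ : Set Ω) (s : Set (Ω × Ω)) : Set (↥Δ × ↥Δ) := {p | (p.1.1, p.2.1) ∈ s}

/-- `Y` is the restriction `X_Δ` of `X` to `Δ`. -/
def IsRestrictionCfg (X : CohCfg Ω) (Δ : Set Ω) (Y : CohCfg ↥Δ) : Prop :=
  Y.S = {t | ∃ s ∈ X.S, t = restRel Δ s ∧ t.Nonempty}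

/-- `Iso(X, X', φ)`: isomorphisms inducing the algebraic isomorphism `φ`. -/
def IsoSet (X : CohCfg Ω) (X' : CohCfg Ω') (φ : Set (Ω × Ω) → Set (Ω' × Ω')) :
    Set (Ω → Ω') :=
  {f | Function.Bijective f ∧ ∀ s ∈ X.S, relImage f s = φ s}

/-- `X` is schurian: its basis relations are the orbits of `Aut(X)` on `Ω × Ω`. -/
def Schurian (X : CohCfg Ω) : Prop :=
  ∀ s ∈ X.S, ∀ p ∈ s, ∀ q ∈ s, ∃ f : Ω → Ω,
    (Function.Bijective f ∧ ∀ t ∈ X.S, relImage f t = t) ∧ (f p.1, f p.2) = q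

/-- `e ⊆ rad(s)`: `s` is a union of products of pairs of `e`-classes it meets. -/
def RadGE (e s : Set (Ω × Ω)) : Prop :=
  ∀ p ∈ s, ∀ a b : Ω, (p.1, a) ∈ e → (p.2, b) ∈ e → (a, b) ∈ s

/-- The `e₁/e₀`-condition: every basis relation disjoint from `e₁` has `e₀` in
its radical. -/
def WedgeCond (X : CohCfg Ω) (e0 e1 : Set (Ω × Ω)) : Prop :=
  ∀ s ∈ X.S, s ∩ e1 = ∅ → RadGE e0 s

/-- A circulant coherent configuration on a group `G`: right translations are
automorphisms. -/
def IsCirculant {G : Type u} [Group G] (X : CohCfg G) : Prop :=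
  ∀ g : G, ∀ s ∈ X.S, relImage (fun x => x * g) s = s

/-- The equivalence relation `e(H)` whose classes are the cosets of `H`. -/
def eRelSet {G : Type u} [Group G] (H : Subgroup G) : Set (G × G) :=
  {p | p.1⁻¹ * p.2 ∈ H}

/-- `H` is an `X`-group. -/
def IsXGroup {G : Type u} [Group G] (X : CohCfg G) (H : Subgroup G) : Prop :=
  IsParabolic X (eRelSet H)

/-- A normal circulant scheme: every automorphism fixing the identity is a
group automorphism. -/
def IsNormalCirc {G : Type u} [Group G] (X : CohCfg G) : Prop :=
  ∀ f : G → G, Function.Bijective f → (∀ s ∈ X.S, relImage f s = s) → f 1 = 1 →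
    ∀ a b : G, f (a * b) = f a * f b

/-- Normality of a circulant scheme presented on a section `Δ/e` of a group `G`
(the points are cosets): every automorphism fixing the class of `1` respects the
coset multiplication. -/
def IsNormalSec {G : Type u} [Group G] (Δ : Set G) (e : Set (G × G))
    (Y : CohCfg (Sec Δ e)) : Prop :=
  ∀ F : Sec Δ e → Sec Δ e, Function.Bijective F → (∀ t ∈ Y.S, relImage F t = t) →
    (∀ Γ : Sec Δ e, (1 : G) ∈ Γ.1 → F Γ = Γ) →
    ∀ Γ Γ' Γ'' : Sec Δ e, Γ''.1 = Set.image2 (· * ·) Γ.1 Γ'.1 →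
      (F Γ'').1 = Set.image2 (· * ·) (F Γ).1 (F Γ').1

/-- Normality of a circulant scheme presented on (the subtype of) a subgroup `U ⊆ G`. -/
def IsNormalRest {G : Type u} [Group G] (U : Set G) (Y : CohCfg ↥U) : Prop :=
  ∀ F : ↥U → ↥U, Function.Bijective F → (∀ t ∈ Y.S, relImage F t = t) →
    (∀ x : ↥U, x.1 = 1 → F x = x) →
    ∀ x y z : ↥U, z.1 = x.1 * y.1 → (F z).1 = (F x).1 * (F y).1

/-- `N` is an `X_U`-group: `N ≤ U` and the restriction of `e(N)` to `U` is a
relation of the restriction `X_U`. -/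
def SubXGroup {G : Type u} [Group G] (X : CohCfg G) (U N : Subgroup G) : Prop :=
  N ≤ U ∧ ∀ s ∈ X.S, (∃ p ∈ s, p.1 ∈ U ∧ p.2 ∈ U ∧ p.1⁻¹ * p.2 ∈ N) →
    ∀ p ∈ s, p.1 ∈ U → p.2 ∈ U → p.1⁻¹ * p.2 ∈ N

end CohCfg


namespace NC

section toolkit
variable {q a : ℕ}

lemma zpow_eq_zero (q a : ℕ) : ((q : ZMod (q ^ a)) ^ a) = 0 := by
  have := ZMod.natCast_self (q ^ a)
  push_cast at this
  exact this

lemma zpow_eq_zero_of_le {b : ℕ} (h : a ≤ b) : ((q : ZMod (q ^ a)) ^ b) = 0 := by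
  obtain ⟨c, rfl⟩ := Nat.exists_eq_add_of_le h
  rw [pow_add, zpow_eq_zero, zero_mul]

lemma isUnit_one_add_q (ha : a ≠ 0) (x : ZMod (q ^ a)) : IsUnit (1 + (q : ZMod (q ^ a)) * x) := by
  apply IsNilpotent.isUnit_one_add
  refine ⟨a, ?_⟩
  rw [mul_pow, zpow_eq_zero, zero_mul]

lemma isUnit_add_of_dvd (hq : q.Prime) {u x : ZMod (q ^ a)} (hu : IsUnit u)
    (hx : (q : ZMod (q ^ a)) ∣ x) : IsUnit (u + x) := by
  obtain ⟨v, rfl⟩ := hu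
  obtain ⟨y, rfl⟩ := hx
  by_cases ha : a = 0
  · subst ha
    exact ⟨1, @Subsingleton.elim _ (by rw [pow_zero]; infer_instance) _ _⟩
  have : (v : ZMod (q ^ a)) + q * y = v * (1 + q * (↑v⁻¹ * y)) := by
    have := v.mul_inv
    linear_combination (-(q : ZMod (q ^ a)) * y) * this
  rw [this]
  exact v.isUnit.mul (isUnit_one_add_q ha _)

lemma decomp (hq : q.Prime) (t : ZMod (q ^ a)) (ht : t ≠ 0) :
    ∃ b < a, ∃ u : (ZMod (q ^ a))ˣ, t = (q : ZMod (q ^ a)) ^ b * u := by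
  haveI : NeZero (q ^ a) := ⟨pow_ne_zero _ hq.ne_zero⟩
  have hv : t.val ≠ 0 := by simpa [ZMod.val_eq_zero] using ht
  obtain ⟨b, m, hm, hbm⟩ := Nat.exists_eq_pow_mul_and_not_dvd hv q hq.ne_one
  have hcop : Nat.Coprime m (q ^ a) := by
    apply Nat.Coprime.pow_right
    exact ((Nat.Prime.coprime_iff_not_dvd hq).2 hm).symm
  refine ⟨b, ?_, ZMod.unitOfCoprime m hcop, ?_⟩
  · have h1 : t.val < q ^ a := ZMod.val_lt t
    have hm0 : 0 < m := Nat.pos_of_ne_zero (by rintro rfl; simp at hm)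
    have : q ^ b < q ^ a := lt_of_le_of_lt (by rw [hbm]; exact Nat.le_mul_of_pos_right _ hm0) h1
    exact (Nat.pow_lt_pow_iff_right hq.one_lt).1 this
  · rw [ZMod.coe_unitOfCoprime]
    have := ZMod.natCast_zmod_val t
    rw [← this, hbm]; push_cast; rfl

lemma qpow_ne_zero (hq : q.Prime) {b : ℕ} (hb : b < a) : ((q : ZMod (q ^ a)) ^ b) ≠ 0 := by
  intro h
  have : ((q ^ b : ℕ) : ZMod (q ^ a)) = 0 := by push_cast; exact h
  rw [ZMod.natCast_eq_zero_iff] at this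
  have := (Nat.pow_dvd_pow_iff_le_right hq.one_lt).1 this
  omega

lemma qpow_mul_unit_ne_zero (hq : q.Prime) {b : ℕ} (hb : b < a) (u : (ZMod (q ^ a))ˣ) :
    ((q : ZMod (q ^ a)) ^ b * u) ≠ 0 := by
  intro h
  exact qpow_ne_zero hq hb ((Units.mul_left_eq_zero u).1 h)

lemma isUnit_iff_not_dvd (hq : q.Prime) (ha : a ≠ 0) (t : ZMod (q ^ a)) :
    IsUnit t ↔ ¬ (q : ZMod (q ^ a)) ∣ t := by
  constructor
  · rintro ht ⟨y, rfl⟩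
    have h1 : IsUnit (q : ZMod (q ^ a)) := isUnit_of_mul_isUnit_left ht
    have h2 := (h1.pow a)
    rw [zpow_eq_zero] at h2
    haveI : Fact (1 < q ^ a) := ⟨Nat.one_lt_pow ha hq.one_lt⟩
    exact not_isUnit_zero h2
  · intro h
    have h0 : t ≠ 0 := by rintro rfl; exact h (dvd_zero _)
    obtain ⟨b, hb, u, rfl⟩ := decomp hq t h0
    rcases Nat.eq_zero_or_pos b with rfl | hb0
    · simp
    · exact absurd (Dvd.dvd.mul_right (dvd_pow_self _ hb0.ne') _) h

/-- elements killed by q -/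
lemma kill_q (hq : q.Prime) (ha : a ≠ 0) (t : ZMod (q ^ a)) (ht : (q : ZMod (q ^ a)) * t = 0) :
    ∃ j : ℕ, j < q ∧ t = (q : ZMod (q ^ a)) ^ (a - 1) * j := by
  haveI : NeZero (q ^ a) := ⟨pow_ne_zero _ hq.ne_zero⟩
  have h1 : ((q * t.val : ℕ) : ZMod (q ^ a)) = 0 := by
    push_cast; rw [ZMod.natCast_zmod_val]; exact ht
  rw [ZMod.natCast_eq_zero_iff] at h1
  obtain ⟨c, rfl⟩ := Nat.exists_eq_succ_of_ne_zero ha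
  have h1' : q * q ^ c ∣ q * t.val := by rw [← pow_succ']; exact h1
  have h2 := Nat.dvd_of_mul_dvd_mul_left hq.pos h1'
  obtain ⟨j, hj⟩ := h2
  refine ⟨j, ?_, ?_⟩
  · have : t.val < q ^ (c+1) := ZMod.val_lt t
    have h3 : q ^ c * j < q ^ c * q := by rw [← pow_succ, ← hj]; exact this
    exact Nat.lt_of_mul_lt_mul_left h3
  · have := ZMod.natCast_zmod_val t
    rw [← this, hj]; push_cast; simp

lemma eps_mul_eq (hq : q.Prime) (ha : a ≠ 0) {x y : ZMod (q ^ a)} (h : (q : ZMod (q ^ a)) ∣ x - y) :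
    (q : ZMod (q ^ a)) ^ (a - 1) * x = (q : ZMod (q ^ a)) ^ (a - 1) * y := by
  obtain ⟨t, ht⟩ := h
  have : (q : ZMod (q ^ a)) ^ (a - 1) * q = 0 := by
    rw [← pow_succ, Nat.sub_add_cancel (Nat.pos_of_ne_zero ha), zpow_eq_zero]
  linear_combination (q : ZMod (q ^ a)) ^ (a - 1) * ht + t * this

lemma pow_sub_one_dvd {R : Type*} [CommRing R] (k : R) (i : ℕ) :
    ∃ c, k ^ i = 1 + i * (k - 1) + (k - 1) ^ 2 * c := by
  induction i with
  | zero => exact ⟨0, by simp⟩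
  | succ i ih =>
    obtain ⟨c, hc⟩ := ih
    refine ⟨i + c * k, ?_⟩
    rw [pow_succ, hc]; push_cast; ring

lemma geom_q (hq : q.Prime) {k : ZMod (q ^ a)}
    (hk : (q ≠ 2 ∧ (q : ZMod (q ^ a)) ∣ k - 1) ∨ (q = 2 ∧ (4 : ZMod (q ^ a)) ∣ k - 1)) :
    ∃ t, k ^ q - 1 = (k - 1) * (q * (1 + q * t)) := by
  rcases hk with ⟨h2, hk⟩ | ⟨rfl, hk⟩
  · choose c hc using fun i => pow_sub_one_dvd k i
    obtain ⟨d, hd⟩ := hk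
    obtain ⟨e, he⟩ := hq.odd_of_ne_two h2
    have hs : ∑ i ∈ Finset.range q, k ^ i = q + (k - 1) * (∑ i ∈ Finset.range q, (i : ZMod (q ^ a))) +
        (k - 1) ^ 2 * ∑ i ∈ Finset.range q, c i := by
      rw [Finset.sum_congr rfl (fun i _ => hc i)]
      rw [Finset.sum_add_distrib, Finset.sum_add_distrib, Finset.mul_sum, Finset.mul_sum]
      simp only [Finset.sum_const, Finset.card_range, nsmul_eq_mul, mul_one]
      congr 2
      exact Finset.sum_congr rfl (fun i _ => mul_comm _ _)
    have hs2 : ∑ i ∈ Finset.range q, (i : ZMod (q ^ a)) = q * e := by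
      have h3 : ∑ i ∈ Finset.range q, i = q * e := by
        have := Finset.sum_range_id_mul_two q
        have h4 : q - 1 = 2 * e := by omega
        rw [h4] at this
        have h5 : (∑ i ∈ Finset.range q, i) * 2 = (q * e) * 2 := by rw [this]; ring
        omega
      rw [← Nat.cast_sum, h3]; push_cast; rfl
    refine ⟨d * e + d ^ 2 * ∑ i ∈ Finset.range q, c i, ?_⟩
    rw [← mul_geom_sum, hs, hs2, hd]
    ring
  · obtain ⟨d, hd⟩ := hk
    refine ⟨d, ?_⟩
    push_cast
    linear_combination (k - 1) * hd

/-- power lemma -/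
lemma power_lemma (hq : q.Prime) (ha : a ≠ 0) (y : ZMod (q ^ a)) : ∀ (l : ℕ) (k : ZMod (q ^ a)),
    ((q ≠ 2 ∧ (q : ZMod (q ^ a)) ∣ k - 1) ∨ (q = 2 ∧ (4 : ZMod (q ^ a)) ∣ k - 1)) →
    (∃ b < a, b + l = a ∧ ∃ u : (ZMod (q ^ a))ˣ, (k - 1) * y = (q : ZMod (q ^ a)) ^ b * u) →
    ∃ N : ℕ, (k ^ N - 1) * y = (q : ZMod (q ^ a)) ^ (a - 1) := by
  haveI : NeZero (q ^ a) := ⟨pow_ne_zero _ hq.ne_zero⟩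
  intro l
  induction l with
  | zero => rintro k - ⟨b, hb, h, -⟩; omega
  | succ l ih =>
    rintro k hk ⟨b, hb, hbl, u, hu⟩
    have hqk : (q : ZMod (q ^ a)) ∣ k - 1 := by
      rcases hk with h | ⟨h2, h⟩
      · exact h.2
      · refine dvd_trans ⟨2, ?_⟩ h
        subst h2; push_cast; norm_num
    by_cases hl : l = 0
    · have hb1 : b = a - 1 := by omega
      subst hb1
      refine ⟨(↑u⁻¹ : ZMod (q ^ a)).val, ?_⟩
      have key : ∀ i : ℕ, (k ^ i - 1) * y = (q : ZMod (q ^ a)) ^ (a - 1) * (u * i) := by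
        intro i
        induction i with
        | zero => simp
        | succ i ihi =>
          have h3 : (q : ZMod (q ^ a)) ^ (a - 1) * (k * (u * i)) =
              (q : ZMod (q ^ a)) ^ (a - 1) * (u * i) := by
            apply eps_mul_eq hq ha
            have : k * (u * i) - u * i = (k - 1) * (u * i) := by ring
            rw [this]; exact hqk.mul_right _
          rw [pow_succ]; push_cast
          linear_combination k * ihi + hu + h3
      rw [key, ZMod.natCast_zmod_val, Units.mul_inv, mul_one]
    · obtain ⟨t, ht⟩ := geom_q hq hk
      obtain ⟨u', hu'⟩ := isUnit_one_add_q ha t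
      have hk' : ((q ≠ 2 ∧ (q : ZMod (q ^ a)) ∣ k ^ q - 1) ∨ (q = 2 ∧ (4 : ZMod (q ^ a)) ∣ k ^ q - 1)) := by
        rw [ht]
        rcases hk with h | h
        · exact Or.inl ⟨h.1, h.2.mul_right _⟩
        · exact Or.inr ⟨h.1, h.2.mul_right _⟩
      obtain ⟨N, hN⟩ := ih (k ^ q) hk' ⟨b + 1, by omega, by omega, u * u', by
        rw [ht]; push_cast; rw [hu', pow_succ]
        linear_combination (q * (1 + q * t)) * hu⟩
      exact ⟨q * N, by rw [pow_mul]; exact hN⟩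

lemma power_lemma' (hq : q.Prime) (ha : a ≠ 0) (y : ZMod (q ^ a)) (k : ZMod (q ^ a))
    (hk : (q ≠ 2 ∧ (q : ZMod (q ^ a)) ∣ k - 1) ∨ (q = 2 ∧ (4 : ZMod (q ^ a)) ∣ k - 1))
    (hy : (k - 1) * y ≠ 0) : ∃ N : ℕ, (k ^ N - 1) * y = (q : ZMod (q ^ a)) ^ (a - 1) := by
  obtain ⟨b, hb, u, hu⟩ := decomp hq _ hy
  exact power_lemma hq ha y (a - b) k hk ⟨b, hb, by omega, u, hu⟩

end toolkit
end NC

namespace NC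

/-- Abstract data of a normal Schur ring over a cyclic ring. -/
structure SR (R : Type*) [CommRing R] where
  r : R → R → Prop
  eqv : Equivalence r
  zero : ∀ b, r 0 b → b = 0
  cnt : ∀ a b, r a b → ∃ σ : Equiv.Perm R, ∀ x, r x (σ x) ∧ r (a - x) (b - σ x)
  unit : ∀ u x y, IsUnit u → r x y → r (u * x) (u * y)
  frob : ∀ (q : ℕ), q.Prime → ∀ s a b, r a b →
    Nat.card {x : R // r s x ∧ (q : R) * x = a} ≡ Nat.card {x : R // r s x ∧ (q : R) * x = b} [MOD q]
  norm : ∀ f : R → R, Function.Bijective f → (∀ x y, r (y - x) (f y - f x)) → f 0 = 0 →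
    ∀ x y, f (x + y) = f x + f y
  gen : ∀ x : R, ∃ k : ℕ, (k : R) = x

/-- Abstract data of a point extension. -/
structure YC {R : Type*} [CommRing R] (X : SR R) where
  p : R → R → R → R → Prop
  refl : ∀ x z, p x z x z
  symm : ∀ {x z x1 z1}, p x z x1 z1 → p x1 z1 x z
  trans : ∀ {x z x1 z1 x2 z2}, p x z x1 z1 → p x1 z1 x2 z2 → p x z x2 z2
  diff : ∀ {x z x1 z1}, p x z x1 z1 → X.r (z - x) (z1 - x1)
  flip : ∀ {x z x1 z1}, p x z x1 z1 → p z x z1 x1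
  cnt : ∀ {x z x1 z1}, p x z x1 z1 → ∃ σ : Equiv.Perm R, ∀ y, p x y x1 (σ y) ∧ p y z (σ y) z1
  zero : ∀ {x y}, p 0 0 x y → x = 0 ∧ y = 0

namespace SR
variable {R : Type*} [CommRing R] (X : SR R)

lemma refl (x : R) : X.r x x := X.eqv.refl x
variable {X} in
lemma symm {x y : R} (h : X.r x y) : X.r y x := X.eqv.symm h
variable {X} in
lemma trans {x y z : R} (h : X.r x y) (h' : X.r y z) : X.r x z := X.eqv.trans h h'

variable {X} in
lemma neg {x y : R} (h : X.r x y) : X.r (-x) (-y) := by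
  have := X.unit (-1) x y (isUnit_one.neg) h
  simpa using this

lemma zero' {a : R} (h : X.r a 0) : a = 0 := X.zero a (symm h)

variable {X} in
lemma unit_iff {u x y : R} (hu : IsUnit u) : X.r (u * x) (u * y) ↔ X.r x y := by
  constructor
  · intro h
    obtain ⟨v, rfl⟩ := hu
    have := X.unit (↑v⁻¹) _ _ (Units.isUnit _) h
    simpa using this
  · exact X.unit u x y hu

lemma norm_id (f : R → R) (hf : Function.Bijective f) (h : ∀ x y, X.r (y - x) (f y - f x))
    (h0 : f 0 = 0) (h1 : f 1 = 1) (x : R) : f x = x := by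
  have hadd := X.norm f hf h h0
  obtain ⟨k, rfl⟩ := X.gen x
  induction k with
  | zero => simpa using h0
  | succ k ih => push_cast; rw [hadd, ih, h1]

lemma smul_eq (f : R → R) (h0 : f 0 = 0) (hadd : ∀ x y, f (x + y) = f x + f y) (k : ℕ) (x : R) :
    f (k * x) = k * f x := by
  induction k with
  | zero => simpa using h0
  | succ k ih => push_cast; rw [add_mul, hadd, ih, one_mul]; ring

/-- largest closed ideal inside I -/
def core (I : Ideal R) : Ideal R where
  carrier := {x | ∀ y, X.r x y → y ∈ I}
  zero_mem' := by
    intro y hy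
    rw [X.zero y hy]; exact I.zero_mem
  add_mem' := by
    intro x y hx hy z hz
    obtain ⟨σ, hσ⟩ := X.cnt _ _ hz
    obtain ⟨h1, h2⟩ := hσ x
    rw [add_sub_cancel_left] at h2
    have := I.add_mem (hx _ h1) (hy _ h2)
    simpa using this
  smul_mem' := by
    intro c x hx
    obtain ⟨k, rfl⟩ := X.gen c
    induction k with
    | zero =>
      intro y hy
      simp at hy
      rw [X.zero y hy]; exact I.zero_mem
    | succ k ih =>
      intro z hz
      have e : ((k + 1 : ℕ) : R) • x = (k : R) • x + x := by push_cast; simp [add_mul]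
      rw [e] at hz
      obtain ⟨σ, hσ⟩ := X.cnt _ _ hz
      obtain ⟨h1, h2⟩ := hσ ((k : R) • x)
      rw [add_sub_cancel_left] at h2
      have := I.add_mem (ih _ h1) (hx _ h2)
      simpa using this

lemma mem_core {I : Ideal R} {x : R} : x ∈ X.core I ↔ ∀ y, X.r x y → y ∈ I := Iff.rfl

def Closed (I : Ideal R) : Prop := ∀ x y, X.r x y → x ∈ I → y ∈ I

variable {X} in
lemma Closed.of_core {I : Ideal R} (h : I ≤ X.core I) : X.Closed I := fun _ _ hr hx => h hx _ hr

variable {X} in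
lemma Closed.iff {I : Ideal R} (h : X.Closed I) {x y : R} (hr : X.r x y) : x ∈ I ↔ y ∈ I :=
  ⟨h _ _ hr, h _ _ (symm hr)⟩

open Classical in
lemma NL_aux [Finite R] (I : Ideal R) (e : R) (he : e ∈ I) (h : ∀ x, x ∉ I → X.r x (x + e))
    (c : R) (hc : c ∉ I) (g : R → R) (hg : g = fun x => if x - c ∈ I then x + e else x) :
    Function.Bijective g ∧ (∀ x y, X.r (y - x) (g y - g x)) ∧ g 0 = 0 := by
  have hg1 : ∀ x, x - c ∈ I → g x = x + e := by intro x hx; simp [hg, hx]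
  have hg2 : ∀ x, x - c ∉ I → g x = x := by intro x hx; simp [hg, hx]
  refine ⟨Finite.injective_iff_bijective.1 ?_, ?_, ?_⟩
  · intro x y hxy
    by_cases hx : x - c ∈ I <;> by_cases hy : y - c ∈ I
    · rw [hg1 x hx, hg1 y hy] at hxy; exact add_right_cancel hxy
    · rw [hg1 x hx, hg2 y hy] at hxy
      exfalso; apply hy; rw [← hxy]
      have := I.add_mem hx he
      convert this using 1; ring
    · rw [hg2 x hx, hg1 y hy] at hxy
      exfalso; apply hx; rw [hxy]
      have := I.add_mem hy he
      convert this using 1; ring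
    · rw [hg2 x hx, hg2 y hy] at hxy; exact hxy
  · intro x y
    by_cases hx : x - c ∈ I <;> by_cases hy : y - c ∈ I
    · rw [hg1 x hx, hg1 y hy, add_sub_add_right_eq_sub]; exact X.refl _
    · rw [hg1 x hx, hg2 y hy]
      have : y - x - e ∉ I := by
        intro h'
        apply hy
        have := I.add_mem (I.add_mem h' he) hx
        convert this using 1; ring
      have := symm (h _ this)
      convert this using 1 <;> ring
    · rw [hg2 x hx, hg1 y hy]
      have : y - x ∉ I := by
        intro h'
        apply hx
        have := I.sub_mem hy h'
        convert this using 1; ring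
      have := (h _ this)
      convert this using 1; ring
    · rw [hg2 x hx, hg2 y hy]; exact X.refl _
  · apply hg2; simpa using hc

lemma NL [Finite R] (I : Ideal R) (e : R) (he : e ∈ I) (he0 : e ≠ 0)
    (h : ∀ x, x ∉ I → X.r x (x + e)) (c : R) (hc : c ∉ I) (hc1 : c - 1 ∉ I) : False := by
  classical
  obtain ⟨hb, ha, h0⟩ := X.NL_aux I e he h c hc _ rfl
  have := X.norm_id _ hb ha h0 (by
    rw [if_neg]
    intro h'
    apply hc1
    have := I.neg_mem h'
    simpa using this) c
  simp at this
  exact he0 this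

lemma NL2 [Finite R] (I : Ideal R) (e : R) (he : e ∈ I) (he0 : 2 * e ≠ 0)
    (h : ∀ x, x ∉ I → X.r x (x + e)) (h1 : (1 : R) ∉ I) (h2 : (2 : R) ∈ I) : False := by
  classical
  obtain ⟨hb, ha, h0⟩ := X.NL_aux I e he h 1 h1 _ rfl
  have := X.norm _ hb ha h0 1 1
  have h3 : (1 + 1 - 1 : R) ∉ I := by simpa using h1
  simp only [sub_self, Submodule.zero_mem, if_true] at this
  rw [if_neg h3] at this
  apply he0
  linear_combination -this

/-- combined version for an ideal of a maximal type -/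
lemma NL3 [Finite R] (I : Ideal R) (hI : (1 : R) ∉ I) (e : R) (he : e ∈ I) (he0 : e ≠ 0)
    (he2 : (2 : R) ∈ I → 2 * e ≠ 0) : ∃ x, x ∉ I ∧ ¬ X.r x (x + e) := by
  by_contra hcon
  push Not at hcon
  by_cases h2 : (2 : R) ∈ I
  · exact X.NL2 I e he (he2 h2) hcon hI h2
  · exact X.NL I e he he0 hcon 2 h2 (by
      have : (2 - 1 : R) = 1 := by norm_num
      rwa [this])

/-- number of q-th roots, nonvanishing transfer -/
noncomputable def cq (q : ℕ) (s z : R) : ℕ := Nat.card {x : R // X.r s x ∧ (q : R) * x = z}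

lemma cq_transfer {q : ℕ} (hq : q.Prime) {s a b : R} (h : X.r a b) (hd : ¬ q ∣ X.cq q s a) :
    ¬ q ∣ X.cq q s b := by
  intro h'
  exact hd (((X.frob q hq s a b h).dvd_iff (dvd_refl q)).2 h')

lemma cq_exists {q : ℕ} {s a : R} (hd : ¬ q ∣ X.cq q s a) : ∃ x, X.r s x ∧ (q : R) * x = a := by
  by_contra hcon
  push Not at hcon
  apply hd
  have : IsEmpty {x : R // X.r s x ∧ (q : R) * x = a} := ⟨fun x => hcon x.1 x.2.1 x.2.2⟩
  rw [cq, Nat.card_of_isEmpty]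
  exact dvd_zero _

lemma cq_dvd [Finite R] {q : ℕ} (hq : q.Prime) {s z e : R} (he : e ≠ 0) (hqe : (q : R) * e = 0)
    (h : ∀ x, X.r s x → (q : R) * x = z → X.r s (x + e)) : q ∣ X.cq q s z := by
  classical
  haveI := Fintype.ofFinite R
  haveI : Fact q.Prime := ⟨hq⟩
  set T := {x : R // X.r s x ∧ (q : R) * x = z}
  let f : T → T := fun x => ⟨x.1 + e, h _ x.2.1 x.2.2, by rw [mul_add, hqe, add_zero, x.2.2]⟩
  have hf : Function.Injective f := by
    intro x y hxy
    have := congrArg Subtype.val hxy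
    exact Subtype.ext (add_right_cancel this)
  let τ : Equiv.Perm T := Equiv.ofBijective f (Finite.injective_iff_bijective.1 hf)
  have hτ : ∀ k : ℕ, ∀ x : T, ((τ ^ k) x).1 = x.1 + k * e := by
    intro k x
    induction k with
    | zero => simp
    | succ k ih =>
      rw [pow_succ', Equiv.Perm.mul_apply]
      show ((τ ^ k) x).1 + e = _
      rw [ih]; push_cast; ring
  have h1 : τ ^ (q ^ 1) = 1 := by
    ext x
    rw [pow_one, hτ, hqe]; simp
  haveI : Fintype T := Fintype.ofFinite T
  have h2 := Equiv.Perm.card_fixedPoints_modEq (p := q) (n := 1) (f := (τ : T → T)) (by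
    show (τ : T → T)^[q ^ 1] = id
    rw [← Equiv.Perm.coe_pow, h1]; rfl)
  have h3 : IsEmpty (Function.fixedPoints (τ : T → T)) := by
    refine ⟨fun x => ?_⟩
    have := congrArg Subtype.val x.2
    have h4 : x.1.1 + e = x.1.1 := this
    exact he (by simpa using h4)
  have h5 : Fintype.card (Function.fixedPoints (τ : T → T)) = 0 := Fintype.card_eq_zero_iff.2 h3
  rw [h5] at h2
  rw [cq, Nat.card_eq_fintype_card]
  exact (Nat.modEq_zero_iff_dvd).1 h2

end SR
end NC

namespace NC
namespace SR

lemma card_conv {R : Type*} [CommRing R] (X : SR R) {z z' : R} (h : X.r z z') (s t : R) :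
    Nat.card {x : R // X.r s x ∧ X.r t (z - x)} = Nat.card {x : R // X.r s x ∧ X.r t (z' - x)} := by
  obtain ⟨σ, hσ⟩ := X.cnt _ _ h
  refine Nat.card_congr (σ.subtypeEquiv ?_)
  intro x
  obtain ⟨h1, h2⟩ := hσ x
  constructor
  · rintro ⟨h3, h4⟩; exact ⟨trans h3 h1, trans h4 h2⟩
  · rintro ⟨h3, h4⟩; exact ⟨trans h3 (symm h1), trans h4 (symm h2)⟩

section local_part
variable {q a : ℕ} {B : Type*} [CommRing B] (X : SR (ZMod (q ^ a) × B))

/-- the smallest translations -/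
def E (q a : ℕ) (B : Type*) [CommRing B] (t : ZMod (q ^ a)) : ZMod (q ^ a) × B :=
  ((q : ZMod (q ^ a)) ^ (a - 1) * t, 0)

def Partial (x : ZMod (q ^ a) × B) : Prop := ∃ t, ¬ X.r x (x + E q a B t)

/-- the ideal 0 × B -/
def K0 (q a : ℕ) (B : Type*) [CommRing B] : Ideal (ZMod (q ^ a) × B) :=
  RingHom.ker (RingHom.fst (ZMod (q ^ a)) B)

lemma mem_K0 {x : ZMod (q ^ a) × B} : x ∈ K0 q a B ↔ x.1 = 0 := by
  simp [K0, RingHom.mem_ker]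

lemma fin_prod (hq : q.Prime) [Finite B] : Finite (ZMod (q ^ a) × B) := by
  haveI : NeZero (q ^ a) := ⟨pow_ne_zero _ hq.ne_zero⟩
  infer_instance

lemma q_eps (ha : a ≠ 0) : (q : ZMod (q ^ a)) * (q : ZMod (q ^ a)) ^ (a - 1) = 0 := by
  rw [← pow_succ', Nat.sub_add_cancel (Nat.pos_of_ne_zero ha), zpow_eq_zero]

lemma qcoe_fst : ((q : ZMod (q ^ a) × B)).1 = (q : ZMod (q ^ a)) := by simp

/-- unit acting on the first coordinate -/
lemma unit1 {k : ZMod (q ^ a)} (hk : IsUnit k) {x y : ZMod (q ^ a) × B} (h : X.r x y) :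
    X.r (k * x.1, x.2) (k * y.1, y.2) := by
  have := X.unit (k, 1) x y (Prod.isUnit_iff.2 ⟨hk, isUnit_one⟩) h
  simpa [Prod.mul_def] using this

lemma unit2 {k : B} (hk : IsUnit k) {x y : ZMod (q ^ a) × B} (h : X.r x y) :
    X.r (x.1, k * x.2) (y.1, k * y.2) := by
  have := X.unit (1, k) x y (Prod.isUnit_iff.2 ⟨isUnit_one, hk⟩) h
  simpa [Prod.mul_def] using this

lemma pow_unit1 {k : ZMod (q ^ a)} (hk : IsUnit k) {y : ZMod (q ^ a)} {w : B}
    (h : X.r (y, w) (k * y, w)) (N : ℕ) : X.r (y, w) (k ^ N * y, w) := by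
  induction N with
  | zero => simpa using X.refl _
  | succ N ih =>
    have := X.unit1 hk ih
    simp only at this
    rw [pow_succ', mul_assoc]
    exact trans h this

/-- move by eps -/
lemma unitFor (hq : q.Prime) (ha : a ≠ 0) {y : ZMod (q ^ a)} (hy : (q : ZMod (q ^ a)) * y ≠ 0)
    (t : ZMod (q ^ a)) : ∃ v : ZMod (q ^ a), IsUnit v ∧ (q : ZMod (q ^ a)) ∣ v - 1 ∧
      v * y = y + (q : ZMod (q ^ a)) ^ (a - 1) * t := by
  have hy0 : y ≠ 0 := by rintro rfl; simp at hy
  obtain ⟨b, hb, u, rfl⟩ := decomp hq y hy0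
  have hb1 : b + 1 < a := by
    by_contra h
    apply hy
    rw [← mul_assoc, ← pow_succ', zpow_eq_zero_of_le (by omega), zero_mul]
  obtain ⟨c, hc⟩ : ∃ c, a - 1 - b = c + 1 := ⟨a - 1 - b - 1, by omega⟩
  have hd : (q : ZMod (q ^ a)) ∣ (1 + (q : ZMod (q ^ a)) ^ (a - 1 - b) * ((↑u⁻¹ : ZMod (q ^ a)) * t)) - 1 := by
    rw [add_sub_cancel_left, hc, pow_succ']
    exact (Dvd.intro _ rfl : _ ∣ _ * _).mul_right _
  refine ⟨1 + (q : ZMod (q ^ a)) ^ (a - 1 - b) * (↑u⁻¹ * t), ?_, hd, ?_⟩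
  · have := isUnit_add_of_dvd hq isUnit_one hd
    simpa using this
  · have h1 : (q : ZMod (q ^ a)) ^ (a - 1) = (q : ZMod (q ^ a)) ^ (a - 1 - b) * (q : ZMod (q ^ a)) ^ b := by
      rw [← pow_add]; congr 1; omega
    have h2 := u.inv_mul
    rw [h1]
    linear_combination ((q : ZMod (q ^ a)) ^ (a - 1 - b) * (q : ZMod (q ^ a)) ^ b * t) * h2

lemma fix_of_dvd {v y : ZMod (q ^ a)} (hv : (q : ZMod (q ^ a)) ∣ v - 1) (hy : (q : ZMod (q ^ a)) * y = 0) :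
    v * y = y := by
  obtain ⟨c, hc⟩ := hv
  linear_combination y * hc + c * hy

lemma snd_of_q (hB : IsUnit (q : B)) {x y : ZMod (q ^ a) × B}
    (h : (q : ZMod (q ^ a) × B) * x = (q : ZMod (q ^ a) × B) * y) : x.2 = y.2 := by
  have := congrArg Prod.snd h
  simp at this
  exact hB.mul_left_cancel this

lemma partial_ndvd (hq : q.Prime) (ha : a ≠ 0) (hB : IsUnit (q : B)) {x : ZMod (q ^ a) × B}
    (hx : X.Partial x) : ¬ q ∣ X.cq q x (q * x) := by
  classical
  haveI : NeZero (q ^ a) := ⟨pow_ne_zero _ hq.ne_zero⟩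
  obtain ⟨t, ht⟩ := hx
  -- reduce t to a natural number below q
  obtain ⟨j0, hj0, hj0'⟩ := kill_q hq ha ((q : ZMod (q ^ a)) ^ (a - 1) * t) (by
    rw [← mul_assoc, q_eps ha, zero_mul])
  let F : Set (ZMod (q ^ a) × B) := {y | X.r x y ∧ (q : ZMod (q ^ a) × B) * y = q * x}
  let T : Finset (ZMod (q ^ a) × B) := ((Finset.range q).erase j0).image (fun j : ℕ => x + E q a B j)
  have hsub : F ⊆ (T : Set _) := by
    rintro y ⟨hy1, hy2⟩
    have h1 : y.2 = x.2 := snd_of_q hB hy2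
    have h2 : (q : ZMod (q ^ a)) * (y.1 - x.1) = 0 := by
      have := congrArg Prod.fst hy2
      simp at this
      rw [mul_sub, this, sub_self]
    obtain ⟨j, hj, hj'⟩ := kill_q hq ha _ h2
    have hy : y = x + E q a B j := by
      ext
      · simp [E, ← hj']
      · simp [E, h1]
    simp only [T, Finset.coe_image, Set.mem_image, Finset.mem_coe, Finset.mem_erase, Finset.mem_range]
    refine ⟨j, ⟨?_, hj⟩, hy.symm⟩
    rintro rfl
    apply ht
    have : E q a B t = E q a B (j : ZMod (q ^ a)) := by simp [E, hj0']
    rw [this, ← hy]; exact hy1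
  have hcard : F.ncard < q := by
    calc F.ncard ≤ (T : Set (ZMod (q ^ a) × B)).ncard := Set.ncard_le_ncard hsub T.finite_toSet
      _ = T.card := Set.ncard_coe_finset T
      _ ≤ ((Finset.range q).erase j0).card := Finset.card_image_le
      _ < q := by
        rw [Finset.card_erase_of_mem (Finset.mem_range.2 hj0), Finset.card_range]
        have := hq.pos
        omega
  have hpos : 0 < F.ncard := by
    rw [Set.ncard_pos (T.finite_toSet.subset hsub)]
    exact ⟨x, X.refl x, rfl⟩
  have : X.cq q x (q * x) = F.ncard := rfl
  rw [this]
  intro h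
  exact absurd (Nat.le_of_dvd hpos h) (by omega)

lemma E1_ne (hq : q.Prime) (ha : a ≠ 0) : E q a B 1 ≠ 0 := by
  intro h
  have := congrArg Prod.fst h
  simp [E] at this
  exact qpow_ne_zero hq (by omega : a - 1 < a) this

lemma q_E (ha : a ≠ 0) (t : ZMod (q ^ a)) : (q : ZMod (q ^ a) × B) * E q a B t = 0 := by
  ext
  · simp [E, ← mul_assoc, q_eps ha]
  · simp [E]

/-- step 5a -/
lemma step5a (hq : q.Prime) (ha : a ≠ 0) (hB : IsUnit (q : B)) [Finite B] {x : ZMod (q ^ a) × B}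
    (hx0 : (q : ZMod (q ^ a)) * x.1 = 0) (hx : X.Partial x) :
    ((0, (q : B) * x.2) : ZMod (q ^ a) × B) ∈ X.core (K0 q a B) := by
  haveI := fin_prod (a := a) (B := B) hq
  intro z hz
  rw [mem_K0]
  have e : ((0, (q : B) * x.2) : ZMod (q ^ a) × B) = q * x := by
    ext <;> simp [hx0]
  rw [e] at hz
  have h1 := X.cq_transfer hq hz (X.partial_ndvd hq ha hB hx)
  by_contra hz1
  apply h1
  apply X.cq_dvd hq (E1_ne hq ha) (q_E ha 1)
  intro s hs hsz
  have hs1 : (q : ZMod (q ^ a)) * s.1 ≠ 0 := by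
    intro h
    apply hz1
    rw [← hsz]; simpa using h
  obtain ⟨v, hv, hvd, hvs⟩ := unitFor hq ha hs1 1
  have := X.unit1 hv hs
  rw [fix_of_dvd hvd hx0, hvs] at this
  convert this using 1
  ext <;> simp [E]

def Good (x : ZMod (q ^ a) × B) : Prop :=
  ((q : ZMod (q ^ a)) * x.1 = 0 ∧ X.Partial x) ∨ ((q : ZMod (q ^ a)) * x.1 ≠ 0 ∧ ¬ X.r x (x + E q a B 1))

lemma odd_step (hq : q.Prime) (ha : a ≠ 0) (hB : IsUnit (q : B)) (hq2 : q ≠ 2) {x : ZMod (q ^ a) × B}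
    (hy : (q : ZMod (q ^ a)) * x.1 ≠ 0) (hx : ¬ X.r x (x + E q a B 1)) : X.Good (q * x) := by
  have hnd := X.partial_ndvd hq ha hB ⟨1, hx⟩
  by_cases hqq : (q : ZMod (q ^ a)) * (q * x.1) = 0
  · left
    refine ⟨by simpa using hqq, ?_⟩
    obtain ⟨j, hj, hj'⟩ := kill_q hq ha _ hqq
    refine ⟨-j, fun hr => ?_⟩
    obtain ⟨s, hs, hsq⟩ := X.cq_exists (X.cq_transfer hq hr hnd)
    have hs2 : s.2 = x.2 := by
      have := congrArg Prod.snd hsq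
      simp [E] at this
      exact hB.mul_left_cancel this
    have hs1 : (q : ZMod (q ^ a)) * s.1 = 0 := by
      have := congrArg Prod.fst hsq
      simp [E] at this
      rw [this, hj']; ring
    obtain ⟨v, hv, hvd, hvs⟩ := unitFor hq ha hy 1
    have := X.unit1 hv hs
    rw [fix_of_dvd hvd hs1, hvs] at this
    apply hx
    refine trans hs (symm ?_)
    convert this using 1
    ext <;> simp [E]
  · right
    refine ⟨by simpa using hqq, fun hr => ?_⟩
    obtain ⟨s, hs, hsq⟩ := X.cq_exists (X.cq_transfer hq hr hnd)
    have hs2 : s.2 = x.2 := by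
      have := congrArg Prod.snd hsq
      simp [E] at this
      exact hB.mul_left_cancel this
    have hs1 : (q : ZMod (q ^ a)) * s.1 = q * x.1 + (q : ZMod (q ^ a)) ^ (a - 1) := by
      have := congrArg Prod.fst hsq
      simpa [E] using this
    have hx10 : x.1 ≠ 0 := by intro h; apply hy; rw [h, mul_zero]
    obtain ⟨b, hb, u, hu⟩ := decomp hq x.1 hx10
    have hb2 : b + 2 < a := by
      by_contra h
      apply hqq
      rw [hu, ← mul_assoc, ← mul_assoc, mul_assoc, mul_comm (q : ZMod (q ^ a)), mul_comm (q : ZMod (q ^ a)), ]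
      have : (q : ZMod (q ^ a)) ^ (b + 2) = 0 := zpow_eq_zero_of_le (by omega)
      linear_combination (u : ZMod (q ^ a)) * this
    have h3 : (q : ZMod (q ^ a)) * (s.1 - x.1 - (q : ZMod (q ^ a)) ^ (a - 2)) = 0 := by
      have : (q : ZMod (q ^ a)) ^ (a - 1) = q * (q : ZMod (q ^ a)) ^ (a - 2) := by
        rw [← pow_succ']; congr 1; omega
      linear_combination hs1 + this
    obtain ⟨j, hj, hj'⟩ := kill_q hq ha _ h3
    obtain ⟨c, hc⟩ : ∃ c, a = b + c + 3 := ⟨a - b - 3, by omega⟩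
    set Q := (q : ZMod (q ^ a)) with hQ
    have e1 : Q ^ (a - 1) = Q ^ b * Q ^ (c + 2) := by rw [← pow_add]; congr 1; omega
    have e2 : Q ^ (a - 2) = Q ^ b * Q ^ (c + 1) := by rw [← pow_add]; congr 1; omega
    let k : ZMod (q ^ a) := 1 + Q * (Q ^ c * (↑u⁻¹ * (1 + Q * j)))
    have hkd : Q ∣ k - 1 := by simp [k]
    have hky : s.1 = k * x.1 := by
      have h2 := u.inv_mul
      rw [e2, e1] at hj'
      simp only [k]
      rw [hu] at hj' ⊢
      linear_combination hj' - (Q ^ b * Q ^ (c + 1) * (1 + Q * j)) * h2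
    have hku : IsUnit k := isUnit_one_add_q ha _
    have hne : (k - 1) * x.1 ≠ 0 := by
      intro h
      have h4 : s.1 = x.1 := by rw [hky]; linear_combination h
      rw [h4] at hs1
      have : Q ^ (a - 1) = 0 := by linear_combination -hs1
      exact qpow_ne_zero hq (by omega : a - 1 < a) this
    obtain ⟨N, hN⟩ := power_lemma' hq ha x.1 k (Or.inl ⟨hq2, hkd⟩) hne
    have h5 : X.r (x.1, x.2) (k * x.1, x.2) := by
      rw [← hky, ← hs2]
      have : (x.1, s.2) = x := by rw [hs2]
      rw [this]; exact hs
    have h6 := X.pow_unit1 hku h5 N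
    apply hx
    convert h6 using 1
    ext
    · simp [E]; linear_combination -hN
    · simp [E]

lemma odd_iter (hq : q.Prime) (ha : a ≠ 0) (hB : IsUnit (q : B)) (hq2 : q ≠ 2) [Finite B] (l : ℕ) :
    ∀ x : ZMod (q ^ a) × B, (q : ZMod (q ^ a)) ^ l * x.1 = 0 → X.Good x →
      ∃ k : ℕ, ((0, (q : B) ^ k * x.2) : ZMod (q ^ a) × B) ∈ X.core (K0 q a B) := by
  induction l with
  | zero =>
    rintro x hx hg
    have hx' : x.1 = 0 := by simpa using hx
    rcases hg with ⟨h0, h⟩ | ⟨h0, h⟩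
    · exact ⟨1, by simpa using X.step5a hq ha hB h0 h⟩
    · rw [hx', mul_zero] at h0; exact absurd rfl h0
  | succ l ih =>
    intro x hx hg
    rcases hg with ⟨h0, h⟩ | ⟨h0, h⟩
    · exact ⟨1, by simpa using X.step5a hq ha hB h0 h⟩
    · obtain ⟨k, hk⟩ := ih (q * x) (by simp; rw [← mul_assoc, ← pow_succ]; exact hx)
        (X.odd_step hq ha hB hq2 h0 h)
      refine ⟨k + 1, ?_⟩
      rw [pow_succ, mul_assoc]
      simpa using hk

lemma assoc (hq : q.Prime) (ha : a ≠ 0) {x x' : ZMod (q ^ a) × B} (hxx : X.r x x')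
    (hy : (q : ZMod (q ^ a)) * x.1 ≠ 0) (hx : ¬ X.r x (x + E q a B 1)) (hx' : ¬ X.r x (x' + E q a B 1)) :
    ∃ k : ZMod (q ^ a), IsUnit k ∧ x'.1 = k * x.1 := by
  have hx10 : x.1 ≠ 0 := by intro h; apply hy; rw [h, mul_zero]
  obtain ⟨b, hb, u, hu⟩ := decomp hq x.1 hx10
  have hb1 : b + 1 < a := by
    by_contra h
    apply hy
    rw [hu, ← mul_assoc, ← pow_succ', zpow_eq_zero_of_le (by omega), zero_mul]
  set Q := (q : ZMod (q ^ a)) with hQ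
  -- moving x, fixing multiples of q^(b+1)
  have key : ∀ (c : ℕ) (z z' : ZMod (q ^ a) × B) (t : ZMod (q ^ a)) (u : (ZMod (q ^ a))ˣ), c + 1 < a → z.1 = Q ^ c * u →
      z'.1 = Q ^ (c + 1) * t → X.r z z' → X.r z' (z + E q a B 1) := by
    intro c z z' t u hc hz hz' hr
    obtain ⟨d, hd⟩ : ∃ d, a = c + d + 2 := ⟨a - c - 2, by omega⟩
    have e1 : Q ^ (a - 1) = Q ^ c * Q ^ (d + 1) := by rw [← pow_add]; congr 1; omega
    have e3 : Q * Q ^ (a - 1) = 0 := q_eps ha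
    have hku : IsUnit (1 + Q * (Q ^ d * (↑u⁻¹ : ZMod (q ^ a)))) := isUnit_one_add_q ha _
    have := X.unit1 hku hr
    have h1 : (1 + Q * (Q ^ d * (↑u⁻¹ : ZMod (q ^ a)))) * z'.1 = z'.1 := by
      rw [hz']
      rw [e1] at e3
      linear_combination (t * ↑u⁻¹) * e3
    have h2 : (1 + Q * (Q ^ d * (↑u⁻¹ : ZMod (q ^ a)))) * z.1 = z.1 + Q ^ (a - 1) := by
      have h2 := u.inv_mul
      rw [hz, e1]
      linear_combination (Q ^ c * Q ^ (d + 1)) * h2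
    rw [h1, h2] at this
    refine symm ?_
    convert this using 1
    ext <;> simp [E, hQ]
  by_cases h0 : x'.1 = 0
  · exact absurd (trans hxx (key b x x' 0 u hb1 hu (by rw [h0, mul_zero]) hxx)) hx
  obtain ⟨b', hb', u', hu'⟩ := decomp hq x'.1 h0
  rcases lt_trichotomy b b' with h | h | h
  · obtain ⟨c, rfl⟩ : ∃ c, b' = b + 1 + c := ⟨b' - b - 1, by omega⟩
    exact absurd (trans hxx (key b x x' (Q ^ c * u') u hb1 hu
      (by rw [hu', ← mul_assoc, ← pow_add]) hxx)) hx
  · subst h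
    refine ⟨u' * ↑u⁻¹, (u' * u⁻¹).isUnit, ?_⟩
    rw [hu', hu]
    have h2 := u.inv_mul
    linear_combination (-Q ^ b * u') * h2
  · obtain ⟨c, rfl⟩ : ∃ c, b = b' + 1 + c := ⟨b - b' - 1, by omega⟩
    exact absurd ((key b' x' x (Q ^ c * u) u' (by omega) hu'
      (by rw [hu, ← mul_assoc, ← pow_add]) (symm hxx))) hx'

end local_part
end SR
end NC

namespace NC
namespace SR

section local_part
variable {q a : ℕ} {B : Type*} [CommRing B] (X : SR (ZMod (q ^ a) × B))

lemma two_cases (hq2 : q = 2) (k : ZMod (q ^ a)) : (q : ZMod (q ^ a)) ∣ k ∨ (q : ZMod (q ^ a)) ∣ k - 1 := by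
  haveI : NeZero (q ^ a) := ⟨pow_ne_zero _ (by omega)⟩
  have h := ZMod.natCast_zmod_val k
  rcases Nat.even_or_odd' k.val with ⟨c, hc | hc⟩
  · left
    rw [← h, hc]; subst hq2; exact ⟨c, by push_cast; ring⟩
  · right
    rw [← h, hc]; subst hq2; exact ⟨c, by push_cast; ring⟩

lemma unit_two (hq2 : q = 2) (ha : a ≠ 0) {k : ZMod (q ^ a)} (hk : IsUnit k) : (q : ZMod (q ^ a)) ∣ k - 1 := by
  rcases two_cases hq2 k with h | h
  · exact absurd h ((isUnit_iff_not_dvd (by rw [hq2]; exact Nat.prime_two) ha k).1 hk)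
  · exact h

lemma eps_unit_two (hq2 : q = 2) (ha : a ≠ 0) {k : ZMod (q ^ a)} (hk : IsUnit k) :
    k * (q : ZMod (q ^ a)) ^ (a - 1) = (q : ZMod (q ^ a)) ^ (a - 1) := by
  exact fix_of_dvd (unit_two hq2 ha hk) (q_eps ha)

lemma E_add_E (hq2 : q = 2) (ha : a ≠ 0) : E q a B 1 + E q a B 1 = 0 := by
  have := q_eps (q := q) ha
  ext
  · simp only [E, Prod.fst_add, mul_one, Prod.fst_zero]
    rw [← this]; 
    have h2 : (q : ZMod (q ^ a)) = 2 := by rw [hq2]; norm_num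
    rw [h2]; ring
  · simp [E]

open Classical in
/-- generic counting -/
lemma count_orbit [Fintype (ZMod (q ^ a) × B)] (hq : q.Prime) (hq2 : q = 2) (ha : a ≠ 0)
    {x : ZMod (q ^ a) × B}
    (hy : (q : ZMod (q ^ a)) * x.1 ≠ 0) (hx : ¬ X.r x (x + E q a B 1))
    (P : ZMod (q ^ a) × B → Prop) (hP : ∀ s, P s ↔ X.r x s ∧ ¬ X.r x (s + E q a B 1))
    (Q : ZMod (q ^ a) × B → Prop)
    (hQ : ∀ k : ZMod (q ^ a), IsUnit k → (∀ s, P s ↔ P (k * s.1, s.2)) → ∀ s, Q s → Q (k * s.1, s.2)) :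
    (Finset.univ.filter (fun s => P s ∧ Q s)).card =
      ((Finset.univ.filter (fun s => P s ∧ Q s)).image Prod.snd).card *
        (Finset.univ.filter (fun s : ZMod (q ^ a) × B => P s ∧ s.2 = x.2)).card := by
  have hPx : P x := (hP x).2 ⟨X.refl x, hx⟩
  -- multipliers
  have mult : ∀ s s', P s → P s' → s.2 = s'.2 → ∃ k : ZMod (q ^ a), IsUnit k ∧ s'.1 = k * s.1 ∧
      ∀ t, P t ↔ P (k * t.1, t.2) := by
    intro s s' hs hs' h2
    obtain ⟨k1, hk1, e1⟩ := X.assoc hq ha ((hP s).1 hs).1 hy hx ((hP s).1 hs).2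
    obtain ⟨k2, hk2, e2⟩ := X.assoc hq ha ((hP s').1 hs').1 hy hx ((hP s').1 hs').2
    obtain ⟨v, rfl⟩ := hk1
    refine ⟨k2 * ↑v⁻¹, hk2.mul v⁻¹.isUnit, ?_, ?_⟩
    · rw [e2, e1]
      have := v.inv_mul
      linear_combination (-k2 * x.1) * this
    · set k := k2 * (↑v⁻¹ : ZMod (q ^ a)) with hk
      have hku : IsUnit k := hk2.mul v⁻¹.isUnit
      have es : s' = (k * s.1, s.2) := by
        ext
        · simp only [hk]; rw [e2, e1]
          have := v.inv_mul
          linear_combination (-k2 * x.1) * this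
        · simp [h2]
      have hss : X.r x (k * s.1, s.2) := es ▸ ((hP s').1 hs').1
      have hS : ∀ t : ZMod (q ^ a) × B, X.r x t ↔ X.r x (k * t.1, t.2) := by
        intro t
        have h3 : X.r s t ↔ X.r (k * s.1, s.2) (k * t.1, t.2) := by
          constructor
          · exact fun h => X.unit1 hku h
          · intro h
            have := X.unit_iff (u := ((k, 1) : ZMod (q ^ a) × B)) (Prod.isUnit_iff.2 ⟨hku, isUnit_one⟩)
              (x := s) (y := t)
            apply this.1
            simpa [Prod.mul_def] using h
        constructor
        · intro h
          exact trans hss (h3.1 (trans (symm ((hP s).1 hs).1) h))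
        · intro h
          exact trans ((hP s).1 hs).1 (h3.2 (trans (symm hss) h))
      intro t
      rw [hP, hP, ← hS]
      have : ((k * t.1, t.2) : ZMod (q ^ a) × B) + E q a B 1 = (k * (t + E q a B 1).1, (t + E q a B 1).2) := by
        ext
        · simp only [E, Prod.fst_add, mul_one]
          rw [mul_add, eps_unit_two hq2 ha hku]
        · simp [E]
      rw [this, ← hS]
  rw [Finset.card_eq_sum_card_fiberwise (f := Prod.snd)
    (t := (Finset.univ.filter (fun s => P s ∧ Q s)).image Prod.snd)
    (fun s hs => Finset.mem_coe.2 (Finset.mem_image_of_mem _ hs))]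
  apply Finset.sum_const_nat
  intro w1 hw1
  obtain ⟨s1, hs1, rfl⟩ := Finset.mem_image.1 hw1
  obtain ⟨-, hP1, hQ1⟩ := Finset.mem_filter.1 hs1
  obtain ⟨k0, hk0, e0⟩ := X.assoc hq ha ((hP s1).1 hP1).1 hy hx ((hP s1).1 hP1).2
  symm
  apply Finset.card_bij (fun s _ => ((k0 * s.1, s1.2) : ZMod (q ^ a) × B))
  · intro s hs
    obtain ⟨-, hs, hs2⟩ := Finset.mem_filter.1 hs
    obtain ⟨k, hk, e, hkP⟩ := mult x s hPx hs hs2.symm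
    have e2 : ((k0 * s.1, s1.2) : ZMod (q ^ a) × B) = (k * s1.1, s1.2) := by
      ext
      · simp only [e, e0]; ring
      · rfl
    rw [e2]
    simp only [Finset.mem_filter, Finset.mem_univ, true_and, and_true]
    exact ⟨(hkP s1).1 hP1, hQ k hk hkP s1 hQ1⟩
  · intro s hs s' hs' h
    obtain ⟨-, hs, hs2⟩ := Finset.mem_filter.1 hs
    obtain ⟨-, hs', hs2'⟩ := Finset.mem_filter.1 hs'
    have := congrArg Prod.fst h
    exact Prod.ext (hk0.mul_left_cancel this) (hs2.trans hs2'.symm)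
  · intro s hs
    simp only [Finset.mem_filter, Finset.mem_univ, true_and] at hs
    obtain ⟨⟨hs, hsQ⟩, hs2⟩ := hs
    obtain ⟨k, hk, e, hkP⟩ := mult s1 s hP1 hs hs2.symm
    refine ⟨(k * x.1, x.2), ?_, ?_⟩
    · simp only [Finset.mem_filter, Finset.mem_univ, true_and, and_true]
      exact (hkP x).1 hPx
    · ext
      · simp only [e, e0]; ring
      · exact hs2.symm

lemma even_of_invol {β : Type*} [DecidableEq β] (T : Finset β) (g : β → β) (h1 : ∀ b ∈ T, g b ∈ T)
    (h2 : ∀ b, g (g b) = b) (h3 : ∀ b ∈ T, g b ≠ b) : Even T.card := by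
  have := Finset.sum_involution (s := T) (f := fun _ => (1 : ZMod 2)) (fun b _ => g b)
    (by intros; decide) (fun b hb _ => h3 b hb) h1 (fun b _ => h2 b)
  simp at this
  exact (ZMod.natCast_eq_zero_iff_even).1 this

open Classical in
lemma two_step [Finite B] (hq : q.Prime) (hq2 : q = 2) (ha : a ≠ 0) (hB : IsUnit (q : B)) {x : ZMod (q ^ a) × B}
    (hy : (q : ZMod (q ^ a)) * x.1 ≠ 0) (hx : ¬ X.r x (x + E q a B 1)) :
    X.Partial (0, 2 * x.2) := by
  haveI := fin_prod (a := a) (B := B) hq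
  haveI := Fintype.ofFinite (ZMod (q ^ a) × B)
  refine ⟨1, fun hr => ?_⟩
  let τ : ZMod (q ^ a) × B → ZMod (q ^ a) × B := fun s => (s.1, 2 * x.2 - s.2)
  have hττ : ∀ s, τ (τ s) = s := by intro s; simp [τ]
  have hE := E_add_E (B := B) hq2 ha
  have hτE : ∀ s, τ (s + E q a B 1) = τ s + E q a B 1 := by intro s; ext <;> simp [τ, E]
  have hSEE : ∀ s, s + E q a B 1 + E q a B 1 = s := by intro s; rw [add_assoc, hE, add_zero]
  -- counts
  have hcc := X.card_conv hr x (-x.1, x.2)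
  have hneg : ∀ s t : ZMod (q ^ a) × B, X.r (-s.1, s.2) t ↔ X.r s (-t.1, t.2) := by
    intro s t
    constructor
    · intro h
      have := X.unit1 (isUnit_one.neg : IsUnit (-1 : ZMod (q ^ a))) h
      simpa using this
    · intro h
      have := X.unit1 (isUnit_one.neg : IsUnit (-1 : ZMod (q ^ a))) h
      simpa using this
  have e1 : ∀ s : ZMod (q ^ a) × B, X.r (-x.1, x.2) ((0, 2 * x.2) - s) ↔ X.r x (τ s) := by
    intro s; rw [hneg]; simp [τ]
  have hEneg : -((q : ZMod (q ^ a)) ^ (a - 1)) = (q : ZMod (q ^ a)) ^ (a - 1) := by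
    have := congrArg Prod.fst hE
    simp [E] at this
    linear_combination -this
  have e2 : ∀ s : ZMod (q ^ a) × B, X.r (-x.1, x.2) (((0, 2 * x.2) + E q a B 1) - s) ↔
      X.r x (τ s + E q a B 1) := by
    intro s; rw [hneg]
    have : ((-(((0, 2 * x.2) + E q a B 1 - s : ZMod (q ^ a) × B)).1,
      (((0, 2 * x.2) + E q a B 1 - s : ZMod (q ^ a) × B)).2) : ZMod (q ^ a) × B) = τ s + E q a B 1 := by
      ext
      · simp [τ, E]; linear_combination hEneg
      · simp [τ, E]
    rw [this]
  simp only [e1, e2] at hcc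
  obtain ⟨S, hS⟩ : ∃ S : ZMod (q ^ a) × B → Prop, ∀ s, S s ↔ X.r x s := ⟨_, fun _ => Iff.rfl⟩
  obtain ⟨P, hP⟩ : ∃ P : ZMod (q ^ a) × B → Prop, ∀ s, P s ↔ X.r x s ∧ ¬ X.r x (s + E q a B 1) := ⟨_, fun _ => Iff.rfl⟩
  obtain ⟨F, hF⟩ : ∃ F : ZMod (q ^ a) × B → Prop, ∀ s, F s ↔ X.r x s ∧ X.r x (s + E q a B 1) := ⟨_, fun _ => Iff.rfl⟩
  have c0 : Nat.card {s // X.r x s ∧ X.r x (τ s)} = (Finset.univ.filter (fun s => P s ∧ P (τ s))).card +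
      ((Finset.univ.filter (fun s => P s ∧ F (τ s))).card + (Finset.univ.filter (fun s => F s ∧ S (τ s))).card) := by
    rw [Nat.card_eq_fintype_card, Fintype.card_subtype]
    rw [← Finset.card_union_of_disjoint, ← Finset.card_union_of_disjoint]
    · congr 1; ext s; simp [hP, hF, hS, hSEE]; tauto
    · rw [Finset.disjoint_left]; intro s; simp [hP, hF, hS, hSEE]; tauto
    · rw [Finset.disjoint_left]; intro s; simp [hP, hF, hS, hSEE]; tauto
  have c1 : Nat.card {s // X.r x s ∧ X.r x (τ s + E q a B 1)} =
      (Finset.univ.filter (fun s => P s ∧ P (τ s + E q a B 1))).card +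
      ((Finset.univ.filter (fun s => P s ∧ F (τ s))).card +
        (Finset.univ.filter (fun s => F s ∧ S (τ s + E q a B 1))).card) := by
    rw [Nat.card_eq_fintype_card, Fintype.card_subtype]
    rw [← Finset.card_union_of_disjoint, ← Finset.card_union_of_disjoint]
    · congr 1; ext s; simp [hP, hF, hS, hSEE]; tauto
    · rw [Finset.disjoint_left]; intro s; simp [hP, hF, hS, hSEE]; tauto
    · rw [Finset.disjoint_left]; intro s; simp [hP, hF, hS, hSEE]; tauto
  have c2 : (Finset.univ.filter (fun s => F s ∧ S (τ s + E q a B 1))).card =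
      (Finset.univ.filter (fun s => F s ∧ S (τ s))).card := by
    apply Finset.card_bij (fun s _ => s + E q a B 1)
    · intro s hs
      simp [hF, hS, hSEE, hτE] at hs ⊢
      tauto
    · intro s _ s' _ h; exact add_right_cancel h
    · intro s hs
      simp [hF, hS] at hs
      refine ⟨s + E q a B 1, ?_, hSEE s⟩
      simp [hF, hS, hSEE, hτE]
      tauto
  rw [c0, c1, c2] at hcc
  have hcc' := Nat.add_right_cancel hcc
  have hPx : P x := (hP x).2 ⟨X.refl x, hx⟩
  rw [X.count_orbit hq hq2 ha hy hx P hP (fun s => P (τ s)) (fun k hk h s hs => (h (τ s)).1 hs),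
    X.count_orbit hq hq2 ha hy hx P hP (fun s => P (τ s + E q a B 1)) (fun k hk h s hs => by
      have := (h _).1 hs
      convert this using 1
      ext
      · simp only [τ, E, Prod.fst_add, mul_one]
        rw [mul_add, eps_unit_two hq2 ha hk]
      · simp [τ, E])] at hcc'
  have hpos : 0 < (Finset.univ.filter (fun s : ZMod (q ^ a) × B => P s ∧ s.2 = x.2)).card :=
    Finset.card_pos.2 ⟨x, by simp [hPx]⟩
  have hN := Nat.eq_of_mul_eq_mul_right hpos hcc'
  have h2B : IsUnit (2 : B) := by rw [hq2] at hB; exact_mod_cast hB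
  have hfix : ∀ w : B, 2 * x.2 - w = w → w = x.2 := by
    intro w hw
    apply h2B.mul_left_cancel
    linear_combination -hw
  have hxx : τ x = x := by ext <;> simp [τ]; ring
  set T0 := (Finset.univ.filter (fun s => P s ∧ P (τ s))).image Prod.snd with hT0
  set T1 := (Finset.univ.filter (fun s => P s ∧ P (τ s + E q a B 1))).image Prod.snd with hT1
  have ev1 : Even T1.card := by
    apply even_of_invol T1 (fun w => 2 * x.2 - w)
    · intro w hw
      obtain ⟨s, hs, rfl⟩ := Finset.mem_image.1 hw
      simp only [Finset.mem_filter, Finset.mem_univ, true_and] at hs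
      refine Finset.mem_image.2 ⟨τ s + E q a B 1, ?_, by simp [τ, E]⟩
      simp only [Finset.mem_filter, Finset.mem_univ, true_and]
      rw [hτE, hττ, hSEE]
      exact ⟨hs.2, hs.1⟩
    · intro w; simp
    · intro w hw hw2
      obtain ⟨s, hs, rfl⟩ := Finset.mem_image.1 hw
      simp only [Finset.mem_filter, Finset.mem_univ, true_and] at hs
      have : τ s = s := by ext; rfl; exact hw2
      rw [this] at hs
      rw [hP, hP] at hs
      exact hs.1.2 hs.2.1
  have ev0 : Even (T0.erase x.2).card := by
    apply even_of_invol _ (fun w => 2 * x.2 - w)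
    · intro w hw
      obtain ⟨hwx, hw⟩ := Finset.mem_erase.1 hw
      obtain ⟨s, hs, rfl⟩ := Finset.mem_image.1 hw
      simp only [Finset.mem_filter, Finset.mem_univ, true_and] at hs
      refine Finset.mem_erase.2 ⟨?_, Finset.mem_image.2 ⟨τ s, ?_, by simp [τ]⟩⟩
      · intro h; apply hwx; linear_combination -h
      · simp only [Finset.mem_filter, Finset.mem_univ, true_and]
        rw [hττ]
        exact ⟨hs.2, hs.1⟩
    · intro w; simp
    · intro w hw hw2
      exact (Finset.mem_erase.1 hw).1 (hfix w hw2)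
  have hmem : x.2 ∈ T0 := Finset.mem_image.2 ⟨x, by simp [hxx, hPx], rfl⟩
  rw [Finset.card_erase_of_mem hmem] at ev0
  have hp0 : 0 < T0.card := Finset.card_pos.2 ⟨_, hmem⟩
  rw [hN] at ev0 hp0
  rcases ev0 with ⟨c, hc⟩
  rcases ev1 with ⟨d, hd⟩
  omega

/-- the q-complement is closed -/
theorem K0_closed [Finite B] (hq : q.Prime) (ha : a ≠ 0) (hB : IsUnit (q : B)) : X.Closed (K0 q a B) := by
  haveI := fin_prod (a := a) (B := B) hq
  apply Closed.of_core
  by_contra hcon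
  -- the ideal J of B
  let J : Ideal B :=
    { carrier := {w | ((0, w) : ZMod (q ^ a) × B) ∈ X.core (K0 q a B)}
      zero_mem' := (X.core (K0 q a B)).zero_mem
      add_mem' := by
        intro u v hu hv
        have := (X.core (K0 q a B)).add_mem hu hv
        simpa using this
      smul_mem' := by
        intro c w hw
        have := (X.core (K0 q a B)).mul_mem_left (0, c) hw
        simpa using this }
  have hJ : J ≠ ⊤ := by
    intro h
    apply hcon
    intro x hx
    rw [mem_K0] at hx
    have : x.2 ∈ J := by rw [h]; trivial
    have h2 : ((0, x.2) : ZMod (q ^ a) × B) ∈ X.core (K0 q a B) := this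
    have e : x = (0, x.2) := by ext <;> simp [hx]
    rw [e]; exact h2
  obtain ⟨M, hM, hJM⟩ := Ideal.exists_le_maximal J hJ
  let I : Ideal (ZMod (q ^ a) × B) := M.comap (RingHom.snd _ _)
  have hmI : ∀ x, x ∈ I ↔ x.2 ∈ M := fun x => Iff.rfl
  obtain ⟨x, hxI, hx⟩ := X.NL3 I (by rw [hmI]; exact (Ideal.ne_top_iff_one M).1 hM.ne_top)
    (E q a B 1) (by rw [hmI]; simp [E]) (E1_ne hq ha) (by
      intro h2 h3
      rw [hmI] at h2
      have hq2 : q ≠ 2 := by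
        rintro rfl
        apply hM.ne_top
        exact Ideal.eq_top_of_isUnit_mem M h2 (by exact_mod_cast hB)
      have h4 := congrArg Prod.fst h3
      simp [E] at h4
      have h5 := q_eps (q := q) ha
      obtain ⟨c, hc⟩ := hq.odd_of_ne_two hq2
      have h6 : (q : ZMod (q ^ a)) = 2 * c + 1 := by rw [hc]; push_cast; ring
      have h7 : (q : ZMod (q ^ a)) ^ (a - 1) = 0 := by
        rw [h6] at h5 h4 ⊢
        linear_combination h5 - c * h4
      exact qpow_ne_zero hq (by omega : a - 1 < a) h7)
  have fin : ∃ k : ℕ, ((0, (q : B) ^ k * x.2) : ZMod (q ^ a) × B) ∈ X.core (K0 q a B) := by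
    by_cases h0 : (q : ZMod (q ^ a)) * x.1 = 0
    · exact ⟨1, by simpa using X.step5a hq ha hB h0 ⟨1, hx⟩⟩
    · by_cases hq2 : q = 2
      · have h1 := X.two_step hq hq2 ha hB h0 hx
        have h2 := X.step5a hq ha hB (by simp) h1
        refine ⟨2, ?_⟩
        have h3 : (q : B) = 2 := by rw [hq2]; norm_num
        convert h2 using 2
        simp only [h3]; ring
      · exact X.odd_iter hq ha hB hq2 a x (by rw [zpow_eq_zero, zero_mul]) (Or.inr ⟨h0, hx⟩)
  obtain ⟨k, hk⟩ := fin
  have hk' : (q : B) ^ k * x.2 ∈ M := hJM hk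
  apply hxI
  rw [hmI]
  obtain ⟨v, hv⟩ := hB.pow k
  rw [← hv] at hk'
  have := M.mul_mem_left (↑v⁻¹) hk'
  simpa using this

end local_part
end SR
end NC

namespace NC
namespace SR

section loc
variable {q a : ℕ} {B : Type*} [CommRing B] (X : SR (ZMod (q ^ a) × B))

/-- the ideal A × 0 -/
def L0 (q a : ℕ) (B : Type*) [CommRing B] : Ideal (ZMod (q ^ a) × B) :=
  RingHom.ker (RingHom.snd (ZMod (q ^ a)) B)

lemma mem_L0 {x : ZMod (q ^ a) × B} : x ∈ L0 q a B ↔ x.2 = 0 := by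
  simp [L0, RingHom.mem_ker]

/-- the ideal (d) × B -/
def D (q a : ℕ) (B : Type*) [CommRing B] (d : ZMod (q ^ a)) : Ideal (ZMod (q ^ a) × B) :=
  (Ideal.span {d}).comap (RingHom.fst (ZMod (q ^ a)) B)

lemma mem_D {d : ZMod (q ^ a)} {x : ZMod (q ^ a) × B} : x ∈ D q a B d ↔ d ∣ x.1 := by
  simp [D, Ideal.mem_span_singleton]

variable {X}

lemma cl1 (hK : X.Closed (K0 q a B)) {x y : ZMod (q ^ a) × B} (h : X.r x y) (hx : x.1 = 0) : y.1 = 0 :=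
  mem_K0.1 (hK _ _ h (mem_K0.2 hx))

lemma cl2 (hL : X.Closed (L0 q a B)) {x y : ZMod (q ^ a) × B} (h : X.r x y) (hx : x.2 = 0) : y.2 = 0 :=
  mem_L0.1 (hL _ _ h (mem_L0.2 hx))

lemma proj (hK : X.Closed (K0 q a B)) (hL : X.Closed (L0 q a B)) {x y : ZMod (q ^ a) × B} (h : X.r x y) :
    X.r (x.1, 0) (y.1, 0) ∧ X.r (0, x.2) (0, y.2) := by
  obtain ⟨σ, hσ⟩ := X.cnt _ _ h
  obtain ⟨h1, h2⟩ := hσ (x.1, 0)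
  have h3 := cl2 hL h1 rfl
  have h4 := cl1 hK h2 (by simp)
  have e : σ (x.1, 0) = (y.1, 0) := by
    ext
    · simp at h4; simpa using (sub_eq_zero.1 h4).symm
    · exact h3
  rw [e] at h1 h2
  refine ⟨h1, ?_⟩
  convert h2 using 1 <;> ext <;> simp

/-- roots -/
lemma partial_root (hq : q.Prime) (ha : a ≠ 0) (hB : IsUnit (q : B)) {x z : ZMod (q ^ a) × B}
    (hx : X.Partial x) (hr : X.r (q * x) z) : ∃ s, X.r x s ∧ q * s = z :=
  X.cq_exists (X.cq_transfer hq hr (X.partial_ndvd hq ha hB hx))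

/-- step 3, general form -/
lemma D_closed (hK : X.Closed (K0 q a B)) (hq : q.Prime) (ha : a ≠ 0) (hB : IsUnit (q : B))
    {d d' : ZMod (q ^ a)} {x : ZMod (q ^ a) × B} (hx : X.Partial x)
    (hd : X.Closed (D q a B d')) (hxd : d' ∣ x.1) (hdd : d = q * d') (hdx : x.1 ∣ d') :
    X.Closed (D q a B d) := by
  apply Closed.of_core
  have h1 : q * x ∈ X.core (D q a B d) := by
    intro z hz
    obtain ⟨s, hs, rfl⟩ := partial_root hq ha hB hx hz
    have := hd _ _ hs (mem_D.2 hxd)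
    rw [mem_D] at this ⊢
    rw [hdd]
    simpa using mul_dvd_mul_left (q : ZMod (q ^ a)) this
  have h2 : K0 q a B ≤ X.core (D q a B d) := by
    intro x hx y hy
    rw [mem_D, mem_K0.1 (hK _ _ hy hx)]
    exact dvd_zero _
  intro y hy
  rw [mem_D] at hy
  obtain ⟨c, hc⟩ := hy
  obtain ⟨c', hc'⟩ := hdx
  have h3 := (X.core (D q a B d)).mul_mem_left (c * c', 0) h1
  have h4 : ((0, y.2) : ZMod (q ^ a) × B) ∈ X.core (D q a B d) := h2 (mem_K0.2 rfl)
  have := add_mem h3 h4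
  convert this using 1
  ext
  · simp; rw [hc, hdd, hc']; ring
  · simp

lemma D1_closed : X.Closed (D q a B 1) := by
  intro x y _ _
  rw [mem_D]; exact one_dvd _

/-- parity closedness -/
lemma Dq_closed (hK : X.Closed (K0 q a B)) (hq : q.Prime) (ha : a ≠ 0) (hB : IsUnit (q : B))
    {x : ZMod (q ^ a) × B} (hu : IsUnit x.1) (hx : X.Partial x) : X.Closed (D q a B (q : ZMod (q ^ a))) :=
  D_closed hK hq ha hB hx D1_closed (one_dvd _) (by simp) hu.dvd

/-- multipliers on the A part -/
def Kst (X : SR (ZMod (q ^ a) × B)) (k : ZMod (q ^ a)) : Prop := IsUnit k ∧ ∀ w, X.r (1, w) (k, w)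

lemma Kst.apply {k : ZMod (q ^ a)} (hk : Kst X k) {y : ZMod (q ^ a)} (hy : IsUnit y) (w : B) :
    X.r (y, w) (k * y, w) := by
  have := X.unit1 hy (hk.2 w)
  simpa [mul_comm] using this

lemma Kst.mul {k k' : ZMod (q ^ a)} (hk : Kst X k) (hk' : Kst X k') : Kst X (k * k') :=
  ⟨hk.1.mul hk'.1, fun w => trans (hk'.2 w) (hk.apply hk'.1 w)⟩

lemma Kst.inv {k k' : ZMod (q ^ a)} (hk : Kst X k) (h : k' * k = 1) : Kst X k' := by
  have hu : IsUnit k' := IsUnit.of_mul_eq_one k h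
  refine ⟨hu, fun w => ?_⟩
  have := hk.apply hu w
  rw [mul_comm, h] at this
  exact symm this

lemma Kst.of {y y' : ZMod (q ^ a)} (hy : IsUnit y) (hy' : IsUnit y') (h : ∀ w, X.r (y, w) (y', w)) :
    ∃ k, Kst X k ∧ y' = k * y := by
  obtain ⟨v, rfl⟩ := hy
  refine ⟨y' * ↑v⁻¹, ⟨hy'.mul v⁻¹.isUnit, fun w => ?_⟩, by simp⟩
  have := X.unit1 v⁻¹.isUnit (h w)
  simpa [mul_comm] using this

end loc
end SR

namespace YC
open SR
variable {R : Type*} [CommRing R] {X : SR R} (Y : YC X)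
include Y

lemma zero_left {z x1 z1 : R} (h : Y.p 0 z x1 z1) : x1 = 0 := by
  obtain ⟨σ, hσ⟩ := Y.cnt h
  exact (Y.zero (hσ 0).1).1

lemma left0 {x z x1 z1 : R} (h : Y.p x z x1 z1) : Y.p x 0 x1 0 := by
  obtain ⟨σ, hσ⟩ := Y.cnt h
  obtain ⟨h1, h2⟩ := hσ 0
  have := Y.zero_left h2
  rwa [this] at h1

lemma left {x z x1 z1 : R} (h : Y.p x z x1 z1) : X.r x x1 := by
  have := SR.neg (Y.diff (Y.left0 h))
  simpa using this

lemma right {x z x1 z1 : R} (h : Y.p x z x1 z1) : X.r z z1 := Y.left (Y.flip h)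

end YC

section YL
open SR
variable {q a : ℕ} {B : Type*} [CommRing B] {X : SR (ZMod (q ^ a) × B)} (Y : YC X)

/-- the A-part -/
def YC.pq (x z x1 z1 : ZMod (q ^ a)) : Prop := Y.p (x, 0) (z, 0) (x1, 0) (z1, 0)

include Y

lemma comp1 (hK : X.Closed (K0 q a B)) (hL : X.Closed (L0 q a B)) {x z x1 z1 : ZMod (q ^ a) × B}
    (h : Y.p x z x1 z1) : Y.p (x.1, 0) z (x1.1, 0) z1 := by
  obtain ⟨σ, hσ⟩ := Y.cnt h
  obtain ⟨h1, h2⟩ := hσ (x.1, 0)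
  have h3 := cl2 hL (Y.right h1) rfl
  have h4 := cl1 hK (Y.diff h1) (by simp)
  have e : σ (x.1, 0) = (x1.1, 0) := by
    ext
    · simp at h4; simpa using (sub_eq_zero.1 h4)
    · exact h3
  rwa [e] at h2

lemma comp (hK : X.Closed (K0 q a B)) (hL : X.Closed (L0 q a B)) {x z x1 z1 : ZMod (q ^ a) × B}
    (h : Y.p x z x1 z1) : Y.pq x.1 z.1 x1.1 z1.1 :=
  Y.flip (comp1 Y hK hL (Y.flip (comp1 Y hK hL h)))

lemma pq_cnt (hL : X.Closed (L0 q a B)) {x z x1 z1 : ZMod (q ^ a)} (h : Y.pq x z x1 z1) :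
    ∃ σ : Equiv.Perm (ZMod (q ^ a) × B), ∀ y, (σ (y, 0)).2 = 0 ∧ Y.pq x y x1 (σ (y, 0)).1 ∧
      Y.pq y z (σ (y, 0)).1 z1 := by
  obtain ⟨σ, hσ⟩ := Y.cnt h
  refine ⟨σ, fun y => ?_⟩
  obtain ⟨h1, h2⟩ := hσ (y, 0)
  have h3 := cl2 hL (Y.right h1) rfl
  have e : σ (y, 0) = ((σ (y, 0)).1, 0) := by ext; rfl; exact h3
  refine ⟨h3, ?_, ?_⟩
  · unfold YC.pq; rw [← e]; exact h1
  · unfold YC.pq; rw [← e]; exact h2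

lemma B1 (hK : X.Closed (K0 q a B)) {x z x1 z1 : ZMod (q ^ a)} (h : Y.pq x z x1 z1) (w : B) :
    ∃ w1, X.r (x, w) (x1, w1) ∧ X.r (z, w) (z1, w1) := by
  obtain ⟨σ, hσ⟩ := Y.cnt h
  obtain ⟨h1, h2⟩ := hσ (0, -w)
  have h3 := cl1 hK (Y.right h1) rfl
  have e : σ (0, -w) = (0, -(-(σ (0, -w)).2)) := by ext; exact h3; simp
  refine ⟨-(σ (0, -w)).2, ?_, ?_⟩
  · have := SR.neg (Y.diff h1)
    rw [e] at this
    simpa using this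
  · have := (Y.diff h2)
    rw [e] at this
    simpa using this

lemma B2 (hK : X.Closed (K0 q a B)) {x z x1 z1 : ZMod (q ^ a)} (h : Y.pq x z x1 z1) (w : B) :
    ∃ w1, X.r (x, w) (x1, w1) ∧ X.r (z - x, w) (z1 - x1, w1) := by
  obtain ⟨σ, hσ⟩ := Y.cnt h
  obtain ⟨h1, h2⟩ := hσ (x, -w)
  have h3 := cl1 hK (Y.diff h1) (by simp)
  have e : σ (x, -w) = (x1, -(-(σ (x, -w)).2)) := by
    ext
    · simp at h3; exact sub_eq_zero.1 h3
    · simp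
  refine ⟨-(σ (x, -w)).2, ?_, ?_⟩
  · have := X.unit2 (isUnit_one.neg : IsUnit (-1 : B)) (Y.right h1)
    rw [e] at this
    simpa using this
  · have := (Y.diff h2)
    rw [e] at this
    simpa using this

lemma tie_aux {x z x1 z1 : ZMod (q ^ a)} (hx : IsUnit x) (hx1 : IsUnit x1) (hz : IsUnit z) (hz1 : IsUnit z1)
    (h : ∀ w1, ∃ w, X.r (x1, w1) (x, w) ∧ X.r (z1, w1) (z, w)) : ∃ k, Kst X k ∧ z1 * x = k * (z * x1) := by
  apply Kst.of (hz.mul hx1) (hz1.mul hx)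
  intro w1
  obtain ⟨w, h1, h2⟩ := h w1
  have h3 := X.unit1 hz h1
  have h4 := X.unit1 hx h2
  simp only at h3 h4
  rw [mul_comm x z1, mul_comm x z] at h4
  exact SR.trans h3 (SR.symm h4)

lemma tieB1 (hK : X.Closed (K0 q a B)) {x z x1 z1 : ZMod (q ^ a)} (h : Y.pq x z x1 z1)
    (hx : IsUnit x) (hx1 : IsUnit x1) (hz : IsUnit z) (hz1 : IsUnit z1) :
    ∃ k, Kst X k ∧ z1 * x = k * (z * x1) :=
  tie_aux Y hx hx1 hz hz1 (fun w1 => B1 Y hK (Y.symm h) w1)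

lemma tieB2 (hK : X.Closed (K0 q a B)) {x z x1 z1 : ZMod (q ^ a)} (h : Y.pq x z x1 z1)
    (hx : IsUnit x) (hx1 : IsUnit x1) (hz : IsUnit (z - x)) (hz1 : IsUnit (z1 - x1)) :
    ∃ k, Kst X k ∧ (z1 - x1) * x = k * ((z - x) * x1) :=
  tie_aux Y hx hx1 hz hz1 (fun w1 => B2 Y hK (Y.symm h) w1)

lemma Dclosed_unit (hq : q.Prime) (ha : a ≠ 0) (hD : X.Closed (D q a B (q : ZMod (q ^ a))))
    {x y : ZMod (q ^ a) × B} (h : X.r x y) (hx : IsUnit x.1) : IsUnit y.1 := by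
  rw [isUnit_iff_not_dvd hq ha] at hx ⊢
  intro h'
  exact hx (mem_D.1 (hD _ _ (SR.symm h) (mem_D.2 h')))

/-- odd prime, exponent at least two -/
theorem odd_big [Finite B] (hK : X.Closed (K0 q a B)) (hL : X.Closed (L0 q a B)) (hq : q.Prime) (hq2 : q ≠ 2)
    (ha : 2 ≤ a) (hB : IsUnit (q : B)) {z z1 : ZMod (q ^ a)} (h : Y.pq 1 z 1 z1) : z = z1 := by
  haveI := fin_prod (a := a) (B := B) hq
  have ha0 : a ≠ 0 := by omega
  set Q := (q : ZMod (q ^ a)) with hQ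
  have hnu : ¬ Q ∣ 1 := by
    intro h'
    exact (isUnit_iff_not_dvd hq ha0 (1 : ZMod (q ^ a))).1 isUnit_one h'
  obtain ⟨x0, hx0, hx⟩ := X.NL3 (D q a B Q) (by rw [mem_D]; exact hnu) (E q a B 1)
    (by rw [mem_D]; simp only [E]; rw [mul_one]; exact dvd_pow_self _ (by omega)) (E1_ne hq ha0) (by
      intro h2 h3
      rw [mem_D] at h2
      apply hnu
      obtain ⟨c, hc⟩ := hq.odd_of_ne_two hq2
      have h6 : Q = 2 * c + 1 := by rw [hQ, hc]; push_cast; ring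
      have h7 : Q ∣ 2 := by simpa using h2
      have h8 : (1 : ZMod (q ^ a)) = Q - 2 * c := by rw [h6]; ring
      rw [h8]
      exact dvd_sub (dvd_refl _) (h7.mul_right _))
  have hux0 : IsUnit x0.1 := (isUnit_iff_not_dvd hq ha0 _).2 (fun h' => hx0 (mem_D.2 h'))
  have hD : X.Closed (D q a B Q) := Dq_closed hK hq ha0 hB hux0 ⟨1, hx⟩
  -- multipliers congruent to one are trivial
  have k1 : ∀ k, Kst X k → Q ∣ k - 1 → k = 1 := by
    intro k hk hkd
    by_contra hne
    have hne' : (k - 1) * x0.1 ≠ 0 := by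
      intro h'
      rw [hux0.mul_left_eq_zero] at h'
      exact hne (by linear_combination h')
    obtain ⟨N, hN⟩ := power_lemma' hq ha0 x0.1 k (Or.inl ⟨hq2, hkd⟩) hne'
    have h6 := X.pow_unit1 hk.1 (hk.apply hux0 x0.2) N
    apply hx
    convert h6 using 1
    ext
    · simp [E]; linear_combination -hN
    · simp [E]
  have near : ∀ e t, Q ∣ e → Y.pq 1 (1 + e) 1 t → t = 1 + e := by
    intro e t he hp
    have hue : IsUnit (1 + e) := isUnit_add_of_dvd hq isUnit_one he
    have h1 := hD _ _ (Y.diff hp) (mem_D.2 (by simpa using he))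
    rw [mem_D] at h1
    have h1' : Q ∣ t - 1 := by simpa using h1
    have hut : IsUnit t := by
      have := isUnit_add_of_dvd hq isUnit_one h1'
      simpa using this
    obtain ⟨k, hk, hke⟩ := tieB1 Y hK hp isUnit_one isUnit_one hue hut
    have : k = 1 := by
      apply k1 k hk
      have h3 : Q ∣ (k - 1) * (1 + e) := by
        have : (k - 1) * (1 + e) = (t - 1) - e := by linear_combination -hke
        rw [this]; exact dvd_sub h1' he
      exact hue.dvd_mul_right.1 h3
    rw [this] at hke
    linear_combination hke
  by_cases hz : Q ∣ z - 1
  · have := near (z - 1) z1 hz (by simpa using h)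
    rw [this]; ring
  · have hzu : IsUnit (z - 1) := (isUnit_iff_not_dvd hq ha0 _).2 hz
    have hz1u : IsUnit (z1 - 1) := by
      have := Dclosed_unit Y hq ha0 hD (Y.diff h) (by simpa using hzu)
      simpa using this
    have hce : ∀ e, Q ∣ e → ∃ c, Kst X c ∧ z1 - 1 - e = c * (z - 1 - e) := by
      intro e he
      obtain ⟨σ, hσ⟩ := pq_cnt Y hL h
      obtain ⟨-, h1, h2⟩ := hσ (1 + e)
      have h3 := near e _ he h1
      rw [h3] at h2
      have hue : IsUnit (1 + e) := isUnit_add_of_dvd hq isUnit_one he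
      obtain ⟨k, hk, hke⟩ := tieB2 Y hK h2 hue hue
        (by have := isUnit_add_of_dvd hq hzu (he.neg_right)
            convert this using 1; ring)
        (by have := isUnit_add_of_dvd hq hz1u (he.neg_right)
            convert this using 1; ring)
      refine ⟨k, hk, ?_⟩
      apply hue.mul_right_cancel
      linear_combination hke
    obtain ⟨c, hc, hce0⟩ := hce 0 (dvd_zero _)
    obtain ⟨c', hc', hce1⟩ := hce Q (dvd_refl _)
    have hcc : c' = c := by
      obtain ⟨v, rfl⟩ := hc.1
      have hK2 := hc'.mul (hc.inv v.inv_mul)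
      have := k1 _ hK2 (by
        have h3 : Q ∣ (c' - v) * (z - 1) := by
          have : (c' - v) * (z - 1) = Q * (c' - 1) := by linear_combination hce0 - hce1
          rw [this]; exact dvd_mul_right _ _
        have h4 := (hzu.dvd_mul_right.1 h3).mul_right (↑v⁻¹ : ZMod (q ^ a))
        have h5 : (c' - v) * (↑v⁻¹ : ZMod (q ^ a)) = c' * ↑v⁻¹ - 1 := by
          rw [sub_mul, Units.mul_inv]
        rwa [h5] at h4)
      have h6 := v.inv_mul
      linear_combination (v : ZMod (q ^ a)) * this - c' * h6
    rw [hcc] at hce1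
    have h7 : Q * (c - 1) = 0 := by linear_combination hce1 - hce0
    obtain ⟨j, hj, hj'⟩ := kill_q hq ha0 _ h7
    have h8 := k1 c hc (by rw [hj']; exact (dvd_pow_self _ (by omega)).mul_right _)
    rw [h8] at hce0
    linear_combination -hce0

end YL
end NC

namespace NC
section two
open SR
variable {a : ℕ} {B : Type*} [CommRing B] {X : SR (ZMod (2 ^ a) × B)}

lemma u2 (ha : a ≠ 0) (t : ZMod (2 ^ a)) : IsUnit t ↔ ¬ (2 : ZMod (2 ^ a)) ∣ t := by
  have := isUnit_iff_not_dvd Nat.prime_two ha t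
  simpa using this

lemma c2 (t : ZMod (2 ^ a)) : (2 : ZMod (2 ^ a)) ∣ t ∨ (2 : ZMod (2 ^ a)) ∣ t - 1 := by
  have := SR.two_cases (q := 2) (a := a) rfl t
  simpa using this

lemma odd_of_unit (ha : a ≠ 0) {t : ZMod (2 ^ a)} (h : IsUnit t) : ∃ c, t = 1 + 2 * c := by
  rcases c2 t with h' | ⟨c, hc⟩
  · exact absurd h' ((u2 ha t).1 h)
  · exact ⟨c, by linear_combination hc⟩

lemma unit_of_odd (ha : a ≠ 0) (c : ZMod (2 ^ a)) : IsUnit (1 + 2 * c) := by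
  have := isUnit_one_add_q (q := 2) ha c
  simpa using this

lemma four_not_dvd_two (ha : 2 ≤ a) : ¬ (4 : ZMod (2 ^ a)) ∣ 2 := by
  rintro ⟨c, hc⟩
  have h1 := unit_of_odd (a := a) (by omega) (-c)
  have h2 : (1 + 2 * -c) * (2 : ZMod (2 ^ a)) = 0 := by linear_combination hc
  rw [h1.mul_right_eq_zero] at h2
  have := qpow_ne_zero (q := 2) (a := a) Nat.prime_two (b := 1) (by omega)
  simp at this
  exact this h2

lemma four_cases (ha : a ≠ 0) {k : ZMod (2 ^ a)} (h : IsUnit k) :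
    (4 : ZMod (2 ^ a)) ∣ k - 1 ∨ (4 : ZMod (2 ^ a)) ∣ k + 1 := by
  obtain ⟨c, rfl⟩ := odd_of_unit ha h
  rcases c2 c with ⟨d, hd⟩ | ⟨d, hd⟩
  · left; exact ⟨d, by linear_combination 2 * hd⟩
  · right; exact ⟨d + 1, by linear_combination 2 * hd⟩

lemma E2 : E 2 a B 1 = ((2 : ZMod (2 ^ a)) ^ (a - 1), 0) := by simp [E]

lemma eps2_ne (ha : a ≠ 0) : (2 : ZMod (2 ^ a)) ^ (a - 1) ≠ 0 := by
  have := qpow_ne_zero (q := 2) (a := a) Nat.prime_two (b := a - 1) (by omega)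
  simpa using this

lemma two_eps (ha : a ≠ 0) : (2 : ZMod (2 ^ a)) * (2 : ZMod (2 ^ a)) ^ (a - 1) = 0 := by
  have := q_eps (q := 2) ha
  simpa using this

lemma kill2 (ha : a ≠ 0) {t : ZMod (2 ^ a)} (h : 2 * t = 0) : t = 0 ∨ t = (2 : ZMod (2 ^ a)) ^ (a - 1) := by
  obtain ⟨j, hj, e⟩ := kill_q (q := 2) Nat.prime_two ha t (by simpa using h)
  interval_cases j
  · left; simpa using e
  · right; simpa using e

lemma power2 (ha : a ≠ 0) (y k : ZMod (2 ^ a)) (hk : (4 : ZMod (2 ^ a)) ∣ k - 1) (hy : (k - 1) * y ≠ 0) :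
    ∃ N : ℕ, (k ^ N - 1) * y = (2 : ZMod (2 ^ a)) ^ (a - 1) := by
  have := power_lemma' (q := 2) Nat.prime_two ha y k (Or.inr ⟨rfl, hk⟩) hy
  simpa using this

/-- exceptional: all odd classes are invariant -/
def Exc (X : SR (ZMod (2 ^ a) × B)) : Prop := ∀ x, IsUnit x.1 → X.r x (x + E 2 a B 1)

lemma exc_point [Finite B] (ha : 3 ≤ a) (hE : Exc X) :
    ∃ y w, IsUnit y ∧ ¬ X.r (2 * y, w) ((2 * y, w) + E 2 a B 1) := by
  haveI := fin_prod (q := 2) (a := a) (B := B) Nat.prime_two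
  have ha0 : a ≠ 0 := by omega
  by_contra hcon
  push Not at hcon
  apply X.NL (D 2 a B 4) (E 2 a B 1) _ (E1_ne Nat.prime_two ha0) _ 2
  · rw [mem_D]; simpa using four_not_dvd_two (by omega : 2 ≤ a)
  · rw [mem_D]
    have : ((2 : ZMod (2 ^ a) × B) - 1).1 = 1 := by simp; norm_num
    rw [this]
    intro h
    exact four_not_dvd_two (by omega : 2 ≤ a) (h.trans (one_dvd 2))
  · rw [mem_D, E2]
    obtain ⟨c, hc⟩ : ∃ c, a - 1 = 2 + c := ⟨a - 3, by omega⟩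
    simp only [hc, pow_add]
    exact ⟨2 ^ c, by ring⟩
  · intro x hx
    rw [mem_D] at hx
    rcases c2 x.1 with ⟨y, hy⟩ | ⟨y, hy⟩
    · have e : x = (2 * y, x.2) := by ext; exact hy; rfl
      rw [e]
      apply hcon
      rw [u2 ha0]
      rintro ⟨c, rfl⟩
      exact hx ⟨c, by rw [hy]; ring⟩
    · apply hE
      have : x.1 = 1 + 2 * y := by linear_combination hy
      rw [this]; exact unit_of_odd ha0 _

lemma exc_D4 [Finite B] (hK : X.Closed (K0 2 a B)) (ha : 3 ≤ a) (hB : IsUnit ((2 : ℕ) : B)) (hE : Exc X) :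
    X.Closed (D 2 a B 4) := by
  haveI := fin_prod (q := 2) (a := a) (B := B) Nat.prime_two
  have ha0 : a ≠ 0 := by omega
  obtain ⟨y, w, hy, hx⟩ := exc_point ha hE
  set x : ZMod (2 ^ a) × B := (2 * y, w) with hxdef
  have hnd := X.partial_ndvd Nat.prime_two ha0 hB ⟨1, hx⟩
  apply Closed.of_core
  have h1 : ((2 : ℕ) : ZMod (2 ^ a) × B) * x ∈ X.core (D 2 a B 4) := by
    intro z hz
    have h2 := X.cq_transfer Nat.prime_two hz hnd
    by_contra hz4
    apply h2
    apply X.cq_dvd Nat.prime_two (E1_ne Nat.prime_two ha0) (q_E ha0 1)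
    intro s hs hsz
    refine trans hs (hE s ?_)
    rw [u2 ha0]
    rintro ⟨c, hc⟩
    apply hz4
    rw [mem_D, ← hsz]
    refine ⟨c, ?_⟩
    simp [hc]; ring
  have h2 : K0 2 a B ≤ X.core (D 2 a B 4) := by
    intro x hx y hy
    rw [mem_D, mem_K0.1 (hK _ _ hy hx)]
    exact dvd_zero _
  intro z hz
  rw [mem_D] at hz
  obtain ⟨c, hc⟩ := hz
  obtain ⟨v, rfl⟩ := hy
  have h3 := (X.core (D 2 a B 4)).mul_mem_left (c * ↑v⁻¹, 0) h1
  have h4 : ((0, z.2) : ZMod (2 ^ a) × B) ∈ X.core (D 2 a B 4) := h2 (mem_K0.2 rfl)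
  have := add_mem h3 h4
  convert this using 1
  ext
  · simp [hxdef]; rw [hc]
    have := v.inv_mul
    linear_combination (-4 * c) * this
  · simp

/-- exceptional case, exponent at least 3 -/
lemma exc_D2_big [Finite B] (hK : X.Closed (K0 2 a B)) (hL : X.Closed (L0 2 a B)) (ha : 3 ≤ a)
    (hB : IsUnit ((2 : ℕ) : B)) (hE : Exc X) : X.Closed (D 2 a B 2) := by
  classical
  haveI := fin_prod (q := 2) (a := a) (B := B) Nat.prime_two
  haveI := Fintype.ofFinite (ZMod (2 ^ a) × B)
  have ha0 : a ≠ 0 := by omega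
  have hD4 := exc_D4 hK ha hB hE
  have m4 : ∀ {x y : ZMod (2 ^ a) × B}, X.r x y → (4 : ZMod (2 ^ a)) ∣ x.1 → (4 : ZMod (2 ^ a)) ∣ y.1 :=
    fun h hx => mem_D.1 (hD4 _ _ h (mem_D.2 hx))
  obtain ⟨y, w, hy, hx⟩ := exc_point ha hE
  set x : ZMod (2 ^ a) × B := (2 * y, w) with hxdef
  set e := E 2 a B 1 with he
  have hee : e + e = 0 := E_add_E rfl ha0
  intro t0 s0 hr0 ht0
  rw [mem_D] at ht0 ⊢
  by_contra hs0
  have hs0u := (u2 ha0 _).2 hs0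
  obtain ⟨y0, hy0⟩ := ht0
  have hy0u : IsUnit y0 := by
    rw [u2 ha0]
    rintro ⟨c, rfl⟩
    apply hs0
    obtain ⟨d, hd⟩ := m4 hr0 ⟨c, by rw [hy0]; ring⟩
    exact ⟨2 * d, by rw [hd]; ring⟩
  -- an odd element in the class of x
  obtain ⟨s, hsx, hsu⟩ : ∃ s, X.r x s ∧ IsUnit s.1 := by
    obtain ⟨σ, hσ⟩ := X.cnt _ _ hr0
    obtain ⟨h1, h2⟩ := hσ (t0 - x)
    rw [sub_sub_cancel] at h2
    refine ⟨_, h2, ?_⟩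
    obtain ⟨c, hc⟩ := odd_of_unit ha0 hy
    obtain ⟨c0, hc0⟩ := odd_of_unit ha0 hy0u
    obtain ⟨d, hd⟩ := m4 h1 ⟨c0 - c, by simp [hxdef]; rw [hy0, hc, hc0]; ring⟩
    rw [u2 ha0]
    intro h
    apply hs0
    have h3 : (s0 - σ (t0 - x)).1 = s0.1 - 4 * d := by rw [Prod.fst_sub, hd]
    rw [h3] at h
    obtain ⟨f, hf⟩ := h
    exact ⟨f + 2 * d, by linear_combination hf⟩
  -- multipliers
  have noK : ∀ k : ZMod (2 ^ a), IsUnit k → (4 : ZMod (2 ^ a)) ∣ k - 1 → X.r x (k * x.1, x.2) → (k - 1) * x.1 = 0 := by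
    intro k hk hk4 hr
    by_contra hne
    obtain ⟨N, hN⟩ := power2 ha0 _ k hk4 hne
    apply hx
    have := X.pow_unit1 (y := x.1) (w := x.2) hk hr N
    convert this using 1
    rw [he, E2]
    ext
    · simp; linear_combination -hN
    · simp
  have mulS : ∀ k : ZMod (2 ^ a), IsUnit k → ∀ s, X.r x s → X.r x (k * s.1, s.2) → ∀ t, X.r x t → X.r x (k * t.1, t.2) := by
    intro k hk s hs hks t ht
    exact trans hks (X.unit1 hk (trans (symm hs) ht))
  -- odd elements only have one companion
  have oddc : ∀ s : ZMod (2 ^ a) × B, X.r x s → IsUnit s.1 → ∀ h : ZMod (2 ^ a) × B, h.2 = 0 → (4 : ZMod (2 ^ a)) ∣ h.1 →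
      X.r x (s - h) → h = 0 ∨ h = e := by
    rintro s hs hsu h h2 ⟨c, hc⟩ hr
    obtain ⟨v, hv⟩ := hsu
    have hku : IsUnit (1 + 2 * (-2 * c * (↑v⁻¹ : ZMod (2 ^ a)))) := unit_of_odd ha0 _
    set k : ZMod (2 ^ a) := 1 + 2 * (-2 * c * (↑v⁻¹ : ZMod (2 ^ a))) with hk
    have e1 : s - h = (k * s.1, s.2) := by
      have := v.inv_mul
      ext
      · simp; rw [hc, ← hv, hk]; linear_combination (4 * c) * this
      · simp [h2]
    rw [e1] at hr
    have h3 := noK k hku ⟨-c * ↑v⁻¹, by rw [hk]; ring⟩ (mulS k hku s hs hr x (X.refl x))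
    have h4 : 2 * (h.1) = 0 := by
      obtain ⟨u, rfl⟩ := hy
      have h5 := u.mul_inv
      have h6 := v.inv_mul
      simp only [hk, hxdef] at h3
      rw [hc]
      linear_combination (-(v : ZMod (2 ^ a)) * ↑u⁻¹) * h3 - (8 * c * (v : ZMod (2 ^ a)) * ↑v⁻¹) * h5 - 8 * c * h6
    rcases kill2 ha0 h4 with h5 | h5
    · left; ext; exact h5; exact h2
    · right; rw [he, E2]; ext; exact h5; exact h2
  -- the companion of x
  have e4 : (4 : ZMod (2 ^ a)) ∣ e.1 := by
    rw [he, E2]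
    obtain ⟨c, hc⟩ : ∃ c, a - 1 = 2 + c := ⟨a - 3, by omega⟩
    simp only [hc, pow_add]
    exact ⟨2 ^ c, by ring⟩
  have hse : ∀ s, s - e = s + e := by intro s; linear_combination -hee
  obtain ⟨h, hh4, hh2, hrh, hxh⟩ : ∃ h : ZMod (2 ^ a) × B, (4 : ZMod (2 ^ a)) ∣ h.1 ∧ h.2 = 0 ∧ X.r e h ∧ X.r x (x - h) := by
    obtain ⟨σ, hσ⟩ := X.cnt _ _ (symm hsx)
    obtain ⟨h1, h2⟩ := hσ e
    refine ⟨σ e, m4 h1 e4, cl2 hL h1 (by rw [he, E2]), h1, ?_⟩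
    refine trans hsx (trans ?_ h2)
    rw [hse]
    exact hE s hsu
  have hhe : h ≠ e := by
    rintro rfl
    rw [hse] at hxh
    exact hx hxh
  have hh0 : h ≠ 0 := by
    rintro rfl
    exact E1_ne Nat.prime_two ha0 (X.zero' hrh)
  -- the multiplier k = 3 mod 4
  obtain ⟨k, hku, hk3, hkx⟩ : ∃ k : ZMod (2 ^ a), IsUnit k ∧ (4 : ZMod (2 ^ a)) ∣ k + 1 ∧ X.r x (k * x.1, x.2) := by
    obtain ⟨c, hc⟩ := hh4
    obtain ⟨u, hu⟩ := hy
    have hku : IsUnit (1 + 2 * (-c * (↑u⁻¹ : ZMod (2 ^ a)))) := unit_of_odd ha0 _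
    set k : ZMod (2 ^ a) := 1 + 2 * (-c * (↑u⁻¹ : ZMod (2 ^ a))) with hk
    have e1 : x - h = (k * x.1, x.2) := by
      have := u.inv_mul
      ext
      · simp [hxdef]; rw [hc, ← hu, hk]; linear_combination (4 * c) * this
      · simp [hh2]
    rw [e1] at hxh
    refine ⟨k, hku, ?_, hxh⟩
    rcases four_cases ha0 hku with h4 | h4
    · exfalso
      have h5 := noK k hku h4 hxh
      apply hh0
      have h6 := congrArg Prod.fst e1
      simp only [Prod.fst_sub] at h6
      ext
      · simp only [Prod.fst_zero]; linear_combination -h6 - h5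
      · exact hh2
    · exact h4
  -- counting
  let Ev := Finset.univ.filter (fun t : ZMod (2 ^ a) × B => X.r x t ∧ (2 : ZMod (2 ^ a)) ∣ t.1)
  let Od := fun s : ZMod (2 ^ a) × B => Finset.univ.filter (fun t : ZMod (2 ^ a) × B => X.r x t ∧ (4 : ZMod (2 ^ a)) ∣ t.1 - s.1)
  have hinj : ∀ s, X.r x s → Ev.card ≤ (Od s).card := by
    intro s hs
    obtain ⟨σ, hσ⟩ := X.cnt _ _ hs
    apply Finset.card_le_card_of_injOn (fun z => s - σ (x - z))
    · intro z hz
      have hz' : z ∈ Ev := hz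
      simp only [Ev, Finset.mem_filter, Finset.mem_univ, true_and] at hz'
      obtain ⟨hz1, c, hc⟩ := hz'
      obtain ⟨h1, h2⟩ := hσ (x - z)
      rw [sub_sub_cancel] at h2
      have hcu : IsUnit c := by
        rw [u2 ha0]
        rintro ⟨d, rfl⟩
        have h5 := m4 (symm hz1) ⟨d, by rw [hc]; ring⟩
        obtain ⟨f, hf⟩ := odd_of_unit ha0 hy
        simp only [hxdef, hf] at h5
        obtain ⟨g, hg⟩ := h5
        exact four_not_dvd_two (by omega : 2 ≤ a) ⟨g - f, by linear_combination hg⟩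
      obtain ⟨c1, hc1⟩ := odd_of_unit ha0 hcu
      obtain ⟨y1, hy1⟩ := odd_of_unit ha0 hy
      obtain ⟨d, hd⟩ := m4 h1 ⟨y1 - c1, by simp [hxdef]; rw [hc, hc1, hy1]; ring⟩
      simp only [Od, Finset.coe_filter, Finset.mem_univ, true_and, Set.mem_setOf_eq]
      refine ⟨trans hz1 h2, -d, ?_⟩
      simp [hd]
    · intro z _ z' _ hzz
      simpa using hzz
  let s3 : ZMod (2 ^ a) × B := (k * s.1, s.2)
  have hs3 : X.r x s3 := mulS k hku x (X.refl x) hkx s hsx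
  have hcc := X.card_conv hrh x (-x)
  have hneg : ∀ t u : ZMod (2 ^ a) × B, X.r (-x) (t - u) ↔ X.r x (u - t) := by
    intro t u
    constructor
    · intro h; have := neg h; simpa using this
    · intro h; have := neg h; simpa using this
  simp only [hneg] at hcc
  rw [Nat.card_eq_fintype_card, Nat.card_eq_fintype_card, Fintype.card_subtype, Fintype.card_subtype] at hcc
  have hle1 : (Od s ∪ Od s3).card ≤ (Finset.univ.filter (fun t => X.r x t ∧ X.r x (t - e))).card := by
    apply Finset.card_le_card
    intro t ht
    simp only [Od, s3, Finset.mem_union, Finset.mem_filter, Finset.mem_univ, true_and] at ht ⊢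
    have htu : X.r x t ∧ IsUnit t.1 := by
      rcases ht with ⟨h1, f, hf⟩ | ⟨h1, f, hf⟩
      · refine ⟨h1, ?_⟩
        obtain ⟨g, hg⟩ := odd_of_unit ha0 hsu
        have : t.1 = 1 + 2 * (g + 2 * f) := by linear_combination hf + hg
        rw [this]; exact unit_of_odd ha0 _
      · refine ⟨h1, ?_⟩
        obtain ⟨g, hg⟩ := odd_of_unit ha0 (hku.mul hsu)
        have : t.1 = 1 + 2 * (g + 2 * f) := by linear_combination hf + hg
        rw [this]; exact unit_of_odd ha0 _
    refine ⟨htu.1, ?_⟩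
    rw [hse]
    exact trans htu.1 (hE t htu.2)
  have hdisj : Disjoint (Od s) (Od s3) := by
    rw [Finset.disjoint_left]
    intro t h1 h2
    simp only [Od, s3, Finset.mem_filter, Finset.mem_univ, true_and] at h1 h2
    obtain ⟨-, f, hf⟩ := h1
    obtain ⟨-, g, hg⟩ := h2
    obtain ⟨m, hm⟩ := hk3
    obtain ⟨n, hn⟩ := odd_of_unit ha0 hsu
    apply four_not_dvd_two (by omega : 2 ≤ a)
    exact ⟨g - f - n + m * s.1, by linear_combination hg - hf + s.1 * hm - 2 * hn⟩
  have hle2 : (Finset.univ.filter (fun t => X.r x t ∧ X.r x (t - h))).card ≤ Ev.card := by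
    apply Finset.card_le_card
    intro t ht
    simp only [Ev, Finset.mem_filter, Finset.mem_univ, true_and] at ht ⊢
    refine ⟨ht.1, ?_⟩
    by_contra h2
    rcases oddc t ht.1 ((u2 ha0 _).2 h2) h hh2 hh4 ht.2 with h3 | h3
    · exact hh0 h3
    · exact hhe h3
  rw [Finset.card_union_of_disjoint hdisj] at hle1
  have h1 := hinj s hsx
  have h2 := hinj s3 hs3
  have h3 : 0 < Ev.card := Finset.card_pos.2 ⟨x, by simp [Ev, hxdef, X.refl]⟩
  omega

end two
end NC

namespace NC
section two
open SR

lemma no_full {q a : ℕ} {B : Type*} [CommRing B] {X : SR (ZMod (q ^ a) × B)}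
    (h : ∀ t t' : ZMod (q ^ a), t ≠ 0 → t' ≠ 0 → ∀ w, X.r (t, w) (t', w))
    (c d : ZMod (q ^ a)) (hcd : c ≠ d) (hc0 : c ≠ 0) (hd0 : d ≠ 0) (hc1 : c ≠ 1) (hd1 : d ≠ 1) : False := by
  classical
  let s := Equiv.swap c d
  let g : ZMod (q ^ a) × B → ZMod (q ^ a) × B := fun x => (s x.1, x.2)
  have hs0 : s 0 = 0 := Equiv.swap_apply_of_ne_of_ne hc0.symm hd0.symm
  have hs1 : s 1 = 1 := Equiv.swap_apply_of_ne_of_ne hc1.symm hd1.symm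
  have hb : Function.Bijective g := (s.prodCongr (Equiv.refl B)).bijective
  have := X.norm_id g hb (by
    intro x y
    have e1 : y - x = (y.1 - x.1, y.2 - x.2) := rfl
    have e2 : g y - g x = (s y.1 - s x.1, y.2 - x.2) := rfl
    rw [e1, e2]
    by_cases hxy : y.1 = x.1
    · rw [hxy, sub_self, sub_self]; exact X.refl _
    · exact h _ _ (sub_ne_zero.2 hxy) (sub_ne_zero.2 (fun h => hxy (s.injective h))) _)
    (by ext; exact hs0; rfl) (by ext; exact hs1; rfl) (c, 0)
  have h2 := congrArg Prod.fst this
  simp only [g, s, Equiv.swap_apply_left] at h2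
  exact hcd h2.symm

lemma exc_D2_two {B : Type*} [CommRing B] {X : SR (ZMod (2 ^ 2) × B)} (hK : X.Closed (K0 2 2 B))
    (hL : X.Closed (L0 2 2 B)) (hE : Exc X) : X.Closed (D 2 2 B 2) := by
  have key : ∀ t : ZMod (2 ^ 2), t = 0 ∨ t = 1 ∨ t = 2 ∨ t = 3 := by decide
  have h13 : ∀ w : B, X.r (1, w) (3, w) := by
    intro w
    have := hE (1, w) isUnit_one
    rw [E2] at this
    have e : ((1, w) : ZMod (2 ^ 2) × B) + ((2 : ZMod (2 ^ 2)) ^ (2 - 1), 0) = (3, w) := by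
      ext
      · show (1 : ZMod (2 ^ 2)) + 2 ^ (2 - 1) = 3
        decide
      · simp
    rwa [e] at this
  intro x y h hx
  rw [mem_D] at hx ⊢
  by_contra hy
  have hx2 : x.1 = 2 := by
    rcases key x.1 with h1 | h1 | h1 | h1
    · exact absurd (by rw [cl1 hK h h1]; exact dvd_zero _) hy
    · rw [h1] at hx; exact absurd hx (by decide)
    · exact h1
    · rw [h1] at hx; exact absurd hx (by decide)
  have h12 : X.r (1, 0) (2, 0) := by
    have := (proj hK hL h).1
    rw [hx2] at this
    rcases key y.1 with h1 | h1 | h1 | h1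
    · exact absurd (by rw [h1]; exact dvd_zero _) hy
    · rw [h1] at this; exact symm this
    · exact absurd (by rw [h1]) hy
    · rw [h1] at this; exact trans (h13 0) (symm this)
  have hw : ∀ w : B, X.r (1, w) (2, w) := by
    intro w
    obtain ⟨w2, hw2⟩ : ∃ w2, X.r (1, w) (2, w2) := by
      obtain ⟨σ, hσ⟩ := X.cnt _ _ h12
      obtain ⟨h1, h2⟩ := hσ (0, -w)
      have h3 := cl1 hK h1 rfl
      refine ⟨- (σ (0, -w)).2, ?_⟩
      convert h2 using 1
      · simp
      · ext
        · simp [h3]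
        · simp
    have h11 : X.r (1, w2) (1, w) := by
      obtain ⟨σ, hσ⟩ := X.cnt _ _ hw2
      obtain ⟨h1, h2⟩ := hσ (2, 0)
      have h3 := cl2 hL h1 rfl
      have e1 : ((1, w) : ZMod (2 ^ 2) × B) - (2, 0) = (3, w) := by
        ext
        · show (1 : ZMod (2 ^ 2)) - 2 = 3
          decide
        · simp
      have e2 : ((2, w2) : ZMod (2 ^ 2) × B) - σ (2, 0) = (2 - (σ (2, 0)).1, w2) := by
        ext
        · simp
        · simp [h3]
      rw [e1, e2] at h2
      have h4 : X.r (2 - (σ (2, 0)).1, w2) (1, w) := symm (trans (h13 w) h2)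
      rcases key (σ (2, 0)).1 with h5 | h5 | h5 | h5
      · have := cl1 hK (symm h1) h5
        exact absurd this (show ¬ (2 : ZMod (2 ^ 2)) = 0 by decide)
      · rw [h5] at h4
        have : (2 - 1 : ZMod (2 ^ 2)) = 1 := by decide
        rwa [this] at h4
      · rw [h5] at h4
        have := cl1 hK h4 (sub_self _)
        exact absurd this (show ¬ (1 : ZMod (2 ^ 2)) = 0 by decide)
      · rw [h5] at h4
        have : (2 - 3 : ZMod (2 ^ 2)) = 3 := by decide
        rw [this] at h4
        exact trans (h13 w2) h4
    obtain ⟨σ, hσ⟩ := X.cnt _ _ h11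
    have hs : ∀ t : ZMod (2 ^ 2), (σ (t, 0)).2 = 0 := fun t => cl2 hL (hσ (t, 0)).1 rfl
    have hs0 : ∀ t : ZMod (2 ^ 2), t ≠ 0 → (σ (t, 0)).1 ≠ 0 := by
      intro t ht h0
      exact ht (cl1 hK (symm (hσ (t, 0)).1) h0)
    have hinj : ∀ t t' : ZMod (2 ^ 2), t ≠ t' → (σ (t, 0)).1 ≠ (σ (t', 0)).1 := by
      intro t t' ht h
      apply ht
      have : σ (t, 0) = σ (t', 0) := by
        ext
        · exact h
        · rw [hs, hs]
      have := σ.injective this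
      exact congrArg Prod.fst this
    have hd : ∀ t : ZMod (2 ^ 2), X.r (1 - t, w2) (1 - (σ (t, 0)).1, w) := by
      intro t
      have := (hσ (t, 0)).2
      convert this using 1
      · simp
      · ext
        · simp
        · simp [hs]
    have hd1 : (σ (1, 0)).1 = 1 := by
      have := cl1 hK (hd 1) (sub_self _)
      exact (sub_eq_zero.1 this).symm
    have f2 := hs0 2 (by decide)
    have f3 := hs0 3 (by decide)
    have g1 := hinj 2 1 (by decide)
    have g2 := hinj 3 1 (by decide)
    have g3 := hinj 2 3 (by decide)
    rw [hd1] at g1 g2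
    have e2 : (1 - 2 : ZMod (2 ^ 2)) = 3 := by decide
    have e3 : (1 - 3 : ZMod (2 ^ 2)) = 2 := by decide
    have : (σ (2, 0)).1 = 3 ∨ (σ (3, 0)).1 = 3 := by
      rcases key (σ (2, 0)).1 with h5 | h5 | h5 | h5 <;> rcases key (σ (3, 0)).1 with h6 | h6 | h6 | h6 <;>
        first | exact Or.inl h5 | exact Or.inr h6 | exact absurd h5 f2 | exact absurd h6 f3 | exact absurd h5 g1 | exact absurd h6 g2 | exact absurd (h5.trans h6.symm) g3
    rcases this with h5 | h5
    · have := hd 2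
      rw [h5, e2, e3] at this
      exact trans (symm h11) (trans (h13 w2) this)
    · have := hd 3
      rw [h5, e3] at this
      exact trans hw2 this
  have hall : ∀ t : ZMod (2 ^ 2), t ≠ 0 → ∀ w, X.r (1, w) (t, w) := by
    intro t ht w
    rcases key t with h1 | h1 | h1 | h1
    · exact absurd h1 ht
    · rw [h1]; exact X.refl _
    · rw [h1]; exact hw w
    · rw [h1]; exact h13 w
  exact no_full (X := X) (fun t t' ht ht' w => trans (symm (hall t ht w)) (hall t' ht' w)) 2 3
    (by decide) (by decide) (by decide) (by decide) (by decide)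

variable {a : ℕ} {B : Type*} [CommRing B] {X : SR (ZMod (2 ^ a) × B)}

lemma D2_closed [Finite B] (hK : X.Closed (K0 2 a B)) (hL : X.Closed (L0 2 a B)) (ha : 2 ≤ a)
    (hB : IsUnit ((2 : ℕ) : B)) : X.Closed (D 2 a B 2) := by
  by_cases hE : Exc X
  · by_cases h3 : 3 ≤ a
    · exact exc_D2_big hK hL h3 hB hE
    · obtain rfl : a = 2 := by omega
      exact exc_D2_two hK hL hE
  · unfold Exc at hE
    push Not at hE
    obtain ⟨x, hx, hr⟩ := hE
    have := Dq_closed hK Nat.prime_two (by omega : a ≠ 0) hB hx ⟨1, hr⟩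
    simpa using this

lemma E2_lemma [Finite B] (hK : X.Closed (K0 2 a B)) (hL : X.Closed (L0 2 a B)) (ha : 3 ≤ a)
    (hB : IsUnit ((2 : ℕ) : B)) : ∃ w0 : B, ∀ u, IsUnit u → ∀ d1 w1, X.r (2 * u, w0) (d1, w1) →
      ∃ u1, IsUnit u1 ∧ d1 = 2 * u1 := by
  have hD2 := D2_closed hK hL (by omega) hB
  have ha0 : a ≠ 0 := by omega
  by_cases hE : Exc X
  · have hD4 := exc_D4 hK ha hB hE
    refine ⟨0, fun u hu d1 w1 h => ?_⟩
    obtain ⟨c, hc⟩ := mem_D.1 (hD2 _ _ h (mem_D.2 (dvd_mul_right _ _)))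
    refine ⟨c, ?_, hc⟩
    rw [u2 ha0]
    rintro ⟨e, he⟩
    obtain ⟨f, hf⟩ := mem_D.1 (hD4 _ _ (symm h) (mem_D.2 ⟨e, by simp only at hc ⊢; rw [hc, he]; ring⟩))
    obtain ⟨g, hg⟩ := odd_of_unit ha0 hu
    simp only at hf
    apply four_not_dvd_two (by omega : 2 ≤ a)
    exact ⟨f - g, by linear_combination hf - 2 * hg⟩
  · unfold Exc at hE
    push Not at hE
    obtain ⟨x, hx, hr⟩ := hE
    refine ⟨2 * x.2, fun u hu d1 w1 h => ?_⟩
    obtain ⟨v, hv⟩ := hx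
    obtain ⟨u', rfl⟩ := hu
    have h1 := X.unit1 (v * u'⁻¹).isUnit h
    have e : (((2 : ℕ) : ZMod (2 ^ a) × B) * x) = (↑(v * u'⁻¹) * (2 * (u' : ZMod (2 ^ a))), 2 * x.2) := by
      ext
      · have := u'.mul_inv
        simp [← hv]
        linear_combination (-2 * (v : ZMod (2 ^ a))) * this
      · simp
    have h2 : X.r (((2 : ℕ) : ZMod (2 ^ a) × B) * x) (↑(v * u'⁻¹) * d1, w1) := by
      rw [e]; exact h1
    obtain ⟨s, hs, hs2⟩ := partial_root Nat.prime_two ha0 hB ⟨1, hr⟩ h2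
    have hsu : IsUnit s.1 := by
      rw [u2 ha0]
      intro h'
      exact (u2 ha0 _).1 ⟨v, hv⟩ (mem_D.1 (hD2 _ _ (symm hs) (mem_D.2 h')))
    refine ⟨u' * ↑v⁻¹ * s.1, (u'.isUnit.mul v⁻¹.isUnit).mul hsu, ?_⟩
    have h3 := congrArg Prod.fst hs2
    simp at h3
    have h4 := v.inv_mul
    have h5 := u'.mul_inv
    linear_combination (-(u' : ZMod (2 ^ a)) * ↑v⁻¹) * h3 - d1 * (u' : ZMod (2 ^ a)) * ↑u'⁻¹ * h4 - d1 * h5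

lemma E3 [Finite B] (ha : 3 ≤ a) {k : ZMod (2 ^ a)} (hk : Kst X k) (hk4 : (4 : ZMod (2 ^ a)) ∣ k - 1) :
    2 * (k - 1) = 0 := by
  haveI := fin_prod (q := 2) (a := a) (B := B) Nat.prime_two
  have ha0 : a ≠ 0 := by omega
  have z0 : ∀ n, a ≤ n → (2 : ZMod (2 ^ a)) ^ n = 0 := by
    intro n hn
    have := zpow_eq_zero_of_le (q := 2) hn
    simpa using this
  by_contra hne
  by_cases h3 : a = 3
  · apply hne
    obtain ⟨c, hc⟩ := hk4
    rw [hc]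
    have := z0 3 (by omega)
    linear_combination c * this
  obtain ⟨N, hN⟩ := power2 ha0 2 k hk4 (by rwa [mul_comm])
  have hpp : (2 : ZMod (2 ^ a)) ^ (a - 1) = 2 * 2 ^ (a - 2) := by
    rw [← pow_succ']; congr 1; omega
  obtain ⟨j, hj⟩ : ∃ j, k ^ N - 1 = 2 ^ (a - 2) * (1 + 2 * j) := by
    rcases kill2 ha0 (t := k ^ N - 1 - 2 ^ (a - 2)) (by linear_combination hN + hpp) with h | h
    · exact ⟨0, by linear_combination h⟩
    · exact ⟨1, by linear_combination h + hpp⟩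
  have hf2 : (k ^ N - 1) ^ 2 = 0 := by
    rw [hj, mul_pow, ← pow_mul, z0 _ (by omega), zero_mul]
  apply X.NL2 (D 2 a B 2) (2 ^ (a - 2), 0)
  · rw [mem_D]; exact dvd_pow_self _ (by omega)
  · intro h
    have := congrArg Prod.fst h
    simp at this
    rw [← hpp] at this
    exact eps2_ne ha0 this
  · intro x hx
    rw [mem_D] at hx
    have hu := (u2 ha0 _).2 hx
    obtain ⟨v, hv⟩ := (unit_of_odd ha0 j).mul hu
    haveI : NeZero (2 ^ a) := ⟨by positivity⟩
    set M := ((↑v⁻¹ : ZMod (2 ^ a))).val with hM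
    have hMc : (M : ZMod (2 ^ a)) = ↑v⁻¹ := ZMod.natCast_zmod_val _
    have h6 := X.pow_unit1 hk.1 (hk.apply hu x.2) (N * M)
    obtain ⟨c, hc⟩ := pow_sub_one_dvd (k ^ N) M
    rw [pow_mul, hc, hf2, hMc, hj] at h6
    convert h6 using 1
    have := v.inv_mul
    ext
    · simp
      linear_combination (-2 ^ (a - 2)) * this + (2 ^ (a - 2) * (↑v⁻¹ : ZMod (2 ^ a))) * hv
    · simp
  · rw [mem_D]; exact (u2 ha0 _).1 isUnit_one
  · rw [mem_D]; simp

/-- the two part -/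
theorem two_big [Finite B] (Y : YC X) (hK : X.Closed (K0 2 a B)) (hL : X.Closed (L0 2 a B)) (ha : 2 ≤ a)
    (hB : IsUnit ((2 : ℕ) : B)) {z z1 : ZMod (2 ^ a)} (h : Y.pq 1 z 1 z1) : 2 * (z1 - z) = 0 := by
  have hD2 := D2_closed hK hL ha hB
  have ha0 : a ≠ 0 := by omega
  have e2 : ∀ {x y : ZMod (2 ^ a) × B}, X.r x y → (2 : ZMod (2 ^ a)) ∣ x.1 → (2 : ZMod (2 ^ a)) ∣ y.1 :=
    fun h hx => mem_D.1 (hD2 _ _ h (mem_D.2 hx))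
  have hzz : (2 : ZMod (2 ^ a)) ∣ z → (2 : ZMod (2 ^ a)) ∣ z1 := fun hz => e2 (Y.right h) hz
  have hzz' : (2 : ZMod (2 ^ a)) ∣ z1 → (2 : ZMod (2 ^ a)) ∣ z := fun hz => e2 (symm (Y.right h)) hz
  by_cases h3 : a = 2
  · subst h3
    have : ∀ z z1 : ZMod (2 ^ 2), (2 ∣ z → 2 ∣ z1) → (2 ∣ z1 → 2 ∣ z) → 2 * (z1 - z) = 0 := by
      decide
    exact this z z1 hzz hzz'
  have ha3 : 3 ≤ a := by omega
  obtain ⟨w0, hw0⟩ := E2_lemma hK hL ha3 hB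
  have par : ∀ d d1 : ZMod (2 ^ a), (∀ w, ∃ w1, X.r (d, w) (d1, w1)) → (∀ w, ∃ w1, X.r (d1, w) (d, w1)) →
      (2 : ZMod (2 ^ a)) ∣ d → (2 : ZMod (2 ^ a)) ∣ d1 → (4 : ZMod (2 ^ a)) ∣ d + d1 := by
    have one : ∀ e e1 : ZMod (2 ^ a), (∀ w, ∃ w1, X.r (2 * (1 + 2 * e), w) (2 * (2 * e1), w1)) → False := by
      intro e e1 h
      obtain ⟨w1, hw1⟩ := h w0
      obtain ⟨u1, hu1, he⟩ := hw0 _ (unit_of_odd ha0 e) _ _ hw1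
      obtain ⟨c, rfl⟩ := odd_of_unit ha0 hu1
      exact four_not_dvd_two ha ⟨e1 - c, by linear_combination -he⟩
    rintro d d1 h1 h2 ⟨e, rfl⟩ ⟨e1, rfl⟩
    rcases c2 e with ⟨f, rfl⟩ | ⟨f, hf⟩ <;> rcases c2 e1 with ⟨f1, rfl⟩ | ⟨f1, hf1⟩
    · exact ⟨f + f1, by ring⟩
    · obtain rfl : e1 = 1 + 2 * f1 := by linear_combination hf1
      exact (one _ _ h2).elim
    · obtain rfl : e = 1 + 2 * f := by linear_combination hf
      exact (one _ _ h1).elim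
    · exact ⟨f + f1 + 1, by linear_combination 2 * hf + 2 * hf1⟩
  rcases c2 z with hz | hz
  · have hz1 := hzz hz
    have hu : ∀ t : ZMod (2 ^ a), (2 : ZMod (2 ^ a)) ∣ t → IsUnit (t - 1) := by
      rintro t ⟨c, rfl⟩
      have := unit_of_odd ha0 (c - 1)
      convert this using 1; ring
    obtain ⟨k, hk, hke⟩ := tieB2 Y hK h isUnit_one isUnit_one (hu z hz) (hu z1 hz1)
    rcases four_cases ha0 hk.1 with h4 | ⟨m, hm⟩
    · have := E3 ha3 hk h4
      linear_combination 2 * hke + (z - 1) * this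
    · exfalso
      obtain ⟨n, hn⟩ := par z z1 (fun w => (B1 Y hK h w).imp fun _ h => h.2)
        (fun w => (B1 Y hK (Y.symm h) w).imp fun _ h => h.2) hz hz1
      apply four_not_dvd_two ha
      exact ⟨n - m * (z - 1), by linear_combination -hke - (z - 1) * hm + hn⟩
  · have hzu : IsUnit z := by
      obtain ⟨c, hc⟩ := hz
      have := unit_of_odd ha0 c
      convert this using 1; linear_combination hc
    have hz1u : IsUnit z1 := by
      rw [u2 ha0] at hzu ⊢
      exact fun h' => hzu (hzz' h')
    have hz1 : (2 : ZMod (2 ^ a)) ∣ z1 - 1 := by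
      obtain ⟨c, hc⟩ := odd_of_unit ha0 hz1u
      exact ⟨c, by linear_combination hc⟩
    obtain ⟨k, hk, hke⟩ := tieB1 Y hK h isUnit_one isUnit_one hzu hz1u
    rcases four_cases ha0 hk.1 with h4 | ⟨m, hm⟩
    · have := E3 ha3 hk h4
      linear_combination 2 * hke + z * this
    · exfalso
      obtain ⟨n, hn⟩ := par (z - 1) (z1 - 1) (fun w => (B2 Y hK h w).imp fun _ h => h.2)
        (fun w => (B2 Y hK (Y.symm h) w).imp fun _ h => h.2) hz hz1
      apply four_not_dvd_two ha
      exact ⟨m * z - n, by linear_combination hke + z * hm - hn⟩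

end two
end NC

namespace NC
section fieldcore
open Finset
variable {F : Type*} [Field F] [Fintype F] [DecidableEq F]

/-- invariance of a function of the ratio -/
def Inv (p : Fˣ → Fˣ → Fˣ → Fˣ → Prop) (P : Fˣ → F) : Prop :=
  ∀ x z x1 z1, p x z x1 z1 → P (z * x⁻¹) = P (z1 * x1⁻¹)

variable {p : Fˣ → Fˣ → Fˣ → Fˣ → Prop}

lemma Inv.conv (hcnt : ∀ x z x1 z1, p x z x1 z1 → ∃ σ : Equiv.Perm Fˣ, ∀ y, p x y x1 (σ y) ∧ p y z (σ y) z1)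
    {P Q : Fˣ → F} (hP : Inv p P) (hQ : Inv p Q) : Inv p (fun t => ∑ y, P y * Q (t * y⁻¹)) := by
  intro x z x1 z1 h
  obtain ⟨σ, hσ⟩ := hcnt x z x1 z1 h
  have key : ∀ x z : Fˣ, ∑ y, P y * Q (z * x⁻¹ * y⁻¹) = ∑ y, P (y * x⁻¹) * Q (z * y⁻¹) := by
    intro x z
    rw [← Equiv.sum_comp (Equiv.mulRight x⁻¹)]
    apply Finset.sum_congr rfl
    intro y _
    simp [mul_assoc]
  simp only
  rw [key, key, ← Equiv.sum_comp σ (fun y => P (y * x1⁻¹) * Q (z1 * y⁻¹))]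
  apply Finset.sum_congr rfl
  intro y _
  rw [hP _ _ _ _ (hσ y).1, hQ _ _ _ _ (hσ y).2]

lemma conv_formula {q : ℕ} (hcard : Fintype.card F = q) {k : ℕ} (hk : k + 1 < q) (a b : ℕ → F) (t : Fˣ) :
    ∑ y : Fˣ, (∑ i ∈ Finset.range (k + 1), a i * (y : F) ^ i) * (∑ j ∈ Finset.range q, b j * ((t * y⁻¹ : Fˣ) : F) ^ j) =
      - (∑ i ∈ Finset.range (k + 1), a i * b i * (t : F) ^ i) - a 0 * b (q - 1) := by
  have h1 : ∀ i ∈ Finset.range (k + 1), ∀ j ∈ Finset.range q, ∑ y : Fˣ, (y : F) ^ i * ((t * y⁻¹ : Fˣ) : F) ^ j =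
      - ((if i = j then (t : F) ^ i else 0) + (if i = 0 then (if j = q - 1 then 1 else 0) else 0)) := by
    intro i hi j hj
    rw [Finset.mem_range] at hi hj
    have hpow : ∀ y : Fˣ, y ^ (q - 1) = 1 := by
      intro y
      have := pow_card_eq_one (x := y)
      rwa [Fintype.card_units, hcard] at this
    have h2 : ∀ y : Fˣ, (y : F) ^ i * ((t * y⁻¹ : Fˣ) : F) ^ j = (t : F) ^ j * ((y : F) ^ (i + (q - 1 - j))) := by
      intro y
      have h3 : (y⁻¹ : Fˣ) ^ j = y ^ (q - 1 - j) := by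
        rw [inv_pow, inv_eq_iff_mul_eq_one, ← pow_add]
        have : j + (q - 1 - j) = q - 1 := by omega
        rw [this, hpow]
      have h4 : y ^ i * (t * y⁻¹) ^ j = t ^ j * y ^ (i + (q - 1 - j)) := by
        rw [mul_pow, h3, pow_add]
        exact mul_left_comm _ _ _
      have := congrArg (Units.val) h4
      simpa using this
    simp only [h2]
    rw [← Finset.mul_sum]
    have h5 := FiniteField.sum_pow_units F (i + (q - 1 - j))
    rw [hcard] at h5
    have h6 : (q - 1 ∣ i + (q - 1 - j)) ↔ (i = j ∨ (i = 0 ∧ j = q - 1)) := by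
      constructor
      · rintro ⟨c, hc⟩
        have : c < 2 := by
          by_contra hcc
          have : (q - 1) * 2 ≤ (q - 1) * c := Nat.mul_le_mul_left _ (by omega)
          omega
        interval_cases c <;> omega
      · rintro (h | ⟨h, h'⟩)
        · exact ⟨1, by omega⟩
        · exact ⟨0, by omega⟩
    have h7 : ∑ x : Fˣ, (x : F) ^ (i + (q - 1 - j)) = if q - 1 ∣ i + (q - 1 - j) then -1 else 0 := by
      simpa using h5
    rw [h7]
    by_cases hij : i = j
    · subst hij
      rw [if_pos (h6.2 (Or.inl rfl)), if_pos rfl]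
      have : ¬ (i = 0 ∧ i = q - 1) := by omega
      by_cases h0 : i = 0
      · rw [if_pos h0, if_neg (by omega)]; ring
      · rw [if_neg h0]; ring
    · rw [if_neg hij]
      by_cases h0 : i = 0
      · by_cases hj1 : j = q - 1
        · rw [if_pos (h6.2 (Or.inr ⟨h0, hj1⟩)), if_pos h0, if_pos hj1, hj1]
          have := congrArg Units.val (hpow t)
          simp at this
          rw [this]; ring
        · rw [if_neg (by rw [h6]; tauto), if_pos h0, if_neg hj1]; ring
      · rw [if_neg (by rw [h6]; tauto), if_neg h0]; ring
  have h2 : ∑ y : Fˣ, (∑ i ∈ Finset.range (k + 1), a i * (y : F) ^ i) * (∑ j ∈ Finset.range q, b j * ((t * y⁻¹ : Fˣ) : F) ^ j) =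
      ∑ i ∈ Finset.range (k + 1), ∑ j ∈ Finset.range q, a i * b j * ∑ y : Fˣ, (y : F) ^ i * ((t * y⁻¹ : Fˣ) : F) ^ j := by
    simp only [Finset.sum_mul_sum]
    simp only [Finset.mul_sum]
    rw [Finset.sum_comm]
    apply Finset.sum_congr rfl
    intro i _
    rw [Finset.sum_comm]
    apply Finset.sum_congr rfl
    intro j _
    apply Finset.sum_congr rfl
    intro y _
    ring
  rw [h2]
  have h3 : ∑ i ∈ Finset.range (k + 1), ∑ j ∈ Finset.range q, a i * b j * ∑ y : Fˣ, (y : F) ^ i * ((t * y⁻¹ : Fˣ) : F) ^ j =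
      ∑ i ∈ Finset.range (k + 1), (- (a i * b i * (t : F) ^ i) - if i = 0 then a 0 * b (q - 1) else 0) := by
    apply Finset.sum_congr rfl
    intro i hi
    have h4 : ∑ j ∈ Finset.range q, a i * b j * ∑ y : Fˣ, (y : F) ^ i * ((t * y⁻¹ : Fˣ) : F) ^ j =
      ∑ j ∈ Finset.range q, ((if i = j then - (a i * b i * (t : F) ^ i) else 0) -
        (if j = q - 1 then (if i = 0 then a 0 * b (q - 1) else 0) else 0)) := by
      apply Finset.sum_congr rfl
      intro j hj
      rw [h1 i hi j hj]
      clear h1 h2 hcard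
      split_ifs <;> (try subst_vars) <;> first | (exfalso; omega) | ring
    rw [h4, Finset.sum_sub_distrib, Finset.sum_ite_eq, Finset.sum_ite_eq', if_pos, if_pos]
    · rw [Finset.mem_range]; omega
    · rw [Finset.mem_range] at hi ⊢; omega
  rw [h3, Finset.sum_sub_distrib, Finset.sum_neg_distrib, Finset.sum_ite_eq', if_pos]
  rw [Finset.mem_range]; omega


lemma Inv.const (c : F) : Inv p (fun _ => c) := fun _ _ _ _ _ => rfl

lemma Inv.of_conv (hcnt : ∀ x z x1 z1, p x z x1 z1 → ∃ σ : Equiv.Perm Fˣ, ∀ y, p x y x1 (σ y) ∧ p y z (σ y) z1)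
    {q : ℕ} (hcard : Fintype.card F = q) {k : ℕ} (hk : k + 1 < q) {a b : ℕ → F}
    (ha : Inv p (fun t => ∑ i ∈ Finset.range (k + 1), a i * (t : F) ^ i))
    (hb : Inv p (fun t => ∑ i ∈ Finset.range q, b i * (t : F) ^ i)) :
    Inv p (fun t => ∑ i ∈ Finset.range (k + 1), a i * b i * (t : F) ^ i) := by
  have h := Inv.conv hcnt ha hb
  intro x z x1 z1 hp
  have h1 := h x z x1 z1 hp
  simp only at h1
  rw [conv_formula hcard hk a b, conv_formula hcard hk a b] at h1
  simp only
  linear_combination -h1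

open PowerSeries in
lemma field_core (hcnt : ∀ x z x1 z1, p x z x1 z1 → ∃ σ : Equiv.Perm Fˣ, ∀ y, p x y x1 (σ y) ∧ p y z (σ y) z1)
    {q : ℕ} (hq : q.Prime) [CharP F q] (hcard : Fintype.card F = q) {k : ℕ} (hk1 : 1 ≤ k) (hk2 : 2 * k ≤ q - 1)
    (htie : ∀ x z x1 z1, p x z x1 z1 → (1 - ((z * x⁻¹ : Fˣ) : F)) ^ k = (1 - ((z1 * x1⁻¹ : Fˣ) : F)) ^ k)
    {x z x1 z1 : Fˣ} (h : p x z x1 z1) : z * x⁻¹ = z1 * x1⁻¹ := by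
  haveI : Fact q.Prime := ⟨hq⟩
  have hq2 := hq.two_le
  have hk : k + 1 < q := by omega
  have ext : ∀ c : ℕ → F, ∀ t : F, ∑ i ∈ Finset.range (k + 1), c i * t ^ i =
      ∑ i ∈ Finset.range q, (if i < k + 1 then c i else 0) * t ^ i := by
    intro c t
    have : Finset.range (k + 1) = (Finset.range q).filter (fun i => i < k + 1) := by
      ext i; simp only [Finset.mem_range, mem_filter]; omega
    rw [this, Finset.sum_filter]
    apply Finset.sum_congr rfl
    intro i _
    split_ifs <;> simp
  -- hadamard product
  have had : ∀ a b : ℕ → F, Inv p (fun t => ∑ i ∈ Finset.range (k + 1), a i * (t : F) ^ i) →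
      Inv p (fun t => ∑ i ∈ Finset.range (k + 1), b i * (t : F) ^ i) →
      Inv p (fun t => ∑ i ∈ Finset.range (k + 1), a i * b i * (t : F) ^ i) := by
    intro a b ha hb
    simp only [ext b] at hb
    have := Inv.of_conv hcnt hcard hk ha hb
    convert this using 2 with t
    apply Finset.sum_congr rfl
    intro i hi
    rw [if_pos (by simpa using hi)]
  let c : ℕ → F := fun i => (-1) ^ i * (k.choose i : F)
  have hc : Inv p (fun t => ∑ i ∈ Finset.range (k + 1), c i * (t : F) ^ i) := by
    intro x z x1 z1 hp
    have := htie x z x1 z1 hp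
    have e : ∀ t : F, (1 - t) ^ k = ∑ i ∈ Finset.range (k + 1), c i * t ^ i := by
      intro t
      have : (1 - t) = (-t) + 1 := by ring
      rw [this, add_pow]
      apply Finset.sum_congr rfl
      intro i _
      rw [neg_pow]; simp only [c, one_pow]; ring
    rw [e, e] at this
    exact this
  have hcn : ∀ n : ℕ, Inv p (fun t => ∑ i ∈ Finset.range (k + 1), (c i) ^ (n + 1) * (t : F) ^ i) := by
    intro n
    induction n with
    | zero => simpa using hc
    | succ n ih =>
      have := had _ _ ih hc
      simpa [pow_succ] using this
  have hone : Inv p (fun t => ∑ i ∈ Finset.range (k + 1), (1 : F) * (t : F) ^ i) := by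
    have := hcn (q - 2)
    convert this using 2 with t
    apply Finset.sum_congr rfl
    intro i hi
    rw [Finset.mem_range] at hi
    have e : q - 2 + 1 = q - 1 := by omega
    rw [e, ← hcard, FiniteField.pow_card_sub_one_eq_one]
    simp only [c]
    refine mul_ne_zero (pow_ne_zero _ (by simp)) ?_
    rw [Ne, CharP.cast_eq_zero_iff F q]
    intro hd
    have h1 : q ∣ k.factorial := by
      rw [← Nat.choose_mul_factorial_mul_factorial (by omega : i ≤ k), mul_assoc]
      exact hd.mul_right _
    rw [hq.dvd_factorial] at h1
    omega
  -- power series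
  let IT : PowerSeries F → Prop := fun A => Inv p (fun t => ∑ i ∈ Finset.range (k + 1), coeff i A * (t : F) ^ i)
  have hmul : ∀ A B, IT A → IT B → IT (A * B) := by
    intro A B hA hB
    let P := trunc (k + 1) A * trunc (k + 1) B
    have hdeg : P.natDegree < q := by
      have h1 : (trunc (k + 1) A).natDegree < k + 1 := natDegree_trunc_lt A k
      have h2 : (trunc (k + 1) B).natDegree < k + 1 := natDegree_trunc_lt B k
      have h3 : P.natDegree ≤ _ := Polynomial.natDegree_mul_le
      omega
    have ev : ∀ A : PowerSeries F, ∀ t : F, (trunc (k + 1) A).eval t = ∑ i ∈ Finset.range (k + 1), coeff i A * t ^ i := by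
      intro A t
      rw [Polynomial.eval_eq_sum_range' (natDegree_trunc_lt A k)]
      apply Finset.sum_congr rfl
      intro i hi
      rw [coeff_trunc, if_pos (by simpa using hi)]
    have hP : Inv p (fun t => ∑ i ∈ Finset.range q, P.coeff i * (t : F) ^ i) := by
      intro x z x1 z1 hp
      have h1 := hA x z x1 z1 hp
      have h2 := hB x z x1 z1 hp
      simp only at h1 h2 ⊢
      rw [← Polynomial.eval_eq_sum_range' hdeg, ← Polynomial.eval_eq_sum_range' hdeg]
      simp only [P, Polynomial.eval_mul]
      rw [ev, ev, ev, ev, h1, h2]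
    have := Inv.of_conv hcnt hcard hk hone hP
    simp only [IT]
    convert this using 2 with t
    apply Finset.sum_congr rfl
    intro i hi
    rw [one_mul]
    congr 1
    rw [Finset.mem_range] at hi
    simp only [P]
    rw [Polynomial.coeff_mul, coeff_mul]
    apply Finset.sum_congr rfl
    intro ij hij
    have hij := Finset.HasAntidiagonal.mem_antidiagonal.1 hij
    rw [coeff_trunc, coeff_trunc, if_pos (by omega), if_pos (by omega)]
  let A : PowerSeries F := mk 1
  have hA : IT A := by
    simp only [IT, A, coeff_mk]
    exact hone
  have hAn : ∀ n : ℕ, IT (A ^ (n + 1)) := by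
    intro n
    induction n with
    | zero => simpa using hA
    | succ n ih => rw [pow_succ]; exact hmul _ _ ih hA
  have hA1 : A * (1 - X) = 1 := mk_one_mul_one_sub_eq_one F
  haveI : CharP (PowerSeries F) q := by
    refine charP_of_injective_algebraMap (R := F) ?_ q
    exact (algebraMap F (PowerSeries F)).injective
  have hAq : A ^ q = 1 + A ^ q * X ^ q := by
    have h1 : (A * (1 - X)) ^ q = 1 := by rw [hA1, one_pow]
    rw [mul_pow, sub_pow_char, one_pow] at h1
    linear_combination h1
  have hAq1 : A ^ (q - 2 + 1) = (1 - X) + (A ^ q * (1 - X)) * X ^ q := by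
    have h1 : A ^ (q - 2 + 1) * A = A ^ q := by rw [← pow_succ]; congr 1; omega
    calc A ^ (q - 2 + 1) = A ^ (q - 2 + 1) * A * (1 - X) := by rw [mul_assoc, hA1, mul_one]
      _ = A ^ q * (1 - X) := by rw [h1]
      _ = _ := by linear_combination (1 - X) * hAq
  have hfin := hAn (q - 2) x z x1 z1 h
  rw [hAq1] at hfin
  have e : ∀ t : F, ∑ i ∈ Finset.range (k + 1), coeff i ((1 - X) + (A ^ q * (1 - X)) * X ^ q) * t ^ i = 1 - t := by
    intro t
    have h1 : ∀ i ∈ Finset.range (k + 1), coeff i ((1 - X) + (A ^ q * (1 - X)) * X ^ q : PowerSeries F) * t ^ i =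
        (if i = 0 then 1 else 0) - (if i = 1 then t else 0) := by
      intro i hi
      rw [Finset.mem_range] at hi
      rw [map_add, coeff_mul_X_pow', if_neg (by omega), map_sub, coeff_one, coeff_X]
      by_cases h0 : i = 0
      · rw [if_pos h0, if_neg (by omega), if_neg (by omega)]; rw [h0]; simp
      · by_cases h1 : i = 1
        · rw [if_neg h0, if_pos h1, if_pos h1, h1]; simp
        · rw [if_neg h0, if_neg h1, if_neg h1]; simp
    rw [Finset.sum_congr rfl h1, Finset.sum_sub_distrib, Finset.sum_ite_eq', Finset.sum_ite_eq', if_pos, if_pos]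
    · rw [Finset.mem_range]; omega
    · rw [Finset.mem_range]; omega
  simp only at hfin
  rw [e, e] at hfin
  ext
  linear_combination -hfin

end fieldcore

section prime
open SR
variable {q : ℕ} {B : Type*} [CommRing B] {X : SR (ZMod (q ^ 1) × B)} (Y : YC X)

/-- exponent one -/
theorem prime_case (hK : X.Closed (K0 q 1 B)) (hL : X.Closed (L0 q 1 B)) (hq : q.Prime)
    {z z1 : ZMod (q ^ 1)} (h : Y.pq 1 z 1 z1) : z = z1 := by
  classical
  haveI : Fact (q ^ 1).Prime := ⟨by simpa using hq⟩
  have r0 : ∀ {x z x1 z1}, Y.pq x z x1 z1 → (z = 0 ↔ z1 = 0) := by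
    intro x z x1 z1 h
    constructor
    · intro hz; exact cl1 hK (Y.right h) hz
    · intro hz; exact cl1 hK (symm (Y.right h)) hz
  have d0 : ∀ {x z x1 z1}, Y.pq x z x1 z1 → (z = x ↔ z1 = x1) := by
    intro x z x1 z1 h
    constructor
    · intro hz
      have := cl1 hK (Y.diff h) (by simp [hz])
      exact sub_eq_zero.1 this
    · intro hz
      have := cl1 hK (symm (Y.diff h)) (by simp [hz])
      exact sub_eq_zero.1 this
  by_cases hz : z = 0
  · rw [hz, (r0 h).1 hz]
  by_cases hz' : z = 1
  · rw [hz', (d0 h).1 hz']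
  have hz1 : z1 ≠ 0 := fun h' => hz ((r0 h).2 h')
  have hz1' : z1 ≠ 1 := fun h' => hz' ((d0 h).2 h')
  by_contra hne
  let KK : Subgroup (ZMod (q ^ 1))ˣ :=
    { carrier := {u | Kst X (u : ZMod (q ^ 1))}
      one_mem' := ⟨isUnit_one, fun w => X.refl _⟩
      mul_mem' := fun {u v} hu hv => Kst.mul hu hv
      inv_mem' := fun {u} hu => Kst.inv (k := (u : ZMod (q ^ 1))) hu u.inv_mul }
  have hKK : KK ≠ ⊤ := by
    intro htop
    have hall : ∀ t : ZMod (q ^ 1), t ≠ 0 → ∀ w, X.r (1, w) (t, w) := by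
      intro t ht w
      have : Units.mk0 t ht ∈ KK := by rw [htop]; trivial
      exact this.2 w
    exact no_full (X := X) (fun t t' ht ht' w => trans (symm (hall t ht w)) (hall t' ht' w)) z z1 hne hz hz1 hz' hz1'
  have hcard : Fintype.card (ZMod (q ^ 1)) = q ^ 1 := ZMod.card _
  have hcu : Nat.card (ZMod (q ^ 1))ˣ = q ^ 1 - 1 := by
    rw [Nat.card_eq_fintype_card, Fintype.card_units, hcard]
  have hk2 : 2 * Nat.card KK ≤ q ^ 1 - 1 := by
    obtain ⟨c, hc⟩ := KK.card_subgroup_dvd_card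
    rw [hcu] at hc
    have hpos : 0 < Nat.card KK := Nat.card_pos
    have h0 : q ^ 1 - 1 ≠ 0 := by
      have := hq.two_le
      rw [pow_one]; omega
    have : 2 ≤ c := by
      by_contra hcc
      interval_cases c
      · omega
      · exact hKK (Subgroup.eq_top_of_card_eq _ (by rw [hcu, hc, mul_one]))
    rw [hc, mul_comm]
    exact Nat.mul_le_mul_left _ this
  let p : (ZMod (q ^ 1))ˣ → (ZMod (q ^ 1))ˣ → (ZMod (q ^ 1))ˣ → (ZMod (q ^ 1))ˣ → Prop :=
    fun x z x1 z1 => Y.pq x z x1 z1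
  have key := field_core (p := p) (q := q ^ 1) (F := ZMod (q ^ 1)) (by
    intro x z x1 z1 h
    obtain ⟨σ, hσ⟩ := pq_cnt Y hL h
    have hn : ∀ y : (ZMod (q ^ 1))ˣ, (σ ((y : ZMod (q ^ 1)), 0)).1 ≠ 0 := by
      intro y h'
      exact y.ne_zero ((r0 (hσ y).2.1).2 h')
    let τ : (ZMod (q ^ 1))ˣ → (ZMod (q ^ 1))ˣ := fun y => Units.mk0 _ (hn y)
    have hτ : Function.Injective τ := by
      intro y y' hy
      have h1 := congrArg Units.val hy
      simp only [τ, Units.val_mk0] at h1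
      have h2 : σ ((y : ZMod (q ^ 1)), 0) = σ ((y' : ZMod (q ^ 1)), 0) := by
        ext
        · exact h1
        · rw [(hσ _).1, (hσ _).1]
      have h3 := congrArg Prod.fst (σ.injective h2)
      exact Units.ext h3
    exact ⟨Equiv.ofBijective τ (Finite.injective_iff_bijective.1 hτ), fun y => (hσ y).2⟩) Fact.out hcard
    (k := Nat.card KK) Nat.card_pos hk2 (by
    intro x z x1 z1 h
    by_cases hzx : (z : ZMod (q ^ 1)) = x
    · have h1 := (d0 h).1 hzx
      have e1 : z = x := Units.ext hzx
      have e2 : z1 = x1 := Units.ext h1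
      rw [e1, e2, mul_inv_cancel, mul_inv_cancel]
    · have h1 : (z1 : ZMod (q ^ 1)) ≠ x1 := fun h' => hzx ((d0 h).2 h')
      obtain ⟨k, hk, hke⟩ := tieB2 Y hK h x.isUnit x1.isUnit (isUnit_iff_ne_zero.2 (sub_ne_zero.2 hzx))
        (isUnit_iff_ne_zero.2 (sub_ne_zero.2 h1))
      obtain ⟨u, rfl⟩ := hk.1
      have hu : u ^ Nat.card KK = 1 := by
        have h5 : (⟨u, hk⟩ : KK) ^ Nat.card KK = 1 := pow_card_eq_one'
        exact congrArg Subtype.val h5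
      have e3 : (1 - ((z1 * x1⁻¹ : (ZMod (q ^ 1))ˣ) : ZMod (q ^ 1))) =
          u * (1 - ((z * x⁻¹ : (ZMod (q ^ 1))ˣ) : ZMod (q ^ 1))) := by
        have i1 := x.mul_inv
        have i2 := x1.mul_inv
        push_cast
        have hx := x.ne_zero
        have hx1 := x1.ne_zero
        field_simp
        linear_combination -hke
      rw [e3, mul_pow]
      have := congrArg Units.val hu
      push_cast at this
      rw [this, one_mul]) (x := 1) (z := Units.mk0 z hz) (x1 := 1) (z1 := Units.mk0 z1 hz1) h
  apply hne
  have := congrArg Units.val key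
  simpa using this

end prime
end NC

namespace NC

/-- transport along a ring isomorphism -/
def SR.map {R R' : Type*} [CommRing R] [CommRing R'] (e : R ≃+* R') (X : SR R) : SR R' where
  r x y := X.r (e.symm x) (e.symm y)
  eqv := ⟨fun x => X.refl _, fun h => X.eqv.symm h, fun h h' => X.eqv.trans h h'⟩
  zero b h := by
    have := X.zero _ (by simpa using h)
    simpa using this
  cnt a b h := by
    obtain ⟨σ, hσ⟩ := X.cnt _ _ h
    refine ⟨(e.symm.toEquiv.trans σ).trans e.toEquiv, fun x => ?_⟩
    have := hσ (e.symm x)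
    simpa using this
  unit u x y hu h := by
    have := X.unit (e.symm u) _ _ (hu.map e.symm) h
    simpa using this
  frob q hq s a b h := by
    have := X.frob q hq (e.symm s) _ _ h
    have key : ∀ a : R', Nat.card {x : R' // X.r (e.symm s) (e.symm x) ∧ (q : R') * x = a} =
        Nat.card {x : R // X.r (e.symm s) x ∧ (q : R) * x = e.symm a} := by
      intro a
      apply Nat.card_congr
      refine Equiv.subtypeEquiv e.symm.toEquiv ?_
      intro x
      refine and_congr Iff.rfl ?_
      constructor
      · rintro rfl; simp
      · intro h
        have := congrArg e h
        simpa using this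
    rw [key, key]
    exact this
  norm f hf h h0 x y := by
    have := X.norm (fun t => e.symm (f (e t))) (e.symm.bijective.comp (hf.comp e.bijective)) (by
      intro x y
      have := h (e x) (e y)
      simpa using this) (by simp [h0]) (e.symm x) (e.symm y)
    have := congrArg e this
    simpa using this
  gen x := by
    obtain ⟨k, hk⟩ := X.gen (e.symm x)
    refine ⟨k, ?_⟩
    have := congrArg e hk
    simpa using this

def YC.map {R R' : Type*} [CommRing R] [CommRing R'] (e : R ≃+* R') {X : SR R} (Y : YC X) : YC (X.map e) where
  p x z x1 z1 := Y.p (e.symm x) (e.symm z) (e.symm x1) (e.symm z1)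
  refl x z := Y.refl _ _
  symm h := Y.symm h
  trans h h' := Y.trans h h'
  diff h := by
    have := Y.diff h
    show X.r _ _
    simpa using this
  flip h := Y.flip h
  cnt h := by
    obtain ⟨σ, hσ⟩ := Y.cnt h
    refine ⟨(e.symm.toEquiv.trans σ).trans e.toEquiv, fun x => ?_⟩
    have := hσ (e.symm x)
    simpa using this
  zero h := by
    have := Y.zero (by simpa using h)
    simpa using this

section glob
open SR

lemma Q2 {R : Type*} [CommRing R] [Finite R] {X : SR R} (Y : YC X) (e : R) (he : e ≠ 0) (hee : 2 * e = 0)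
    (h : ∀ z z1, Y.p 1 z 1 z1 → z1 = z ∨ z1 = z + e) {z z1 : R} (hz : Y.p 1 z 1 z1) : z = z1 := by
  classical
  let b : R → Prop := fun z => Y.p 1 z 1 (z + e)
  let g : R → R := fun z => if b z then z + e else z
  have g1 : ∀ z, b z → g z = z + e := fun z hz => if_pos hz
  have g2 : ∀ z, ¬ b z → g z = z := fun z hz => if_neg hz
  have hb : ∀ z, b z → b (z + e) := by
    intro z hz
    have := Y.symm hz
    have e1 : z = z + e + e := by linear_combination -hee
    show Y.p 1 (z + e) 1 (z + e + e)
    rw [← e1]; exact this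
  have hinv : Function.Involutive g := by
    intro z
    by_cases hz : b z
    · rw [g1 z hz, g1 _ (hb z hz)]; linear_combination hee
    · rw [g2 z hz, g2 z hz]
  have b0 : ¬ b 0 := by
    intro h
    have := X.zero _ (Y.right h)
    exact he (by simpa using this)
  have b1 : ¬ b 1 := by
    intro h
    have := Y.diff h
    simp at this
    exact he (X.zero _ this)
  have mixed : ∀ x y, b x → ¬ b y → X.r (x - y) (x + e - y) := by
    intro x y hx hy
    obtain ⟨σ, hσ⟩ := Y.cnt (show Y.p 1 x 1 (x + e) from hx)
    obtain ⟨h1, h2⟩ := hσ y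
    have h3 : σ y = y := by
      rcases h _ _ h1 with h3 | h3
      · exact h3
      · rw [h3] at h1; exact absurd h1 hy
    rw [h3] at h2
    exact Y.diff h2
  have := X.norm_id g hinv.bijective (by
    intro x y
    by_cases hx : b x <;> by_cases hy : b y
    · rw [g1 x hx, g1 y hy, add_sub_add_right_eq_sub]; exact X.refl _
    · rw [g1 x hx, g2 y hy]
      have := neg (mixed x y hx hy)
      simpa using this
    · rw [g2 x hx, g1 y hy]
      exact mixed y x hy hx
    · rw [g2 x hx, g2 y hy]; exact X.refl _) (g2 0 b0) (g2 1 b1)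
  rcases h _ _ hz with h1 | h1
  · exact h1.symm
  · exfalso
    rw [h1] at hz
    have h2 := this z
    rw [g1 z hz] at h2
    exact he (by simpa using h2)

/-- the chinese remainder isomorphism, with values -/
lemma crt {q a m n : ℕ} [NeZero n] (hn : n = q ^ a * m) (hc : (q ^ a).Coprime m) :
    ∃ e : ZMod n ≃+* ZMod (q ^ a) × ZMod m, ∀ x, e x = ((x.val : ZMod (q ^ a)), (x.val : ZMod m)) := by
  subst hn
  refine ⟨ZMod.chineseRemainder hc, fun x => ?_⟩
  have : x = ((x.val : ℕ) : ZMod (q ^ a * m)) := (ZMod.natCast_zmod_val x).symm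
  conv_lhs => rw [this, map_natCast]
  ext <;> simp

lemma q_unit {q a m : ℕ} (ha : a ≠ 0) (hc : (q ^ a).Coprime m) : IsUnit ((q : ℕ) : ZMod m) := by
  rw [ZMod.isUnit_iff_coprime]
  exact Nat.Coprime.coprime_dvd_left (dvd_pow_self q ha) hc

lemma G1 {n q a m : ℕ} [NeZero n] (X : SR (ZMod n)) (hq : q.Prime) (ha : a ≠ 0) (hn : n = q ^ a * m)
    (hc : (q ^ a).Coprime m) {x y : ZMod n} (h : X.r x y) (hx : q ^ a ∣ x.val) : q ^ a ∣ y.val := by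
  obtain ⟨e, he⟩ := crt hn hc
  haveI : NeZero m := ⟨by rintro rfl; exact NeZero.ne n (by simpa using hn)⟩
  have hK := (X.map e).K0_closed hq ha (q_unit ha hc)
  have := cl1 hK (x := e x) (y := e y) (by show X.r _ _; simpa using h)
    (by rw [he]; exact (ZMod.natCast_eq_zero_iff _ _).2 hx)
  rw [he] at this
  exact (ZMod.natCast_eq_zero_iff _ _).1 this

lemma split_prime {n p : ℕ} (hn : n ≠ 0) (hp : p.Prime) (hd : p ∣ n) :
    ∃ a m, a ≠ 0 ∧ n = p ^ a * m ∧ (p ^ a).Coprime m ∧ (∀ k, p ^ k ∣ n → k ≤ a) := by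
  refine ⟨n.factorization p, n / p ^ n.factorization p, ?_, ?_, ?_, ?_⟩
  · exact (hp.factorization_pos_of_dvd hn hd).ne'
  · exact (Nat.ordProj_mul_ordCompl_eq_self n p).symm
  · exact (Nat.coprime_ordCompl hp hn).pow_left _
  · intro k hk
    exact (hp.pow_dvd_iff_le_factorization hn).1 hk

lemma dvd_of_parts {n m : ℕ} (hn : n ≠ 0) (hm : m ∣ n) (x : ℕ)
    (h : ∀ q a m', q.Prime → a ≠ 0 → n = q ^ a * m' → (q ^ a).Coprime m' → q ∣ m → q ^ a ∣ x) : m ∣ x := by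
  rw [Nat.dvd_iff_prime_pow_dvd_dvd]
  intro p k hp hk
  by_cases hk0 : k = 0
  · subst hk0; simp
  have hpm : p ∣ m := (dvd_pow_self p hk0).trans hk
  obtain ⟨a, m', ha, hnm, hc, hmax⟩ := split_prime hn hp (hpm.trans hm)
  exact (pow_dvd_pow p (hmax k (hk.trans hm))).trans (h p a m' hp ha hnm hc hpm)

lemma G1' {n q a m : ℕ} [NeZero n] (X : SR (ZMod n)) (hn : n = q ^ a * m) {x y : ZMod n} (h : X.r x y)
    (hx : m ∣ x.val) (hc : (q ^ a).Coprime m) : m ∣ y.val := by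
  apply dvd_of_parts (NeZero.ne n) (hn ▸ dvd_mul_left m (q ^ a))
  intro p b m' hp hb hnp hcp hpm
  apply G1 X hp hb hnp hcp h
  refine dvd_trans ?_ hx
  have h1 : p ^ b ∣ q ^ a * m := by rw [← hn, hnp]; exact dvd_mul_right _ _
  refine Nat.Coprime.dvd_of_dvd_mul_left ?_ h1
  apply Nat.Coprime.pow_left
  exact (Nat.Coprime.coprime_dvd_right hpm hc).symm

/-- local conclusion -/
lemma G2 {n q a m : ℕ} [NeZero n] {X : SR (ZMod n)} (Y : YC X) (hq : q.Prime) (ha : a ≠ 0) (hn : n = q ^ a * m)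
    (hc : (q ^ a).Coprime m) {z z1 : ZMod n} (h : Y.p 1 z 1 z1) :
    q ^ a ∣ (2 * (z1 - z)).val ∧ ((q ≠ 2 ∨ a = 1) → q ^ a ∣ (z1 - z).val) := by
  obtain ⟨e, he⟩ := crt hn hc
  haveI : NeZero m := ⟨by rintro rfl; exact NeZero.ne n (by simpa using hn)⟩
  have hB := q_unit ha hc
  have hK := (X.map e).K0_closed hq ha hB
  have hL : (X.map e).Closed (L0 q a (ZMod m)) := by
    intro x y hr hx
    rw [mem_L0] at hx ⊢
    have e1 : ∀ x, x.2 = (((e.symm x).val : ℕ) : ZMod m) := by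
      intro x
      have := he (e.symm x)
      rw [RingEquiv.apply_symm_apply] at this
      exact congrArg Prod.snd this
    rw [e1, ZMod.natCast_eq_zero_iff] at hx ⊢
    exact G1' X hn hr hx hc
  have hp : (Y.map e).p 1 (e z) 1 (e z1) := by
    show Y.p _ _ _ _
    simpa using h
  have hpq := comp (Y.map e) hK hL hp
  have key : ∀ d : ZMod n, (e d).1 = 0 → q ^ a ∣ d.val := by
    intro d hd
    rw [he] at hd
    exact (ZMod.natCast_eq_zero_iff _ _).1 hd
  have eqcase : (e z).1 = (e z1).1 → q ^ a ∣ (2 * (z1 - z)).val ∧ ((q ≠ 2 ∨ a = 1) → q ^ a ∣ (z1 - z).val) := by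
    intro h
    refine ⟨key _ ?_, fun _ => key _ ?_⟩
    · simp [h]
    · simp [h]
  by_cases ha1 : a = 1
  · subst ha1
    exact eqcase (prime_case (Y.map e) hK hL hq hpq)
  · have ha2 : 2 ≤ a := by omega
    by_cases hq2 : q = 2
    · subst hq2
      have := two_big (Y.map e) hK hL ha2 hB hpq
      refine ⟨key _ ?_, fun h => ?_⟩
      · have e2 : e 2 = 2 := map_ofNat e 2
        rw [map_mul, e2, map_sub]
        simpa using this
      · rcases h with h | h
        · exact absurd rfl h
        · exact absurd h ha1
    · exact eqcase (odd_big (Y.map e) hK hL hq hq2 ha2 hB hpq)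

theorem main {n : ℕ} [NeZero n] {X : SR (ZMod n)} (Y : YC X) {z z1 : ZMod n} (h : Y.p 1 z 1 z1) : z = z1 := by
  have zz : ∀ d : ZMod n, n ∣ d.val → d = 0 := by
    intro d hd
    rw [← ZMod.natCast_eq_zero_iff, ZMod.natCast_zmod_val] at hd
    exact hd
  by_cases h4 : 4 ∣ n
  · have h2 : ∀ z z1, Y.p 1 z 1 z1 → 2 * (z1 - z) = 0 := by
      intro z z1 h
      apply zz
      apply dvd_of_parts (NeZero.ne n) (dvd_refl n)
      intro q a m hq ha hn hc _
      exact (G2 Y hq ha hn hc h).1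
    obtain ⟨t, ht⟩ := h4
    have ht0 : t ≠ 0 := by rintro rfl; exact NeZero.ne n (by simpa using ht)
    apply Q2 Y (((2 * t : ℕ)) : ZMod n) _ _ _ h
    · rw [Ne, ZMod.natCast_eq_zero_iff]
      intro hd
      have := Nat.le_of_dvd (by omega) hd
      omega
    · have : ((n : ℕ) : ZMod n) = 0 := ZMod.natCast_self n
      rw [ht] at this
      rw [ht]
      push_cast at this ⊢
      linear_combination this
    · intro z z1 hp
      have h3 := h2 z z1 hp
      set d := z1 - z with hd
      have h5 : n ∣ 2 * d.val := by
        rw [← ZMod.natCast_eq_zero_iff]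
        push_cast
        rw [ZMod.natCast_zmod_val]; exact h3
      have h6 := ZMod.val_lt d
      obtain ⟨c, hc⟩ := h5
      have hc2 : c < 2 := by
        by_contra hcc
        have : n * 2 ≤ n * c := Nat.mul_le_mul_left _ (by omega)
        omega
      interval_cases c
      · left
        have : d = 0 := by
          rw [← ZMod.val_eq_zero]; omega
        linear_combination this
      · right
        have h7 : d.val = 2 * t := by omega
        have h8 : d = ((2 * t : ℕ) : ZMod n) := by rw [← h7, ZMod.natCast_zmod_val]
        rw [← h8]; ring
  · have : z1 - z = 0 := by
      apply zz
      apply dvd_of_parts (NeZero.ne n) (dvd_refl n)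
      intro q a m hq ha hn hc _
      refine (G2 Y hq ha hn hc h).2 ?_
      by_contra hcon
      push Not at hcon
      obtain ⟨rfl, ha1⟩ := hcon
      apply h4
      obtain ⟨b, rfl⟩ : ∃ b, a = 2 + b := ⟨a - 2, by omega⟩
      rw [hn, pow_add]
      exact ⟨2 ^ b * m, by ring⟩
    linear_combination -this

end glob
end NC

namespace NC
section build

lemma exists_perm {A P : Type*} [Finite A] (f g : A → P)
    (h : ∀ c, {x | f x = c}.ncard = {x | g x = c}.ncard) :
    ∃ σ : Equiv.Perm A, ∀ x, g (σ x) = f x := by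
  have h1 : ∀ c, Nonempty ({x // f x = c} ≃ {x // g x = c}) := by
    intro c
    have := h c
    rw [← Nat.card_coe_set_eq, ← Nat.card_coe_set_eq] at this
    exact Finite.card_eq.1 this
  refine ⟨(Equiv.sigmaFiberEquiv f).symm.trans ((Equiv.sigmaCongrRight fun c => (h1 c).some).trans
    (Equiv.sigmaFiberEquiv g)), fun x => ?_⟩
  exact ((h1 (f x)).some ⟨x, rfl⟩).2

open Classical in
lemma frob_of {R : Type*} [CommRing R] [Finite R] (r : R → R → Prop) (eqv : Equivalence r)
    (zero : ∀ b, r 0 b → b = 0)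
    (cnt : ∀ a b, r a b → ∃ σ : Equiv.Perm R, ∀ x, r x (σ x) ∧ r (a - x) (b - σ x))
    (q : ℕ) (hq : q.Prime) (s a b : R) (hab : r a b) :
    Nat.card {x : R // r s x ∧ (q : R) * x = a} ≡ Nat.card {x : R // r s x ∧ (q : R) * x = b} [MOD q] := by
  have : Fintype R := Fintype.ofFinite R
  have : Fact q.Prime := ⟨hq⟩
  have hmul : ∀ F K : AddMonoidAlgebra (ZMod q) R, (∀ a b, r a b → F.coeff a = F.coeff b) →
      (∀ a b, r a b → K.coeff a = K.coeff b) → ∀ a b, r a b → (F * K).coeff a = (F * K).coeff b := by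
    intro F K hF hK a b hab
    have key : ∀ a, (F * K).coeff a = ∑ x, F.coeff x * K.coeff (a - x) := by
      intro a
      rw [AddMonoidAlgebra.coeff_mul_antidiag F K a
        (Finset.univ.image (fun x : R => (x, a - x))) ]
      · rw [Finset.sum_image]
        intro x _ y _ hxy
        exact congrArg Prod.fst hxy
      · intro p
        simp only [Finset.mem_image, Finset.mem_univ, true_and]
        constructor
        · rintro ⟨x, rfl⟩; simp
        · intro hp; exact ⟨p.1, by ext <;> simp [← hp]⟩
    obtain ⟨σ, hσ⟩ := cnt a b hab
    rw [key, key, ← Equiv.sum_comp σ (fun x => F.coeff x * K.coeff (b - x))]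
    refine Finset.sum_congr rfl fun x _ => ?_
    rw [hF _ _ (hσ x).1, hK _ _ (hσ x).2]
  have hpow : ∀ (F : AddMonoidAlgebra (ZMod q) R), (∀ a b, r a b → F.coeff a = F.coeff b) → ∀ m : ℕ,
      ∀ a b, r a b → (F ^ m).coeff a = (F ^ m).coeff b := by
    intro F hF m
    induction m with
    | zero =>
      intro a b hab
      rw [pow_zero, AddMonoidAlgebra.one_def, AddMonoidAlgebra.coeff_single, Finsupp.single_apply, Finsupp.single_apply]
      have : (0 = a) ↔ (0 = b) := by
        constructor
        · rintro rfl; exact (zero _ hab).symm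
        · rintro rfl; exact (zero _ (eqv.symm hab)).symm
      simp [this]
    | succ m ih =>
      rw [pow_succ]
      exact hmul _ _ ih hF
  let F : AddMonoidAlgebra (ZMod q) R :=
    ∑ x ∈ Finset.univ.filter (fun x => r s x), AddMonoidAlgebra.single x 1
  have happ : ∀ (T : Finset R) (f : R → R) (c : R),
      (∑ x ∈ T, (AddMonoidAlgebra.single (f x) 1 : AddMonoidAlgebra (ZMod q) R)).coeff c
      = ((T.filter (fun x => f x = c)).card : ZMod q) := by
    intro T f c
    rw [Finset.card_filter, Nat.cast_sum]
    induction T using Finset.induction_on with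
    | empty => simp
    | insert x T hx ih =>
      rw [Finset.sum_insert hx, Finset.sum_insert hx, ← ih]
      simp [Finsupp.single_apply]
  have hF : ∀ a b, r a b → F.coeff a = F.coeff b := by
    intro a b hab
    have := happ (Finset.univ.filter (fun x => r s x)) id
    simp only [id] at this
    rw [this, this, Finset.filter_filter, Finset.filter_filter]
    by_cases ha : r s a
    · have hb := eqv.trans ha hab
      have e1 : (Finset.univ.filter fun x => r s x ∧ x = a) = {a} := by
        ext x; simp; rintro rfl; exact ha
      have e2 : (Finset.univ.filter fun x => r s x ∧ x = b) = {b} := by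
        ext x; simp; rintro rfl; exact hb
      rw [e1, e2]; simp
    · have hb : ¬ r s b := fun h => ha (eqv.trans h (eqv.symm hab))
      have e1 : (Finset.univ.filter fun x => r s x ∧ x = a) = ∅ := by
        ext x; simp; rintro h rfl; exact ha h
      have e2 : (Finset.univ.filter fun x => r s x ∧ x = b) = ∅ := by
        ext x; simp; rintro h rfl; exact hb h
      rw [e1, e2]
  have hq' : F ^ q = ∑ x ∈ Finset.univ.filter (fun x => r s x),
      AddMonoidAlgebra.single ((q : R) * x) 1 := by
    have : CharP (AddMonoidAlgebra (ZMod q) R) q :=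
      charP_of_injective_algebraMap (algebraMap (ZMod q) (AddMonoidAlgebra (ZMod q) R)).injective q
    rw [sum_pow_char q]
    refine Finset.sum_congr rfl fun x _ => ?_
    rw [AddMonoidAlgebra.single_pow]; simp
  have h := hpow F hF q a b hab
  rw [hq', happ, happ, Finset.filter_filter, Finset.filter_filter] at h
  rw [← ZMod.natCast_eq_natCast_iff]
  simpa [Nat.card_eq_fintype_card, Fintype.card_subtype] using h

lemma unit_of {n : ℕ} [NeZero n] (r : ZMod n → ZMod n → Prop) (eqv : Equivalence r)
    (zero : ∀ b, r 0 b → b = 0)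
    (cnt : ∀ a b, r a b → ∃ σ : Equiv.Perm (ZMod n), ∀ x, r x (σ x) ∧ r (a - x) (b - σ x))
    (u x y : ZMod n) (hu : IsUnit u) (hxy : r x y) : r (u * x) (u * y) := by
  have hp : ∀ q : ℕ, q.Prime → q.Coprime n → ∀ x y, r x y → r ((q : ZMod n) * x) ((q : ZMod n) * y) := by
    intro q hq hc
    let v := ZMod.unitOfCoprime q hc
    have hv : (v : ZMod n) = q := rfl
    have h1 : ∀ x y, r x y → r (((v⁻¹ : (ZMod n)ˣ) : ZMod n) * x) (((v⁻¹ : (ZMod n)ˣ) : ZMod n) * y) := by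
      intro x y hxy
      have h := frob_of r eqv zero cnt q hq (((v⁻¹ : (ZMod n)ˣ) : ZMod n) * x) x y hxy
      rw [← hv] at h
      have e1 : Nat.card {z : ZMod n // r (((v⁻¹ : (ZMod n)ˣ) : ZMod n) * x) z ∧ (v : ZMod n) * z = x} = 1 := by
        rw [Nat.card_eq_one_iff_unique]
        refine ⟨⟨fun a b => Subtype.ext ?_⟩, ⟨⟨_, eqv.refl _, by simp⟩⟩⟩
        exact (Units.mul_right_inj v).1 (a.2.2.trans b.2.2.symm)
      rw [e1] at h
      by_contra hcon
      have e2 : Nat.card {z : ZMod n // r (((v⁻¹ : (ZMod n)ˣ) : ZMod n) * x) z ∧ (v : ZMod n) * z = y} = 0 := by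
        have : IsEmpty {z : ZMod n // r (((v⁻¹ : (ZMod n)ˣ) : ZMod n) * x) z ∧ (v : ZMod n) * z = y} := by
          refine ⟨fun z => hcon ?_⟩
          rw [← z.2.2]; simpa using z.2.1
        exact Nat.card_of_isEmpty
      rw [e2] at h
      have := (Nat.modEq_zero_iff_dvd).1 h
      exact hq.one_lt.ne' (Nat.dvd_one.1 this)
    have h2 : ∀ m : ℕ, ∀ x y, r x y → r ((((v⁻¹)^m : (ZMod n)ˣ) : ZMod n) * x) ((((v⁻¹)^m : (ZMod n)ˣ) : ZMod n) * y) := by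
      intro m
      induction m with
      | zero => intro x y h; simpa using h
      | succ m ih =>
        intro x y h
        have := ih _ _ (h1 x y h)
        rw [pow_succ, Units.val_mul, mul_assoc, mul_assoc]; exact this
    have h3 : (v⁻¹)^(Nat.card (ZMod n)ˣ - 1) = v := by
      have : (v⁻¹)^(Nat.card (ZMod n)ˣ - 1) * v⁻¹ = 1 := by
        rw [← pow_succ, Nat.sub_add_cancel Nat.card_pos, pow_card_eq_one']
      exact mul_inv_eq_one.1 this
    intro x y h
    have := h2 (Nat.card (ZMod n)ˣ - 1) x y h
    rwa [h3] at this
  have hk : ∀ k : ℕ, k.Coprime n → ∀ x y, r x y → r ((k : ZMod n) * x) ((k : ZMod n) * y) := by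
    intro k
    induction k using Nat.recOnMul with
    | zero =>
      intro hc x y _
      have : n = 1 := by simpa using hc
      subst this
      rw [Subsingleton.elim (((0:ℕ) : ZMod 1) * x) (((0:ℕ) : ZMod 1) * y)]
      exact eqv.refl _
    | one => intro _ x y h; simpa using h
    | prime p h => exact hp p h
    | mul a b ha hb =>
      intro hc x y h
      have := ha (Nat.Coprime.coprime_mul_right hc) _ _ (hb (Nat.Coprime.coprime_mul_left hc) x y h)
      rw [Nat.cast_mul, mul_assoc, mul_assoc]; exact this
  have := hk u.val (by
    have := (ZMod.isUnit_iff_coprime u.val n).1 (by simpa using hu)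
    exact this) x y hxy
  simpa using this

end build
end NC

namespace NC
section cfg
open CohCfg
variable {Ω Ω' : Type u}

/-- the basis relation containing a pair -/
noncomputable def cls (Z : CohCfg Ω) (p : Ω × Ω) : Set (Ω × Ω) := (Z.cover p).choose

lemma cls_mem (Z : CohCfg Ω) (p : Ω × Ω) : cls Z p ∈ Z.S := (Z.cover p).choose_spec.1

lemma mem_cls (Z : CohCfg Ω) (p : Ω × Ω) : p ∈ cls Z p := (Z.cover p).choose_spec.2

lemma eq_of_mem (Z : CohCfg Ω) {s t : Set (Ω × Ω)} (hs : s ∈ Z.S) (ht : t ∈ Z.S) {p : Ω × Ω}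
    (h1 : p ∈ s) (h2 : p ∈ t) : s = t := by
  by_contra h
  have := Z.disj s hs t ht h
  have h3 : p ∈ s ∩ t := ⟨h1, h2⟩
  rw [this] at h3
  exact h3

lemma cls_eq (Z : CohCfg Ω) {s : Set (Ω × Ω)} (hs : s ∈ Z.S) {p : Ω × Ω} (h : p ∈ s) :
    cls Z p = s := eq_of_mem Z (cls_mem Z p) hs (mem_cls Z p) h

lemma cls_perm (Z : CohCfg Ω) {p q : Ω × Ω} (h : cls Z p = cls Z q) :
    ∃ σ : Equiv.Perm Ω, ∀ γ, cls Z (q.1, σ γ) = cls Z (p.1, γ) ∧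
      cls Z (σ γ, q.2) = cls Z (γ, p.2) := by
  have := Z.finite
  obtain ⟨σ, hσ⟩ := exists_perm (fun γ => (cls Z (p.1, γ), cls Z (γ, p.2)))
    (fun γ => (cls Z (q.1, γ), cls Z (γ, q.2))) (by
      rintro ⟨a, b⟩
      by_cases hab : a ∈ Z.S ∧ b ∈ Z.S
      · have h1 := Z.inum a hab.1 b hab.2 (cls Z p) (cls_mem Z p) p (mem_cls Z p) q
          (h ▸ mem_cls Z q)
        have key : ∀ p : Ω × Ω, {γ | (cls Z (p.1, γ), cls Z (γ, p.2)) = (a, b)} =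
            {γ | (p.1, γ) ∈ a ∧ (γ, p.2) ∈ b} := by
          intro p
          ext γ
          simp only [Set.mem_setOf_eq, Prod.mk.injEq]
          constructor
          · rintro ⟨rfl, rfl⟩; exact ⟨mem_cls _ _, mem_cls _ _⟩
          · rintro ⟨h1, h2⟩; exact ⟨cls_eq Z hab.1 h1, cls_eq Z hab.2 h2⟩
        rw [key, key]; exact h1
      · have key : ∀ p : Ω × Ω, {γ | (cls Z (p.1, γ), cls Z (γ, p.2)) = (a, b)} = ∅ := by
          intro p
          ext γ
          simp only [Set.mem_setOf_eq, Prod.mk.injEq, Set.mem_empty_iff_false, iff_false]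
          rintro ⟨rfl, rfl⟩
          exact hab ⟨cls_mem _ _, cls_mem _ _⟩
        rw [key, key])
  exact ⟨σ, fun γ => ⟨congrArg Prod.fst (hσ γ), congrArg Prod.snd (hσ γ)⟩⟩

lemma cls_swap (Z : CohCfg Ω) {a b c d : Ω} (h : cls Z (a, b) = cls Z (c, d)) :
    cls Z (b, a) = cls Z (d, c) := by
  have h1 := Z.conv _ (cls_mem Z (a, b))
  rw [cls_eq Z h1 (p := (b, a)) (mem_cls Z (a, b)),
    cls_eq Z h1 (p := (d, c)) (by
      change (c, d) ∈ cls Z (a, b)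
      rw [h]; exact mem_cls _ _)]

lemma cls_le {X Y : CohCfg Ω} (hXY : le X Y) {p q : Ω × Ω} (h : cls Y p = cls Y q) :
    cls X p = cls X q := by
  have h1 := hXY _ (cls_mem X p) _ (cls_mem Y p) ⟨p, mem_cls _ _, mem_cls _ _⟩
  have h2 : q ∈ cls X p := h1 (h ▸ mem_cls Y q)
  exact (cls_eq X (cls_mem X p) h2).symm

lemma cls_trans {G : Type u} [CommGroup G] {X : CohCfg G} (hc : IsCirculant X) (a b g : G) :
    cls X (a * g, b * g) = cls X (a, b) := by
  refine cls_eq X (cls_mem _ _) ?_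
  have := hc g _ (cls_mem X (a, b))
  rw [← this]
  exact ⟨(a, b), mem_cls _ _, rfl⟩

lemma cls_sub {G : Type u} [CommGroup G] {X : CohCfg G} (hc : IsCirculant X) {n : ℕ}
    (e : ZMod n ≃ G) (he : ∀ x y, e (x + y) = e x * e y) (x y : ZMod n) :
    cls X (e x, e y) = cls X (1, e (y - x)) := by
  rw [← cls_trans hc 1 (e (y - x)) (e x), ← he, one_mul, sub_add_cancel]

/-- the abstract Schur ring of a circulant scheme -/
noncomputable def mkSR {G : Type u} [CommGroup G] (X : CohCfg G) (hs : IsScheme X)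
    (hc : IsCirculant X) (hn : IsNormalCirc X) {n : ℕ} [NeZero n]
    (e : ZMod n ≃ G) (he : ∀ x y, e (x + y) = e x * e y) : SR (ZMod n) :=
  have e0 : e 0 = 1 := by
    have := he 0 0
    simpa using this
  have eqv : Equivalence (fun x y => cls X (1, e x) = cls X (1, e y)) :=
    ⟨fun _ => rfl, fun h => h.symm, fun h h' => h.trans h'⟩
  have zero : ∀ b, cls X (1, e 0) = cls X (1, e b) → b = 0 := by
    intro b hb
    rw [e0, cls_eq X hs (p := (1, 1)) rfl] at hb
    have h1 := mem_cls X (1, e b)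
    rw [← hb] at h1
    have h2 : (1 : G) = e b := h1
    rw [← e0] at h2
    exact (e.injective h2).symm
  have cnt : ∀ a b, cls X (1, e a) = cls X (1, e b) → ∃ σ : Equiv.Perm (ZMod n), ∀ x,
      cls X (1, e x) = cls X (1, e (σ x)) ∧
      cls X (1, e (a - x)) = cls X (1, e (b - σ x)) := by
    intro a b hab
    obtain ⟨σ, hσ⟩ := cls_perm X hab
    refine ⟨(e.trans σ).trans e.symm, fun x => ?_⟩
    have := hσ (e x)
    rw [← cls_sub hc e he, ← cls_sub hc e he]
    simp only [Equiv.trans_apply, Equiv.apply_symm_apply]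
    exact ⟨this.1.symm, this.2.symm⟩
  { r := fun x y => cls X (1, e x) = cls X (1, e y)
    eqv := eqv
    zero := zero
    cnt := cnt
    unit := fun u x y hu h => unit_of (fun x y => cls X (1, e x) = cls X (1, e y)) eqv zero cnt u x y hu h
    frob := fun q hq s a b h => frob_of (fun x y => cls X (1, e x) = cls X (1, e y)) eqv zero cnt q hq s a b h
    norm := by
      intro f hf hr h0 x y
      have hF : ∀ a b : G, cls X (e (f (e.symm a)), e (f (e.symm b))) = cls X (a, b) := by
        intro a b
        have h1 := hr (e.symm a) (e.symm b)
        rw [← cls_sub hc e he, ← cls_sub hc e he] at h1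
        simpa using h1.symm
      have hb : Function.Bijective (fun a => e (f (e.symm a))) :=
        e.bijective.comp (hf.comp e.symm.bijective)
      have := hn (fun a => e (f (e.symm a))) hb (by
        intro s hsS
        ext ⟨c, d⟩
        constructor
        · rintro ⟨⟨a, b⟩, hab, h⟩
          rw [← h, ← cls_eq X hsS hab, ← hF a b]
          exact mem_cls _ _
        · intro hcd
          obtain ⟨a, ha⟩ := hb.2 c
          obtain ⟨b, hb'⟩ := hb.2 d
          refine ⟨(a, b), ?_, Prod.ext ha hb'⟩
          have h1 := hF a b
          simp only at ha hb'
          rw [ha, hb', cls_eq X hsS hcd] at h1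
          rw [h1]; exact mem_cls _ _) (by
        rw [← e0]; simp [h0]) (e x) (e y)
      simp only [← he, Equiv.symm_apply_apply] at this
      exact e.injective this
    gen := fun x => ⟨x.val, by simp⟩ }

/-- the abstract point extension -/
noncomputable def mkYC {G : Type u} [CommGroup G] (X : CohCfg G) (hs : IsScheme X)
    (hc : IsCirculant X) (hn : IsNormalCirc X) {n : ℕ} [NeZero n]
    (e : ZMod n ≃ G) (he : ∀ x y, e (x + y) = e x * e y) (Y : CohCfg G) (hXY : le X Y)
    (h1 : ({(1, 1)} : Set (G × G)) ∈ Y.S) : YC (mkSR X hs hc hn e he) where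
  p x z x1 z1 := cls Y (e x, e z) = cls Y (e x1, e z1)
  refl _ _ := rfl
  symm h := h.symm
  trans h h' := h.trans h'
  diff h := by
    change cls X _ = cls X _
    rw [← cls_sub hc e he, ← cls_sub hc e he]
    exact cls_le hXY h
  flip h := cls_swap Y h
  cnt h := by
    obtain ⟨σ, hσ⟩ := cls_perm Y h
    refine ⟨(e.trans σ).trans e.symm, fun x => ?_⟩
    have := hσ (e x)
    simp only [Equiv.trans_apply, Equiv.apply_symm_apply]
    exact ⟨this.1.symm, this.2.symm⟩
  zero {x y} h := by
    have e0 : e 0 = 1 := by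
      have := he 0 0
      simpa using this
    rw [e0, cls_eq Y h1 (p := (1, 1)) rfl] at h
    have h2 := mem_cls Y (e x, e y)
    rw [← h, Set.mem_singleton_iff, Prod.mk.injEq, ← e0] at h2
    exact ⟨e.injective h2.1, e.injective h2.2⟩

lemma regular_point {G : Type u} [CommGroup G] [IsCyclic G] [Finite G] (X : CohCfg G)
    (hs : IsScheme X) (hc : IsCirculant X) (hn : IsNormalCirc X) (Y : CohCfg G) (hXY : le X Y)
    (h1 : ({(1, 1)} : Set (G × G)) ∈ Y.S) :
    ∃ g : G, ∀ z z1, cls Y (g, z) = cls Y (g, z1) → z = z1 := by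
  have : NeZero (Nat.card G) := ⟨Nat.card_pos.ne'⟩
  let e0 := zmodCyclicMulEquiv (G := G) inferInstance
  let e : ZMod (Nat.card G) ≃ G := Multiplicative.ofAdd.trans e0.toEquiv
  have he : ∀ x y, e (x + y) = e x * e y := fun x y => map_mul e0 (Multiplicative.ofAdd x) (Multiplicative.ofAdd y)
  refine ⟨e 1, fun z z1 h => ?_⟩
  have := main (mkYC X hs hc hn e he Y hXY h1) (z := e.symm z) (z1 := e.symm z1) (by
    change cls Y _ = cls Y _
    simpa using h)
  exact e.symm.injective this

lemma cnum_pos [Finite Ω] {r s : Set (Ω × Ω)} {p : Ω × Ω} :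
    0 < cnum r s p ↔ ∃ γ, (p.1, γ) ∈ r ∧ (γ, p.2) ∈ s := by
  unfold cnum
  rw [Set.ncard_pos (Set.toFinite _)]
  rfl

lemma cnum_iff {X : CohCfg Ω} {X' : CohCfg Ω'} {φ : Set (Ω × Ω) → Set (Ω' × Ω')}
    (h : IsAlgIso X X' φ) {r s t : Set (Ω × Ω)} (hr : r ∈ X.S) (hs : s ∈ X.S) (ht : t ∈ X.S)
    {p : Ω × Ω} {q : Ω' × Ω'} (hp : p ∈ t) (hq : q ∈ φ t) :
    (∃ γ, (p.1, γ) ∈ r ∧ (γ, p.2) ∈ s) ↔ ∃ γ, (q.1, γ) ∈ φ r ∧ (γ, q.2) ∈ φ s := by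
  have := X.finite
  have := X'.finite
  rw [← cnum_pos, ← cnum_pos, h.cnum_eq r hr s hs t ht p hp q hq]

lemma exists_diag {X : CohCfg Ω} {X' : CohCfg Ω'} {φ : Set (Ω × Ω) → Set (Ω' × Ω')}
    (h : IsAlgIso X X' φ) (g : Ω) : ∃ a, (a, a) ∈ φ (cls X (g, g)) := by
  have hd := cls_mem X (g, g)
  obtain ⟨⟨a, b⟩, hab⟩ := X'.nonemp _ (h.bijOn.mapsTo hd)
  obtain ⟨r, hr, hr'⟩ := h.bijOn.surjOn (cls_mem X' (a, a))
  obtain ⟨γ, h1, h2⟩ := (cnum_iff h hr hd hd (mem_cls X (g, g)) hab).2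
    ⟨a, by rw [hr']; exact mem_cls _ _, hab⟩
  have h3 : γ = g := X.diag _ hd ⟨_, mem_cls X (g, g), rfl⟩ _ h2
  subst h3
  refine ⟨a, ?_⟩
  rw [cls_eq X hr h1, hr']
  exact mem_cls _ _

lemma exists_iso {Y : CohCfg Ω} {Y' : CohCfg Ω'} {ψ : Set (Ω × Ω) → Set (Ω' × Ω')}
    (h : IsAlgIso Y Y' ψ) (g : Ω) (hg : ∀ z z1, cls Y (g, z) = cls Y (g, z1) → z = z1) :
    ∃ f : Ω → Ω', Function.Bijective f ∧ ∀ x z, (f x, f z) ∈ ψ (cls Y (x, z)) := by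
  have := Y.finite
  have := Y'.finite
  obtain ⟨o, ho⟩ := exists_diag h g
  have hd := cls_mem Y (g, g)
  have hm := mem_cls Y (g, g)
  have hex : ∀ z, ∃ z', (o, z') ∈ ψ (cls Y (g, z)) ∧ (z', o) ∈ ψ (cls Y (z, g)) := fun z =>
    (cnum_iff h (cls_mem Y (g, z)) (cls_mem Y (z, g)) hd hm ho).1
      ⟨z, mem_cls _ _, mem_cls _ _⟩
  have huniq : ∀ z a b, (o, a) ∈ ψ (cls Y (g, z)) ∧ (a, o) ∈ ψ (cls Y (z, g)) →
      (o, b) ∈ ψ (cls Y (g, z)) ∧ (b, o) ∈ ψ (cls Y (z, g)) → a = b := by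
    intro z a b ha hb
    have hc := h.cnum_eq _ (cls_mem Y (g, z)) _ (cls_mem Y (z, g)) _ hd _ hm _ ho
    have h1 : cnum (cls Y (g, z)) (cls Y (z, g)) (g, g) = 1 := by
      unfold cnum
      rw [Set.ncard_eq_one]
      refine ⟨z, ?_⟩
      ext γ
      simp only [Set.mem_setOf_eq, Set.mem_singleton_iff]
      constructor
      · rintro ⟨h1, -⟩
        exact hg _ _ (cls_eq Y (cls_mem _ _) h1)
      · rintro rfl
        exact ⟨mem_cls _ _, mem_cls _ _⟩
    rw [h1] at hc
    obtain ⟨c, hc⟩ := Set.ncard_eq_one.1 hc.symm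
    have ha' : a ∈ ({c} : Set Ω') := hc ▸ ha
    have hb' : b ∈ ({c} : Set Ω') := hc ▸ hb
    exact ha'.trans hb'.symm
  choose f hf1 hf2 using hex
  refine ⟨f, ⟨?_, ?_⟩, ?_⟩
  · intro x z hxz
    have h1 := hf1 x
    rw [hxz] at h1
    have h2 := eq_of_mem Y' (h.bijOn.mapsTo (cls_mem _ _)) (h.bijOn.mapsTo (cls_mem _ _)) h1 (hf1 z)
    exact hg _ _ (h.bijOn.injOn (cls_mem _ _) (cls_mem _ _) h2)
  · intro y
    obtain ⟨t, ht, ht'⟩ := h.bijOn.surjOn (cls_mem Y' (o, y))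
    obtain ⟨v, hv, hv'⟩ := h.bijOn.surjOn (cls_mem Y' (y, o))
    obtain ⟨γ, h1, h2⟩ := (cnum_iff h ht hv hd hm ho).2
      ⟨y, by rw [ht']; exact mem_cls _ _, by rw [hv']; exact mem_cls _ _⟩
    refine ⟨γ, huniq γ _ _ ⟨hf1 γ, hf2 γ⟩ ⟨?_, ?_⟩⟩
    · rw [cls_eq Y ht h1, ht']; exact mem_cls _ _
    · rw [cls_eq Y hv h2, hv']; exact mem_cls _ _
  · intro x z
    obtain ⟨w, hw, hw'⟩ := h.bijOn.surjOn (cls_mem Y' (f x, f z))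
    obtain ⟨γ, h1, h2⟩ := (cnum_iff h (cls_mem Y (g, x)) hw (cls_mem Y (g, z)) (mem_cls Y (g, z))
      (hf1 z)).2 ⟨f x, hf1 x, by rw [hw']; exact mem_cls _ _⟩
    have h3 : γ = x := hg _ _ (cls_eq Y (cls_mem _ _) h1)
    subst h3
    rw [cls_eq Y hw h2, hw']
    exact mem_cls _ _

theorem final {G : Type u} [CommGroup G] [IsCyclic G] [Finite G]
    (X : CohCfg G) (hs : IsScheme X) (hc : IsCirculant X) (hn : IsNormalCirc X) :
    Sesquiseparable X := by
  rintro Ω'' X' φ ⟨hφ, hex⟩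
  have hdiag : diagRel (Set.univ : Set G) = {p : G × G | p.1 = p.2} := by
    ext p; simp [diagRel]
  obtain ⟨a, ha⟩ := exists_diag hφ (1 : G)
  rw [cls_eq X hs (p := ((1 : G), (1 : G))) rfl, ← hdiag] at ha
  obtain ⟨Y, Y', ψ, ⟨hXY, h1, -⟩, -, hψ, himg, -⟩ := hex Set.univ (by
    unfold IsFiber; rw [hdiag]; exact hs) 1 (Set.mem_univ _) a ha
  obtain ⟨g, hg⟩ := regular_point X hs hc hn Y hXY h1
  obtain ⟨f, hf, hpair⟩ := exists_iso hψ g hg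
  refine ⟨f, hf, fun s hsS => ?_⟩
  rw [← himg s hsS]
  ext ⟨c, d⟩
  constructor
  · rintro ⟨_, ⟨t, ⟨ht, hts⟩, rfl⟩, hcd⟩
    obtain ⟨x, rfl⟩ := hf.2 c
    obtain ⟨z, rfl⟩ := hf.2 d
    have h2 := eq_of_mem Y' (hψ.bijOn.mapsTo ht) (hψ.bijOn.mapsTo (cls_mem _ _)) hcd (hpair x z)
    have h3 := hψ.bijOn.injOn ht (cls_mem _ _) h2
    refine ⟨(x, z), hts ?_, rfl⟩
    rw [h3]; exact mem_cls _ _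
  · rintro ⟨⟨x, z⟩, hxz, h⟩
    rw [← h]
    exact ⟨_, ⟨cls Y (x, z), ⟨cls_mem _ _, hXY s hsS _ (cls_mem _ _) ⟨_, mem_cls _ _, hxz⟩⟩, rfl⟩,
      hpair x z⟩

end cfg
end NC

open CohCfg in
/-- Corollary: every normal circulant scheme is sesquiseparable. -/
theorem stmt_14 {G : Type u} [CommGroup G] [IsCyclic G] [Finite G]
    (X : CohCfg G) (hs : IsScheme X) (hc : IsCirculant X) (hn : IsNormalCirc X) :
    Sesquiseparable X := by
  exact NC.final X hs hc hn
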